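/- arXiv:1606.05306 — 2 statements merged into one kernel-verified Lean document; each statement's English description precedes it below -/
import Mathlib

section
/- Let N ≥ 20 be a natural number and let μ* = Σ_{i=1}^M c_i δ_{x_i} be a signed measure on SO(3) with M ∈ ℕ, nonzero real coefficients c_i, and pairwise distinct points x_i ∈ SO(3) whose separation distance satisfies ρ({x_1,…,x_M}) ≥ 36/(N+1). Then μ* is the unique solution of the minimization problem: minimize ‖μ‖_TV over all finite signed Borel measures μ on SO(3) subject to ⟨μ, D^l_{k,m}⟩ = ⟨μ*, D^l_{k,m}⟩ for all 0 ≤ l ≤ N and all −l ≤ k,m ≤ l. -/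
noncomputable section

open MeasureTheory
open scoped ENNReal

abbrev Mat3 := Matrix (Fin 3) (Fin 3) ℝ

/-- membership in SO(3) -/
def IsSO3 (x : Mat3) : Prop := x.transpose * x = 1 ∧ x.det = 1

/-- the rotation group SO(3) -/
def SO3 : Type := {x : Mat3 // IsSO3 x}

instance : TopologicalSpace SO3 := instTopologicalSpaceSubtype
instance : MeasurableSpace SO3 := borel SO3

/-- coercion to matrices -/
instance : CoeHead SO3 Mat3 := ⟨Subtype.val⟩

/-- rotation angle -/
def rotAngle (x : Mat3) : ℝ := Real.arccos ((Matrix.trace x - 1) / 2)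

/-- rotation about the z-axis -/
def Rz (t : ℝ) : Mat3 :=
  !![Real.cos t, -Real.sin t, 0; Real.sin t, Real.cos t, 0; 0, 0, 1]

/-- rotation about the x-axis -/
def Rx (t : ℝ) : Mat3 :=
  !![1, 0, 0; 0, Real.cos t, -Real.sin t; 0, Real.sin t, Real.cos t]

/-- the normalizing constant C_{l,k,m} of the Wigner function P^l_{k,m} -/
def wignerC (l : ℕ) (k m : ℤ) : ℂ :=
  ((-1 : ℂ) ^ ((l : ℤ) - k) * Complex.I ^ (m - k) /
      (2 ^ l * ((((l : ℤ) - k).toNat.factorial : ℝ) : ℂ))) *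
    (Real.sqrt
      (((((l : ℤ) - k).toNat.factorial : ℝ) * ((((l : ℤ) + m).toNat.factorial : ℝ))) /
        ((((l : ℤ) + k).toNat.factorial : ℝ) * ((((l : ℤ) - m).toNat.factorial : ℝ)))) : ℝ)

/-- the function P^l_{k,m} -/
def wignerP (l : ℕ) (k m : ℤ) (t : ℝ) : ℂ :=
  wignerC l k m * ((1 - t : ℂ) ^ (-(((m - k : ℤ) : ℂ)) / 2)) *
    ((1 + t : ℂ) ^ (-(((m + k : ℤ) : ℂ)) / 2)) *
    ((iteratedDeriv ((l : ℤ) - m).toNat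
        (fun u : ℝ => (1 - u) ^ ((l : ℤ) - k).toNat * (1 + u) ^ ((l : ℤ) + k).toNat) t : ℝ) : ℂ)

/-- the Wigner D-function in Euler angles -/
def wignerDFormula (l : ℕ) (k m : ℤ) (α β γ : ℝ) : ℂ :=
  Complex.exp (-(k : ℂ) * α * Complex.I) * wignerP l k m (Real.cos β) *
    Complex.exp (-(m : ℂ) * γ * Complex.I)

/-- `D` is the family of Wigner D-functions (on matrices) -/
def IsWignerFamily (D : ℕ → ℤ → ℤ → Mat3 → ℂ) : Prop :=
  ∀ (l : ℕ) (k m : ℤ), -(l : ℤ) ≤ k → k ≤ l → -(l : ℤ) ≤ m → m ≤ l →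
    ∀ α β γ : ℝ, 0 ≤ β → β ≤ Real.pi →
      D l k m (Rz α * Rx β * Rz γ) = wignerDFormula l k m α β γ

/-- the Dirac measure at `x` as a signed measure -/
def diracSM (x : SO3) : SignedMeasure SO3 := (Measure.dirac x).toSignedMeasure

/-- pairing of a signed measure with a complex-valued function, ⟨μ, f⟩ = ∫ f dμ -/
def pairSM (μ : SignedMeasure SO3) (f : SO3 → ℂ) : ℂ :=
  (∫ a, f a ∂μ.toJordanDecomposition.posPart) - ∫ a, f a ∂μ.toJordanDecomposition.negPart

/-- total variation norm ‖μ‖_TV = |μ|(SO(3)) -/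
def tvNorm (μ : SignedMeasure SO3) : ℝ≥0∞ := μ.totalVariation Set.univ

end

section
open MeasureTheory Metric Set Module
open scoped ENNReal

theorem pack_card {E : Type*} [NormedAddCommGroup E] [NormedSpace ℝ E] [FiniteDimensional ℝ E]
    (hE : finrank ℝ E = 3) {ι : Type*} (s : Finset ι) (u : ι → E) {Δ R : ℝ} (hΔ : 0 < Δ) (hR : 0 ≤ R)
    (hs : ∀ c ∈ s, ‖u c‖ ≤ R)
    (h : ∀ c ∈ s, ∀ d ∈ s, c ≠ d → Δ ≤ ‖u c - u d‖) : (s.card : ℝ) ≤ (1 + 2 * R / Δ) ^ 3 := by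
  borelize E
  let μ : Measure E := Measure.addHaar
  let δ : ℝ := Δ / 2
  let ρ : ℝ := R + Δ / 2
  have δpos : 0 < δ := by positivity
  have ρpos : 0 < ρ := by positivity
  set A := ⋃ c ∈ s, ball (u c : E) δ with hA
  have D : Set.Pairwise (s : Set ι) (Function.onFun Disjoint fun c => ball (u c : E) δ) := by
    rintro c hc d hd hcd
    apply ball_disjoint_ball
    rw [dist_eq_norm]
    have := h c hc d hd hcd
    simp only [δ]; linarith
  have A_subset : A ⊆ ball (0 : E) ρ := by
    refine iUnion₂_subset fun x hx => ?_
    apply ball_subset_ball'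
    rw [dist_zero_right]
    have := hs x hx
    simp only [δ, ρ]; linarith
  have I :
    (s.card : ℝ≥0∞) * ENNReal.ofReal (δ ^ finrank ℝ E) * μ (ball 0 1) ≤
      ENNReal.ofReal (ρ ^ finrank ℝ E) * μ (ball 0 1) :=
    calc
      (s.card : ℝ≥0∞) * ENNReal.ofReal (δ ^ finrank ℝ E) * μ (ball 0 1) = μ A := by
        rw [hA, measure_biUnion_finset D fun c _ => measurableSet_ball]
        simp only [μ.addHaar_ball_of_pos _ δpos]
        simp only [Finset.sum_const, nsmul_eq_mul, mul_assoc]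
      _ ≤ μ (ball (0 : E) ρ) := measure_mono A_subset
      _ = ENNReal.ofReal (ρ ^ finrank ℝ E) * μ (ball 0 1) := by
        simp only [μ.addHaar_ball_of_pos _ ρpos]
  have J : (s.card : ℝ≥0∞) * ENNReal.ofReal (δ ^ finrank ℝ E) ≤ ENNReal.ofReal (ρ ^ finrank ℝ E) :=
    (ENNReal.mul_le_mul_iff_left (measure_ball_pos _ _ zero_lt_one).ne' measure_ball_lt_top.ne).1 I
  have K : (s.card : ℝ) * δ ^ 3 ≤ ρ ^ 3 := by
    have := ENNReal.toReal_le_of_le_ofReal (pow_nonneg ρpos.le _) J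
    rw [ENNReal.toReal_mul, ENNReal.toReal_ofReal (by positivity), hE] at this
    simpa using this
  have : (1 + 2 * R / Δ) ^ 3 = ρ ^ 3 / δ ^ 3 := by
    rw [← div_pow]; congr 1; simp only [ρ, δ]; field_simp; ring
  rw [this, le_div_iff₀ (by positivity)]
  exact K

theorem pack_sum_aux {E : Type*} [NormedAddCommGroup E] [NormedSpace ℝ E] [FiniteDimensional ℝ E]
    (hE : finrank ℝ E = 3) {ι : Type*} (u : ι → E) {Δ : ℝ} (hΔ : 0 < Δ) (K : ℕ) :
    ∀ (s : Finset ι) (ρ : ℝ), 0 < ρ → (∀ c ∈ s, ρ ≤ ‖u c‖) → (∀ c ∈ s, ‖u c‖ < ρ * 2 ^ K) →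
    (∀ c ∈ s, ∀ d ∈ s, c ≠ d → Δ ≤ ‖u c - u d‖) →
    ∑ c ∈ s, (1 / ‖u c‖) ^ 7 ≤ 16 / 15 * (1 + 4 * ρ / Δ) ^ 3 * (1 / ρ) ^ 7 := by
  classical
  induction K with
  | zero =>
    intro s ρ hρ h1 h2 _
    have : s = ∅ := by
      apply Finset.eq_empty_of_forall_notMem
      intro c hc
      have := h1 c hc; have := h2 c hc; simp at this; linarith
    subst this
    simp only [Finset.sum_empty]; positivity
  | succ K ih =>
    intro s ρ hρ h1 h2 h
    rw [← Finset.sum_filter_add_sum_filter_not s (fun c => ‖u c‖ < 2 * ρ)]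
    have e1 : ∑ c ∈ s with ‖u c‖ < 2 * ρ, (1 / ‖u c‖) ^ 7 ≤ (1 + 4 * ρ / Δ) ^ 3 * (1 / ρ) ^ 7 := by
      calc _ ≤ ∑ c ∈ s with ‖u c‖ < 2 * ρ, (1 / ρ) ^ 7 := by
            apply Finset.sum_le_sum
            intro c hc
            have := h1 c (Finset.mem_filter.1 hc).1
            gcongr
        _ = ((s.filter (fun c => ‖u c‖ < 2 * ρ)).card : ℝ) * (1 / ρ) ^ 7 := by simp
        _ ≤ _ := by
            gcongr
            have := pack_card hE (s.filter (fun c => ‖u c‖ < 2 * ρ)) u hΔ (R := 2 * ρ) (by positivity)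
              (fun c hc => (Finset.mem_filter.1 hc).2.le)
              (fun c hc d hd => h c (Finset.mem_filter.1 hc).1 d (Finset.mem_filter.1 hd).1)
            have e : 1 + 4 * ρ / Δ = 1 + 2 * (2 * ρ) / Δ := by ring
            rw [e]; exact this
    have e2 := ih (s.filter (fun c => ¬ ‖u c‖ < 2 * ρ)) (2 * ρ) (by positivity)
      (fun c hc => not_lt.1 (Finset.mem_filter.1 hc).2)
      (fun c hc => by
        have := h2 c (Finset.mem_filter.1 hc).1
        rw [pow_succ] at this; linarith)
      (fun c hc d hd => h c (Finset.mem_filter.1 hc).1 d (Finset.mem_filter.1 hd).1)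
    have e3 : (1 + 4 * (2 * ρ) / Δ) ^ 3 ≤ 8 * (1 + 4 * ρ / Δ) ^ 3 := by
      have : (8:ℝ) * (1 + 4 * ρ / Δ) ^ 3 = (2 * (1 + 4 * ρ / Δ)) ^ 3 := by ring
      rw [this]
      apply pow_le_pow_left₀ (by positivity)
      have : 0 < ρ / Δ := by positivity
      have e : 4 * (2 * ρ) / Δ = 8 * (ρ / Δ) := by ring
      have e' : 4 * ρ / Δ = 4 * (ρ / Δ) := by ring
      rw [e, e']; linarith
    have e4 : (1 / (2 * ρ)) ^ 7 = (1 / 128) * (1 / ρ) ^ 7 := by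
      rw [one_div, mul_inv, mul_pow, one_div, one_div]; norm_num
    rw [e4] at e2
    have e5 : 16 / 15 * (1 + 4 * (2 * ρ) / Δ) ^ 3 * (1 / 128 * (1 / ρ) ^ 7) ≤
      16 / 15 * (8 * (1 + 4 * ρ / Δ) ^ 3) * (1 / 128 * (1 / ρ) ^ 7) := by gcongr
    linarith

theorem pack_sum {E : Type*} [NormedAddCommGroup E] [NormedSpace ℝ E] [FiniteDimensional ℝ E]
    (hE : finrank ℝ E = 3) {ι : Type*} (u : ι → E) {Δ : ℝ} (hΔ : 0 < Δ)
    (s : Finset ι) (ρ : ℝ) (hρ : 0 < ρ) (h1 : ∀ c ∈ s, ρ ≤ ‖u c‖)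
    (h : ∀ c ∈ s, ∀ d ∈ s, c ≠ d → Δ ≤ ‖u c - u d‖) :
    ∑ c ∈ s, (1 / ‖u c‖) ^ 7 ≤ 16 / 15 * (1 + 4 * ρ / Δ) ^ 3 * (1 / ρ) ^ 7 := by
  obtain ⟨K, hK⟩ := pow_unbounded_of_one_lt ((∑ c ∈ s, ‖u c‖) / ρ) (one_lt_two)
  refine pack_sum_aux hE u hΔ K s ρ hρ h1 ?_ h
  intro c hc
  have : ‖u c‖ ≤ ∑ c ∈ s, ‖u c‖ := Finset.single_le_sum (f := fun c => ‖u c‖) (fun _ _ => norm_nonneg _) hc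
  rw [div_lt_iff₀ hρ] at hK
  linarith

/-- combined sum: `y c` is a lower-bounded quantity -/
theorem pack_sum_y {E : Type*} [NormedAddCommGroup E] [NormedSpace ℝ E] [FiniteDimensional ℝ E]
    (hE : finrank ℝ E = 3) {ι : Type*} (u : ι → E) (y : ι → ℝ) {Δ : ℝ} (hΔ : 0 < Δ)
    (s : Finset ι) (ρ y0 : ℝ) (hρ : 0 < ρ) (hy0 : 0 < y0) (h1 : ∀ c ∈ s, ρ ≤ ‖u c‖)
    (hy : ∀ c ∈ s, y0 ≤ y c) (hy2 : ∀ c ∈ s, 7 / 11 * ‖u c‖ ≤ y c)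
    (h : ∀ c ∈ s, ∀ d ∈ s, c ≠ d → Δ ≤ ‖u c - u d‖) :
    ∑ c ∈ s, (1 / y c) ^ 7 ≤ (1 + 4 * ρ / Δ) ^ 3 * (1 / y0) ^ 7 +
      16 / 15 * (1 + 8 * ρ / Δ) ^ 3 * (11 / (14 * ρ)) ^ 7 := by
  classical
  rw [← Finset.sum_filter_add_sum_filter_not s (fun c => ‖u c‖ < 2 * ρ)]
  apply add_le_add
  · calc _ ≤ ∑ c ∈ s with ‖u c‖ < 2 * ρ, (1 / y0) ^ 7 := by
          apply Finset.sum_le_sum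
          intro c hc
          have := hy c (Finset.mem_filter.1 hc).1
          have h0 : 0 < y c := by linarith
          gcongr
      _ = ((s.filter (fun c => ‖u c‖ < 2 * ρ)).card : ℝ) * (1 / y0) ^ 7 := by simp
      _ ≤ _ := by
          gcongr
          have := pack_card hE (s.filter (fun c => ‖u c‖ < 2 * ρ)) u hΔ (R := 2 * ρ) (by positivity)
            (fun c hc => (Finset.mem_filter.1 hc).2.le)
            (fun c hc d hd => h c (Finset.mem_filter.1 hc).1 d (Finset.mem_filter.1 hd).1)
          have e : 1 + 4 * ρ / Δ = 1 + 2 * (2 * ρ) / Δ := by ring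
          rw [e]; exact this
  · have e2 := pack_sum hE u hΔ (s.filter (fun c => ¬ ‖u c‖ < 2 * ρ)) (2 * ρ) (by positivity)
      (fun c hc => not_lt.1 (Finset.mem_filter.1 hc).2)
      (fun c hc d hd => h c (Finset.mem_filter.1 hc).1 d (Finset.mem_filter.1 hd).1)
    calc _ ≤ ∑ c ∈ s with ¬ ‖u c‖ < 2 * ρ, (11 / 7) ^ 7 * (1 / ‖u c‖) ^ 7 := by
          apply Finset.sum_le_sum
          intro c hc
          have h3 := hy2 c (Finset.mem_filter.1 hc).1
          have h4 := h1 c (Finset.mem_filter.1 hc).1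
          have h5 : 0 < ‖u c‖ := lt_of_lt_of_le hρ h4
          have h0 : 0 < y c := by linarith
          rw [← mul_pow]
          have : (11 / 7 : ℝ) * (1 / ‖u c‖) = 1 / (7 / 11 * ‖u c‖) := by field_simp
          rw [this]
          gcongr
      _ = (11 / 7) ^ 7 * ∑ c ∈ s with ¬ ‖u c‖ < 2 * ρ, (1 / ‖u c‖) ^ 7 := by rw [Finset.mul_sum]
      _ ≤ (11 / 7) ^ 7 * (16 / 15 * (1 + 4 * (2 * ρ) / Δ) ^ 3 * (1 / (2 * ρ)) ^ 7) := by gcongr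
      _ = _ := by
        have : (11 / (14 * ρ)) ^ 7 = (11 / 7) ^ 7 * (1 / (2 * ρ)) ^ 7 := by
          rw [← mul_pow]; congr 1; field_simp; ring
        rw [this]; ring

end

section
open Module

abbrev E4 := EuclideanSpace ℝ (Fin 4)

theorem sin_concave_aux {x y : ℝ} (hy : 0 ≤ y) (hyx : y ≤ x) (hx : x ≤ Real.pi) (hx0 : 0 < x) :
    y * Real.sin x ≤ x * Real.sin y := by
  have hxm : x ∈ Set.Icc 0 Real.pi := ⟨hx0.le, hx⟩
  have h0m : (0:ℝ) ∈ Set.Icc 0 Real.pi := ⟨le_refl _, Real.pi_pos.le⟩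
  have ha : 0 ≤ y / x := by positivity
  have hb : 0 ≤ 1 - y / x := by rw [sub_nonneg, div_le_one hx0]; exact hyx
  have h := strictConcaveOn_sin_Icc.concaveOn.2 hxm h0m ha hb (by ring)
  simp only [smul_eq_mul, Real.sin_zero, mul_zero, add_zero] at h
  rw [div_mul_cancel₀ _ hx0.ne', div_mul_eq_mul_div, div_le_iff₀ hx0] at h
  linarith

theorem cos_support {x y : ℝ} (hx0 : 0 < x) (hx : x ≤ Real.pi) (hy0 : 0 ≤ y) (hy : y ≤ Real.pi) :
    Real.cos x - Real.sin x / (2 * x) * (y ^ 2 - x ^ 2) ≤ Real.cos y := by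
  set c := Real.sin x / (2 * x) with hc
  have hc2 : 2 * c * x = Real.sin x := by rw [hc]; field_simp
  let G : ℝ → ℝ := fun y => Real.cos y + c * y ^ 2
  have hG : ∀ y, HasDerivAt G (- Real.sin y + c * (2 * y)) y := by
    intro y
    have := (Real.hasDerivAt_cos y).add (((hasDerivAt_id y).pow 2).const_mul c)
    exact HasDerivAt.congr_deriv (f := G) this (by simp)
  have hGd : Differentiable ℝ G := fun y => (hG y).differentiableAt
  suffices G x ≤ G y by simp only [G] at this; nlinarith
  rcases le_total y x with h | h
  · have : AntitoneOn G (Set.Icc 0 x) := by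
      apply antitoneOn_of_deriv_nonpos (convex_Icc _ _) hGd.continuous.continuousOn
        (hGd.differentiableOn)
      intro z hz
      rw [interior_Icc] at hz
      rw [(hG z).deriv]
      have := sin_concave_aux hz.1.le hz.2.le hx hx0
      rw [← hc2] at this
      have : x * (2 * c * z) ≤ x * Real.sin z := by nlinarith
      have := le_of_mul_le_mul_left this hx0
      linarith
    exact this ⟨hy0, h⟩ ⟨hx0.le, le_refl _⟩ h
  · have : MonotoneOn G (Set.Icc x Real.pi) := by
      apply monotoneOn_of_deriv_nonneg (convex_Icc _ _) hGd.continuous.continuousOn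
        (hGd.differentiableOn)
      intro z hz
      rw [interior_Icc] at hz
      rw [(hG z).deriv]
      have := sin_concave_aux hx0.le hz.1.le hz.2.le (hx0.trans hz.1)
      rw [← hc2] at this
      have : x * Real.sin z ≤ x * (2 * c * z) := by nlinarith
      have := le_of_mul_le_mul_left this hx0
      linarith
    exact this ⟨le_refl _, hx⟩ ⟨h, hy⟩ h

theorem cos_comparison {a b k z : ℝ} (ha0 : 0 ≤ a) (ha : a ≤ Real.pi / 2) (hb0 : 0 ≤ b)
    (hb : b ≤ Real.pi / 2) (hk : -1 ≤ k) (hk1 : k ≤ 1) (hz0 : 0 ≤ z)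
    (hz : z ^ 2 = a ^ 2 + b ^ 2 - 2 * a * b * k) :
    Real.cos z ≤ Real.cos a * Real.cos b + Real.sin a * Real.sin b * k := by
  have key : ∀ c : ℝ, (∀ y, 0 ≤ y → y ≤ Real.pi → Real.cos z - c * (y ^ 2 - z ^ 2) ≤ Real.cos y) →
      Real.cos z ≤ Real.cos a * Real.cos b + Real.sin a * Real.sin b * k := by
    intro c hc
    have h1 := hc |a - b| (abs_nonneg _) (by rw [abs_le]; constructor <;> linarith)
    have h2 := hc (a + b) (by linarith) (by linarith)
    rw [Real.cos_abs, Real.cos_sub, sq_abs] at h1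
    rw [Real.cos_add] at h2
    have e1 := mul_le_mul_of_nonneg_left h1 (show 0 ≤ (1 + k) / 2 by linarith)
    have e2 := mul_le_mul_of_nonneg_left h2 (show 0 ≤ (1 - k) / 2 by linarith)
    rw [hz] at e1 e2
    have := add_le_add e1 e2
    ring_nf at this ⊢
    linarith
  rcases hz0.eq_or_lt with h | h
  · subst h
    apply key (1 / 2)
    intro y _ _
    have := Real.one_sub_sq_div_two_le_cos (x := y)
    simp; linarith
  · apply key (Real.sin z / (2 * z))
    intro y h0 h1
    refine cos_support h ?_ h0 h1
    have : z ^ 2 ≤ Real.pi ^ 2 := by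
      rw [hz]
      have : (a + b) ^ 2 ≤ Real.pi ^ 2 := by
        apply pow_le_pow_left₀ <;> linarith
      nlinarith [mul_nonneg ha0 hb0]
    exact (abs_le_of_sq_le_sq' this Real.pi_pos.le).2

/-- log map data -/
theorem log_data (p q : E4) (hp : ‖p‖ = 1) (hq : ‖q‖ = 1) (hlt : |inner ℝ p q| < 1) :
    ∃ (ε : ℝ) (n : (ℝ ∙ p)ᗮ), (ε = 1 ∨ ε = -1) ∧
      ‖n‖ = 1 ∧ ε • q = Real.cos (Real.arccos |inner ℝ p q|) • p +
        Real.sin (Real.arccos |inner ℝ p q|) • (n : E4) := by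
  obtain ⟨ε, hε, hεw⟩ : ∃ ε : ℝ, (ε = 1 ∨ ε = -1) ∧ ε * inner ℝ p q = |inner ℝ p q| := by
    rcases le_total 0 (inner ℝ p q) with h | h
    · exact ⟨1, Or.inl rfl, by rw [abs_of_nonneg h]; ring⟩
    · exact ⟨-1, Or.inr rfl, by rw [abs_of_nonpos h]; ring⟩
  set w := |inner ℝ p q| with hw
  have hw0 : 0 ≤ w := abs_nonneg _
  rw [Real.cos_arccos (by linarith) hlt.le, Real.sin_arccos]
  have hpp : inner ℝ p p = 1 := by rw [real_inner_self_eq_norm_sq, hp]; norm_num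
  have hqq : inner ℝ q q = 1 := by rw [real_inner_self_eq_norm_sq, hq]; norm_num
  have hs : 0 < 1 - w ^ 2 := by nlinarith
  have hs' : 0 < √(1 - w ^ 2) := Real.sqrt_pos.2 hs
  have hε2 : ε * ε = 1 := by rcases hε with h | h <;> rw [h] <;> norm_num
  have hn : (√(1 - w ^ 2))⁻¹ • (ε • q - w • p) ∈ (ℝ ∙ p)ᗮ := by
    rw [Submodule.mem_orthogonal_singleton_iff_inner_right]
    simp only [inner_smul_right, inner_sub_right, hpp]
    rw [hεw]; ring
  refine ⟨ε, ⟨_, hn⟩, hε, ?_, ?_⟩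
  · simp only [Submodule.coe_norm, norm_smul, norm_inv, Real.norm_eq_abs, abs_of_pos hs']
    have : ‖ε • q - w • p‖ ^ 2 = 1 - w ^ 2 := by
      rw [← real_inner_self_eq_norm_sq]
      simp only [inner_smul_right, inner_smul_left, inner_sub_right, inner_sub_left, hpp, hqq,
        real_inner_comm p q, RCLike.conj_to_real]
      linear_combination hε2 - 2 * w * hεw
    rw [← this, Real.sqrt_sq (norm_nonneg _)]
    apply inv_mul_cancel₀
    intro h0
    rw [h0] at this; norm_num at this; linarith
  · simp only [smul_smul]
    rw [mul_inv_cancel₀ hs'.ne', one_smul]; abel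

theorem sphere_pack {ι : Type*} (p : E4) (hp : ‖p‖ = 1) (q : ι → E4) (hq : ∀ c, ‖q c‖ = 1)
    (s : Finset ι) (m Δ ρ : ℝ) (hm : 5 ≤ m) (hΔ : 0 < Δ) (hΔm : Δ / m ≤ Real.pi / 2)
    (hρ : 0 < ρ) (hρm : ρ / m ≤ Real.pi / 2) (hy0 : 0 < ρ - ρ ^ 3 / 150)
    (hsep : ∀ c ∈ s, ∀ d ∈ s, c ≠ d → |inner ℝ (q c) (q d)| ≤ Real.cos (Δ / m))
    (hd : ∀ c ∈ s, |inner ℝ p (q c)| ≤ Real.cos (ρ / m)) :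
    (∀ c ∈ s, ρ - ρ ^ 3 / 150 ≤ m * √(1 - (inner ℝ p (q c)) ^ 2)) ∧
    ∑ c ∈ s, (1 / (m * √(1 - (inner ℝ p (q c)) ^ 2))) ^ 7 ≤
      (1 + 4 * ρ / Δ) ^ 3 * (1 / (ρ - ρ ^ 3 / 150)) ^ 7 +
      16 / 15 * (1 + 8 * ρ / Δ) ^ 3 * (11 / (14 * ρ)) ^ 7 := by
  have hm0 : 0 < m := by linarith
  have hpp : inner ℝ p p = 1 := by rw [real_inner_self_eq_norm_sq, hp]; norm_num
  have hcos1 : Real.cos (ρ / m) < 1 := by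
    rw [← Real.cos_zero]
    apply Real.cos_lt_cos_of_nonneg_of_le_pi_div_two (le_refl _) hρm (by positivity)
  have hex : ∀ c : ι, ∃ (ε : ℝ) (n : (ℝ ∙ p)ᗮ), c ∈ s → (ε = 1 ∨ ε = -1) ∧
      ‖n‖ = 1 ∧ ε • q c = Real.cos (Real.arccos |inner ℝ p (q c)|) • p +
        Real.sin (Real.arccos |inner ℝ p (q c)|) • (n : E4) := by
    intro c
    by_cases hc : c ∈ s
    · obtain ⟨ε, n, h⟩ := log_data p (q c) hp (hq c) (lt_of_le_of_lt (hd c hc) hcos1)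
      exact ⟨ε, n, fun _ => h⟩
    · exact ⟨0, 0, fun h => absurd h hc⟩
  choose ε n hen using hex
  let θ : ι → ℝ := fun c => Real.arccos |inner ℝ p (q c)|
  have hθ0 : ∀ c, 0 ≤ θ c := fun c => Real.arccos_nonneg _
  have hθ1 : ∀ c, θ c ≤ Real.pi / 2 := fun c => Real.arccos_le_pi_div_two.2 (abs_nonneg _)
  have hθρ : ∀ c ∈ s, ρ / m ≤ θ c := by
    intro c hc
    have : Real.arccos (Real.cos (ρ / m)) ≤ θ c := Real.antitone_arccos (hd c hc)
    rwa [Real.arccos_cos (by positivity) (by linarith [Real.pi_pos])] at this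
  have hy : ∀ c, √(1 - (inner ℝ p (q c)) ^ 2) = Real.sin (θ c) := by
    intro c; simp only [θ]; rw [Real.sin_arccos, sq_abs]
  have hsin0 : ρ / m - (ρ / m) ^ 3 / 6 ≤ Real.sin (ρ / m) := Real.sin_ge_sub_cube (by positivity)
  have hylow : ∀ c ∈ s, ρ - ρ ^ 3 / 150 ≤ m * √(1 - (inner ℝ p (q c)) ^ 2) := by
    intro c hc
    rw [hy]
    have h1 : Real.sin (ρ / m) ≤ Real.sin (θ c) :=
      Real.sin_le_sin_of_le_of_le_pi_div_two (by linarith [Real.pi_pos, show 0 < ρ / m by positivity])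
        (hθ1 c) (hθρ c hc)
    have h2 : m * (ρ / m - (ρ / m) ^ 3 / 6) ≤ m * Real.sin (θ c) :=
      mul_le_mul_of_nonneg_left (hsin0.trans h1) hm0.le
    have h3 : m * (ρ / m - (ρ / m) ^ 3 / 6) = ρ - ρ ^ 3 / (6 * m ^ 2) := by field_simp
    have h4 : ρ ^ 3 / (6 * m ^ 2) ≤ ρ ^ 3 / 150 := by
      gcongr; nlinarith
    linarith
  refine ⟨hylow, ?_⟩
  haveI : Fact (finrank ℝ E4 = 3 + 1) := ⟨by simp⟩
  have hp0 : p ≠ 0 := by intro h; rw [h] at hp; simp at hp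
  have hfr : finrank ℝ (ℝ ∙ p)ᗮ = 3 := Submodule.finrank_orthogonal_span_singleton hp0
  have hun : ∀ c ∈ s, ‖(m * θ c) • n c‖ = m * θ c := by
    intro c hc
    rw [norm_smul, (hen c hc).2.1, mul_one, Real.norm_eq_abs, abs_of_nonneg]
    have := hθ0 c; positivity
  refine pack_sum_y hfr (fun c => (m * θ c) • n c) _ hΔ s ρ _ hρ hy0 ?_ hylow ?_ ?_
  · intro c hc
    rw [hun c hc]
    have := hθρ c hc
    rw [div_le_iff₀ hm0] at this; linarith
  · intro c hc
    rw [hun c hc, hy]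
    have h1 := Real.mul_le_sin (hθ0 c) (hθ1 c)
    have h2 : 7 / 11 ≤ 2 / Real.pi := by
      rw [div_le_div_iff₀ (by norm_num) Real.pi_pos]
      have := Real.pi_lt_d4
      linarith
    have h3 := mul_le_mul_of_nonneg_right h2 (hθ0 c)
    nlinarith
  · intro c hc d hd' hcd
    obtain ⟨e1, n1, q1⟩ := hen c hc
    obtain ⟨e2, n2, q2⟩ := hen d hd'
    by_contra hlt
    push Not at hlt
    set L := ‖(m * θ c) • n c - (m * θ d) • n d‖ with hL
    set k : ℝ := inner ℝ (n c : E4) (n d : E4) with hk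
    have hn1 : ‖(n c : E4)‖ = 1 := n1
    have hn2 : ‖(n d : E4)‖ = 1 := n2
    have hkabs : |k| ≤ 1 := by
      have := abs_real_inner_le_norm (n c : E4) (n d : E4)
      rwa [hn1, hn2, mul_one] at this
    have hL2 : (L / m) ^ 2 = θ c ^ 2 + θ d ^ 2 - 2 * θ c * θ d * k := by
      have : L ^ 2 = m ^ 2 * (θ c ^ 2 + θ d ^ 2 - 2 * θ c * θ d * k) := by
        rw [hL, @norm_sub_sq_real, hun c hc, hun d hd']
        rw [inner_smul_left, inner_smul_right, Submodule.coe_inner, ← hk]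
        simp only [RCLike.conj_to_real]
        ring
      rw [div_pow, this]; field_simp
    have hcomp := cos_comparison (hθ0 c) (hθ1 c) (hθ0 d) (hθ1 d) (abs_le.1 hkabs).1 (abs_le.1 hkabs).2
      (div_nonneg (norm_nonneg _) hm0.le) hL2
    have hpn : ∀ v : (ℝ ∙ p)ᗮ, inner ℝ p (v : E4) = 0 := fun v =>
      Submodule.mem_orthogonal_singleton_iff_inner_right.1 v.2
    have hnp : ∀ v : (ℝ ∙ p)ᗮ, inner ℝ (v : E4) p = 0 := fun v => by rw [real_inner_comm]; exact hpn v
    have hin : inner ℝ (ε c • q c) (ε d • q d) =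
        Real.cos (θ c) * Real.cos (θ d) + Real.sin (θ c) * Real.sin (θ d) * k := by
      rw [q1, q2]
      simp only [inner_add_left, inner_add_right, inner_smul_left, inner_smul_right, hpn, hnp, hpp,
        RCLike.conj_to_real, ← hk]
      ring
    have habs : inner ℝ (ε c • q c) (ε d • q d) ≤ |inner ℝ (q c) (q d)| := by
      rw [inner_smul_left, inner_smul_right]
      simp only [RCLike.conj_to_real]
      rcases e1 with h | h <;> rcases e2 with h' | h' <;> rw [h, h'] <;>
        simp [le_abs_self, neg_le_abs]
    have hsp := hsep c hc d hd' hcd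
    have hcoslt : Real.cos (Δ / m) < Real.cos (L / m) := by
      apply Real.cos_lt_cos_of_nonneg_of_le_pi_div_two (div_nonneg (norm_nonneg _) hm0.le) hΔm
      gcongr
    rw [hin] at habs
    linarith

end

section
open Polynomial

noncomputable def kp (n : ℕ) : ℝ[X] := Polynomial.C (1 / ((n : ℝ) + 1)) * Chebyshev.U ℝ (n : ℤ)

noncomputable def kP (n : ℕ) (t : ℝ) : ℝ := (kp n).eval t
noncomputable def kP1 (n : ℕ) (t : ℝ) : ℝ := (derivative (kp n)).eval t
noncomputable def kP2 (n : ℕ) (t : ℝ) : ℝ := (derivative (derivative (kp n))).eval t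

theorem kP_eq (n : ℕ) (t : ℝ) : kP n t = 1 / ((n : ℝ) + 1) * (Chebyshev.U ℝ (n : ℤ)).eval t := by
  simp [kP, kp]

theorem kP_hasDeriv (n : ℕ) (t : ℝ) : HasDerivAt (kP n) (kP1 n t) t := Polynomial.hasDerivAt _ _
theorem kP1_hasDeriv (n : ℕ) (t : ℝ) : HasDerivAt (kP1 n) (kP2 n t) t := Polynomial.hasDerivAt _ _

theorem kP_cos (n : ℕ) (θ : ℝ) :
    kP n (Real.cos θ) * (((n : ℝ) + 1) * Real.sin θ) = Real.sin (((n : ℝ) + 1) * θ) := by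
  have := Chebyshev.U_real_cos θ (n : ℤ)
  rw [kP_eq]
  have hn : (n : ℝ) + 1 ≠ 0 := by positivity
  push_cast at this
  rw [← this]; field_simp

theorem kP_neg_abs (n : ℕ) (t : ℝ) : |kP n (-t)| = |kP n t| := by
  rw [kP_eq, kP_eq, Chebyshev.U_eval_neg]
  rcases Int.even_or_odd (n : ℤ) with h | h
  · rw [Int.negOnePow_even _ h]; simp
  · rw [Int.negOnePow_odd _ h]; simp

theorem kP_abs_abs (n : ℕ) (t : ℝ) : |kP n (abs t)| = |kP n t| := by
  rcases abs_choice t with h | h <;> rw [h]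
  exact kP_neg_abs n t

theorem kP_bound (n : ℕ) (t : ℝ) (ht : |t| ≤ 1) :
    |kP n t| * (((n : ℝ) + 1) * √(1 - t ^ 2)) ≤ 1 := by
  have h := kP_cos n (Real.arccos t)
  rw [Real.cos_arccos (abs_le.1 ht).1 (abs_le.1 ht).2, Real.sin_arccos] at h
  have h0 : 0 ≤ ((n : ℝ) + 1) * √(1 - t ^ 2) := by positivity
  rw [← abs_of_nonneg h0, ← abs_mul, h]
  exact Real.abs_sin_le_one _

theorem kP1_eq (n : ℕ) (t : ℝ) :
    (1 - t ^ 2) * kP1 n t = t * kP n t - (Chebyshev.T ℝ ((n : ℤ) + 1)).eval t := by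
  have h := congrArg (Polynomial.eval t) (Chebyshev.add_one_mul_T_eq_poly_in_U (R := ℝ) (n : ℤ))
  simp at h
  have hn : (n : ℝ) + 1 ≠ 0 := by positivity
  rw [kP_eq]
  simp [kP1, kp]
  field_simp
  linear_combination h

theorem kP2_eq (n : ℕ) (t : ℝ) :
    (1 - t ^ 2) * kP2 n t = 3 * t * kP1 n t - (((n : ℝ) + 1) ^ 2 - 1) * kP n t := by
  have h := congrArg (Polynomial.eval t)
    (Chebyshev.one_sub_X_sq_mul_derivative_derivative_U_eq_poly_in_U (R := ℝ) (n : ℤ))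
  simp at h
  have hn : (n : ℝ) + 1 ≠ 0 := by positivity
  rw [kP_eq]
  simp [kP1, kP2, kp]
  field_simp
  linear_combination h

theorem kP1_bound (n : ℕ) (t : ℝ) (ht : |t| ≤ 1) :
    (1 - t ^ 2) * |kP1 n t| ≤ |kP n t| + 1 := by
  have h1 : 0 ≤ 1 - t ^ 2 := by have := (sq_le_one_iff_abs_le_one t).2 ht; linarith
  rw [← abs_of_nonneg h1, ← abs_mul, kP1_eq]
  have h2 := Chebyshev.abs_eval_T_real_le_one ((n : ℤ) + 1) ht
  have h3 : |t * kP n t| ≤ |kP n t| := by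
    rw [abs_mul]; exact mul_le_of_le_one_left (abs_nonneg _) ht
  calc _ ≤ |t * kP n t| + |(Chebyshev.T ℝ ((n : ℤ) + 1)).eval t| := abs_sub _ _
    _ ≤ _ := by linarith

theorem sin_upper {x : ℝ} (h0 : 0 ≤ x) (h1 : x ≤ 4) : Real.sin x ≤ x - x ^ 3 / 6 + x ^ 5 / 120 := by
  let G : ℝ → ℝ := fun x => x - x ^ 3 / 6 + x ^ 5 / 120 - Real.sin x
  have hG : ∀ y, HasDerivAt G (1 - y ^ 2 / 2 + y ^ 4 / 24 - Real.cos y) y := by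
    intro y
    have := ((((hasDerivAt_id y).sub (((hasDerivAt_id y).pow 3).div_const 6))).add
      (((hasDerivAt_id y).pow 5).div_const 120)).sub (Real.hasDerivAt_sin y)
    exact HasDerivAt.congr_deriv (f := G) this (by simp; ring)
  have hGd : Differentiable ℝ G := fun y => (hG y).differentiableAt
  have hmono : MonotoneOn G (Set.Icc 0 4) := by
    apply monotoneOn_of_deriv_nonneg (convex_Icc _ _) hGd.continuous.continuousOn
      (hGd.differentiableOn)
    intro z hz
    rw [interior_Icc] at hz
    rw [(hG z).deriv]
    have e : Real.cos z = 1 - 2 * Real.sin (z / 2) ^ 2 := by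
      have := Real.cos_two_mul (z / 2)
      have h2 := Real.sin_sq_add_cos_sq (z / 2)
      rw [show 2 * (z / 2) = z by ring] at this
      linarith
    have hs := Real.sin_ge_sub_cube (x := z / 2) (by linarith [hz.1])
    have hp : 0 ≤ z / 2 - (z / 2) ^ 3 / 6 := by
      have : 0 ≤ z / 2 * (1 - (z / 2) ^ 2 / 6) := by
        apply mul_nonneg (by linarith [hz.1]); nlinarith [hz.1, hz.2]
      linarith
    have hsq := pow_le_pow_left₀ hp hs 2
    have : 0 ≤ z ^ 6 := by have := hz.1; positivity
    rw [e]; nlinarith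
  have := hmono ⟨le_refl _, by norm_num⟩ ⟨h0, h1⟩ h0
  simp [G] at this
  linarith

/-- lower bound near zero -/
theorem kP_near_lower (n : ℕ) {θ : ℝ} (h0 : 0 < θ) (h1 : θ ≤ Real.pi / 2) (hY : ((n : ℝ) + 1) * θ ≤ 2) :
    1 - (((n : ℝ) + 1) * θ) ^ 2 / 6 ≤ kP n (Real.cos θ) := by
  have h := kP_cos n θ
  set m : ℝ := (n : ℝ) + 1 with hm
  have hm0 : 0 < m := by positivity
  have hs : 0 < Real.sin θ := Real.sin_pos_of_pos_of_lt_pi h0 (by linarith [Real.pi_pos])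
  have hs2 : Real.sin θ ≤ θ := Real.sin_le h0.le
  have h3 := Real.sin_ge_sub_cube (x := m * θ) (by positivity)
  rw [← h] at h3
  have hA : 0 ≤ 1 - (m * θ) ^ 2 / 6 := by nlinarith [show 0 ≤ m * θ by positivity]
  have h4 : (1 - (m * θ) ^ 2 / 6) * (m * Real.sin θ) ≤ kP n (Real.cos θ) * (m * Real.sin θ) := by
    have : (1 - (m * θ) ^ 2 / 6) * (m * Real.sin θ) ≤ (1 - (m * θ) ^ 2 / 6) * (m * θ) := by gcongr
    linarith
  exact le_of_mul_le_mul_right h4 (by positivity)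

theorem kP_near_upper (n : ℕ) (hn : 4 ≤ n) {θ : ℝ} (h0 : 0 < θ) (hY : ((n : ℝ) + 1) * θ ≤ 2) :
    kP n (Real.cos θ) * (1 - (((n : ℝ) + 1) * θ) ^ 2 / 150) ≤
      1 - (((n : ℝ) + 1) * θ) ^ 2 / 6 + (((n : ℝ) + 1) * θ) ^ 4 / 120 := by
  have hm5 : (5 : ℝ) ≤ (n : ℝ) + 1 := by have : (4 : ℝ) ≤ n := by exact_mod_cast hn
                                         linarith
  have h := kP_cos n θ
  set m : ℝ := (n : ℝ) + 1 with hm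
  have hm0 : 0 < m := by positivity
  have hθ : θ ≤ 1 := by nlinarith
  have hlow := kP_near_lower n h0 (by linarith [Real.pi_gt_three]) hY
  have hA : 0 ≤ 1 - (m * θ) ^ 2 / 6 := by nlinarith [show 0 ≤ m * θ by positivity]
  have h3 := sin_upper (x := m * θ) (by positivity) (by linarith)
  have h4 := Real.sin_ge_sub_cube h0.le
  rw [← h] at h3
  have hθm : θ ≤ m * θ / 5 := by nlinarith
  have h5 : m * θ * (1 - (m * θ) ^ 2 / 150) ≤ m * Real.sin θ := by
    have e1 : m * (θ - θ ^ 3 / 6) ≤ m * Real.sin θ := by gcongr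
    have e2 : θ ^ 2 ≤ (m * θ / 5) ^ 2 := by gcongr
    have e3 : m * θ * θ ^ 2 ≤ m * θ * (m * θ / 5) ^ 2 := by gcongr
    nlinarith
  have hk : 0 ≤ kP n (Real.cos θ) := by rw [← hm] at hlow; linarith
  have h6 := mul_le_mul_of_nonneg_left h5 hk
  have hmt : 0 < m * θ := by positivity
  have h7 : kP n (Real.cos θ) * (1 - (m * θ) ^ 2 / 150) * (m * θ) ≤
    (1 - (m * θ) ^ 2 / 6 + (m * θ) ^ 4 / 120) * (m * θ) := by nlinarith
  exact le_of_mul_le_mul_right h7 hmt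

/-- scalar data of one bump -/
noncomputable def G0 (n : ℕ) (a τ σ : ℝ) : ℝ := (a + 2 * τ * σ) * kP n τ ^ 8
noncomputable def G1 (n : ℕ) (a τ σ τ' σ' : ℝ) : ℝ :=
  2 * (τ' * σ + τ * σ') * kP n τ ^ 8 + 8 * (a + 2 * τ * σ) * kP n τ ^ 7 * (kP1 n τ * τ')
noncomputable def G2 (n : ℕ) (a τ σ τ' σ' : ℝ) : ℝ :=
  4 * (τ' * σ' - τ * σ) * kP n τ ^ 8 +
  32 * (τ' * σ + τ * σ') * kP n τ ^ 7 * (kP1 n τ * τ') +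
  (a + 2 * τ * σ) * (56 * kP n τ ^ 6 * (kP1 n τ * τ') ^ 2 +
    8 * kP n τ ^ 7 * (kP2 n τ * τ' ^ 2 - kP1 n τ * τ))

theorem G0_hasDeriv (n : ℕ) (a A B C D θ : ℝ) :
    HasDerivAt (fun t => G0 n a (Real.cos t * A + Real.sin t * B) (Real.cos t * C + Real.sin t * D))
      (G1 n a (Real.cos θ * A + Real.sin θ * B) (Real.cos θ * C + Real.sin θ * D)
        (- Real.sin θ * A + Real.cos θ * B) (- Real.sin θ * C + Real.cos θ * D)) θ := by
  have h1 : HasDerivAt (fun t => Real.cos t * A + Real.sin t * B)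
    (- Real.sin θ * A + Real.cos θ * B) θ :=
    ((Real.hasDerivAt_cos θ).mul_const A).add ((Real.hasDerivAt_sin θ).mul_const B)
  have h2 : HasDerivAt (fun t => Real.cos t * C + Real.sin t * D)
    (- Real.sin θ * C + Real.cos θ * D) θ :=
    ((Real.hasDerivAt_cos θ).mul_const C).add ((Real.hasDerivAt_sin θ).mul_const D)
  have hP := HasDerivAt.comp θ (kP_hasDeriv n _) h1
  have := (((h1.const_mul 2).mul h2).const_add a).mul (hP.pow 8)
  refine HasDerivAt.congr_deriv (f := (fun t => G0 n a (Real.cos t * A + Real.sin t * B) (Real.cos t * C + Real.sin t * D))) this ?_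
  simp [G1]
  ring

theorem G1_hasDeriv (n : ℕ) (a A B C D θ : ℝ) :
    HasDerivAt (fun θ => G1 n a (Real.cos θ * A + Real.sin θ * B) (Real.cos θ * C + Real.sin θ * D)
        (- Real.sin θ * A + Real.cos θ * B) (- Real.sin θ * C + Real.cos θ * D))
      (G2 n a (Real.cos θ * A + Real.sin θ * B) (Real.cos θ * C + Real.sin θ * D)
        (- Real.sin θ * A + Real.cos θ * B) (- Real.sin θ * C + Real.cos θ * D)) θ := by
  have h1 : HasDerivAt (fun t => Real.cos t * A + Real.sin t * B)
    (- Real.sin θ * A + Real.cos θ * B) θ :=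
    ((Real.hasDerivAt_cos θ).mul_const A).add ((Real.hasDerivAt_sin θ).mul_const B)
  have h2 : HasDerivAt (fun t => Real.cos t * C + Real.sin t * D)
    (- Real.sin θ * C + Real.cos θ * D) θ :=
    ((Real.hasDerivAt_cos θ).mul_const C).add ((Real.hasDerivAt_sin θ).mul_const D)
  have h3 : HasDerivAt (fun t => - Real.sin t * A + Real.cos t * B)
    (- Real.cos θ * A + - Real.sin θ * B) θ :=
    ((Real.hasDerivAt_sin θ).neg.mul_const A).add ((Real.hasDerivAt_cos θ).mul_const B)
  have h4 : HasDerivAt (fun t => - Real.sin t * C + Real.cos t * D)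
    (- Real.cos θ * C + - Real.sin θ * D) θ :=
    ((Real.hasDerivAt_sin θ).neg.mul_const C).add ((Real.hasDerivAt_cos θ).mul_const D)
  have hP := HasDerivAt.comp θ (kP_hasDeriv n _) h1
  have hP1 := HasDerivAt.comp θ (kP1_hasDeriv n _) h1
  have := ((((h3.mul h2).add (h1.mul h4)).const_mul 2).mul (hP.pow 8)).add
    (((((((h1.const_mul 2).mul h2).const_add a)).const_mul 8).mul (hP.pow 7)).mul (hP1.mul h3))
  refine HasDerivAt.congr_deriv (f := (fun θ => G1 n a (Real.cos θ * A + Real.sin θ * B) (Real.cos θ * C + Real.sin θ * D)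
        (- Real.sin θ * A + Real.cos θ * B) (- Real.sin θ * C + Real.cos θ * D))) this ?_
  simp [G2]
  ring

/-- scalar bounds -/
theorem G_bounds (n : ℕ) {a τ σ τ' σ' A w y u0 : ℝ} (hn : 1 ≤ (n : ℝ))
    (hτ : τ ^ 2 + τ' ^ 2 ≤ 1) (ha : |a| ≤ A)
    (hy : y = ((n : ℝ) + 1) * √(1 - τ ^ 2)) (hy0 : 0 < y) (hu : 1 / y ≤ u0) (hw : 0 ≤ w)
    (hσ : |σ| ≤ w * y) (hσm : |σ| ≤ w * ((n : ℝ) + 1)) (hσ' : |σ'| ≤ w * ((n : ℝ) + 1)) :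
    |G0 n a τ σ| ≤ (A * u0 + 2 * w) * (1 / y) ^ 7 ∧
    |G1 n a τ σ τ' σ'| ≤ ((n : ℝ) + 1) * ((4 * w * u0 + 8 * (1 + u0) * (A * u0 + 2 * w)) * (1 / y) ^ 7) ∧
    |G2 n a τ σ τ' σ'| ≤ ((n : ℝ) + 1) ^ 2 * ((8 * w * u0 + 64 * w * (1 + u0) * u0 +
      (56 * (1 + u0) ^ 2 + 8 + 32 * (1 + u0) * u0) * (A * u0 + 2 * w)) * (1 / y) ^ 7) := by
  have hτ1 : |τ| ≤ 1 := by rw [← sq_le_one_iff_abs_le_one]; nlinarith [sq_nonneg τ']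
  have hτ'1 : |τ'| ≤ 1 := by rw [← sq_le_one_iff_abs_le_one]; nlinarith [sq_nonneg τ]
  set m : ℝ := (n : ℝ) + 1 with hm
  have hm0 : 0 < m := by positivity
  set s := √(1 - τ ^ 2) with hs
  have hs0 : 0 < s := by
    rw [hy] at hy0; exact (pos_iff_pos_of_mul_pos hy0).1 hm0
  have hs2 : s ^ 2 = 1 - τ ^ 2 := Real.sq_sqrt (by nlinarith [sq_nonneg τ'])
  have hτ's : |τ'| ≤ s := by
    exact abs_le_of_sq_le_sq (by nlinarith) hs0.le
  set u := 1 / y with hudef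
  have hu0 : 0 < u := by positivity
  have hyu : y * u = 1 := by rw [hudef]; field_simp
  have hP : |kP n τ| ≤ u := by
    rw [hudef, le_div_iff₀ hy0, hy]; exact kP_bound n τ hτ1
  have hsm : s * m * u = 1 := by rw [mul_comm s, ← hy]; exact hyu
  -- P1 bound
  have hP1 : |kP1 n τ| ≤ m ^ 2 * (u ^ 2 * (1 + u)) := by
    have := kP1_bound n τ hτ1
    rw [← hs2] at this
    have h2 : s ^ 2 * (m ^ 2 * (u ^ 2 * (1 + u))) = 1 + u := by
      calc _ = (s * m * u) ^ 2 * (1 + u) := by ring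
        _ = _ := by rw [hsm]; ring
    have h3 : s ^ 2 * |kP1 n τ| ≤ s ^ 2 * (m ^ 2 * (u ^ 2 * (1 + u))) := by rw [h2]; linarith
    exact le_of_mul_le_mul_left h3 (by positivity)
  have hF1 : |kP1 n τ * τ'| ≤ m * (u * (1 + u)) := by
    rw [abs_mul]
    calc _ ≤ m ^ 2 * (u ^ 2 * (1 + u)) * s := by gcongr
      _ = m * (u * (1 + u)) * (s * m * u) := by ring
      _ = _ := by rw [hsm]; ring
  have hF2 : |kP2 n τ * τ' ^ 2 - kP1 n τ * τ| ≤ m ^ 2 * (u + 4 * (1 + u) * u ^ 2) := by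
    have e1 : |kP2 n τ * τ' ^ 2| ≤ 3 * |kP1 n τ| + (m ^ 2 - 1) * |kP n τ| := by
      rw [abs_mul, abs_of_nonneg (sq_nonneg τ')]
      calc _ ≤ |kP2 n τ| * (1 - τ ^ 2) := by gcongr; linarith
        _ = |(1 - τ ^ 2) * kP2 n τ| := by
          rw [abs_mul, abs_of_nonneg (show 0 ≤ 1 - τ ^ 2 by rw [← hs2]; positivity)]; ring
        _ = |3 * τ * kP1 n τ - (m ^ 2 - 1) * kP n τ| := by rw [kP2_eq]
        _ ≤ |3 * τ * kP1 n τ| + |(m ^ 2 - 1) * kP n τ| := abs_sub _ _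
        _ ≤ _ := by
          rw [abs_mul, abs_mul, abs_mul, abs_of_pos (show (0:ℝ) < 3 by norm_num)]
          have : |m ^ 2 - 1| = m ^ 2 - 1 := abs_of_nonneg (by nlinarith)
          rw [this]
          have := mul_le_of_le_one_left (abs_nonneg (kP1 n τ)) hτ1
          linarith
    have e2 : |kP1 n τ * τ| ≤ |kP1 n τ| := by
      rw [abs_mul]; exact mul_le_of_le_one_right (abs_nonneg _) hτ1
    have e3 : (m ^ 2 - 1) * |kP n τ| ≤ m ^ 2 * u := by
      calc _ ≤ m ^ 2 * |kP n τ| := by gcongr; linarith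
        _ ≤ _ := by gcongr
    calc _ ≤ |kP2 n τ * τ' ^ 2| + |kP1 n τ * τ| := abs_sub _ _
      _ ≤ 4 * |kP1 n τ| + m ^ 2 * u := by linarith
      _ ≤ 4 * (m ^ 2 * (u ^ 2 * (1 + u))) + m ^ 2 * u := by gcongr
      _ = _ := by ring
  have hA0 : 0 ≤ A := (abs_nonneg a).trans ha
  have hE : |a + 2 * τ * σ| ≤ A + 2 * w * y := by
    calc _ ≤ |a| + |2 * τ * σ| := abs_add_le _ _
      _ = |a| + 2 * |τ| * |σ| := by rw [abs_mul, abs_mul]; norm_num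
      _ ≤ A + 2 * 1 * (w * y) := by gcongr
      _ = _ := by ring
  have hE1 : |τ' * σ + τ * σ'| ≤ 2 * w * m := by
    calc _ ≤ |τ' * σ| + |τ * σ'| := abs_add_le _ _
      _ = |τ'| * |σ| + |τ| * |σ'| := by rw [abs_mul, abs_mul]
      _ ≤ 1 * (w * m) + 1 * (w * m) := by gcongr
      _ = _ := by ring
  have hE2 : |τ' * σ' - τ * σ| ≤ 2 * w * m := by
    calc _ ≤ |τ' * σ'| + |τ * σ| := abs_sub _ _
      _ = |τ'| * |σ'| + |τ| * |σ| := by rw [abs_mul, abs_mul]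
      _ ≤ 1 * (w * m) + 1 * (w * m) := by gcongr
      _ = _ := by ring
  have hEu : ∀ B : ℝ, (A + 2 * w * y) * (u ^ 8 * B) = (A * u + 2 * w) * (u ^ 7 * B) := by
    intro B
    linear_combination 2 * w * u ^ 7 * B * hyu
  have hu00 : 0 ≤ u0 := hu0.le.trans hu
  have hm1 : 1 ≤ m := by linarith
  refine ⟨?_, ?_, ?_⟩
  · rw [G0, abs_mul, abs_pow]
    calc _ ≤ (A + 2 * w * y) * u ^ 8 := by gcongr
      _ = (A * u + 2 * w) * u ^ 7 := by have := hEu 1; simpa using this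
      _ ≤ _ := by gcongr
  · rw [G1]
    calc _ ≤ |2 * (τ' * σ + τ * σ') * kP n τ ^ 8| + |8 * (a + 2 * τ * σ) * kP n τ ^ 7 * (kP1 n τ * τ')| :=
          abs_add_le _ _
      _ = 2 * |τ' * σ + τ * σ'| * |kP n τ| ^ 8 + 8 * |a + 2 * τ * σ| * |kP n τ| ^ 7 * |kP1 n τ * τ'| := by
          simp only [abs_mul, abs_pow]; norm_num
      _ ≤ 2 * (2 * w * m) * u ^ 8 + 8 * (A + 2 * w * y) * u ^ 7 * (m * (u * (1 + u))) := by gcongr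
      _ = m * (4 * w * u * u ^ 7 + 8 * ((A + 2 * w * y) * (u ^ 8 * (1 + u)))) := by ring
      _ = m * ((4 * w * u + 8 * (1 + u) * (A * u + 2 * w)) * u ^ 7) := by rw [hEu]; ring
      _ ≤ _ := by gcongr
  · rw [G2]
    calc _ ≤ |4 * (τ' * σ' - τ * σ) * kP n τ ^ 8| +
          |32 * (τ' * σ + τ * σ') * kP n τ ^ 7 * (kP1 n τ * τ')| +
          |(a + 2 * τ * σ) * (56 * kP n τ ^ 6 * (kP1 n τ * τ') ^ 2 +
            8 * kP n τ ^ 7 * (kP2 n τ * τ' ^ 2 - kP1 n τ * τ))| := abs_add_three _ _ _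
      _ ≤ |4 * (τ' * σ' - τ * σ) * kP n τ ^ 8| +
          |32 * (τ' * σ + τ * σ') * kP n τ ^ 7 * (kP1 n τ * τ')| +
          |a + 2 * τ * σ| * (|56 * kP n τ ^ 6 * (kP1 n τ * τ') ^ 2| +
            |8 * kP n τ ^ 7 * (kP2 n τ * τ' ^ 2 - kP1 n τ * τ)|) := by
          rw [abs_mul (a + 2 * τ * σ)]; gcongr; exact abs_add_le _ _
      _ = 4 * |τ' * σ' - τ * σ| * |kP n τ| ^ 8 +
          32 * |τ' * σ + τ * σ'| * |kP n τ| ^ 7 * |kP1 n τ * τ'| +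
          |a + 2 * τ * σ| * (56 * |kP n τ| ^ 6 * |kP1 n τ * τ'| ^ 2 +
            8 * |kP n τ| ^ 7 * |kP2 n τ * τ' ^ 2 - kP1 n τ * τ|) := by
          simp only [abs_mul (kP1 n τ)]
          simp only [abs_mul _ (kP n τ ^ _), abs_mul _ (|kP1 n τ| * |τ'|), abs_mul _ ((_ : ℝ) - _),
            abs_mul _ ((_ : ℝ) + _), abs_mul, abs_pow]
          norm_num
      _ ≤ 4 * (2 * w * m) * u ^ 8 + 32 * (2 * w * m) * u ^ 7 * (m * (u * (1 + u))) +
          (A + 2 * w * y) * (56 * u ^ 6 * (m * (u * (1 + u))) ^ 2 +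
            8 * u ^ 7 * (m ^ 2 * (u + 4 * (1 + u) * u ^ 2))) := by gcongr
      _ = m * (8 * w * u * u ^ 7) + m ^ 2 * (64 * w * (1 + u) * u * u ^ 7 +
          (A + 2 * w * y) * (u ^ 8 * (56 * (1 + u) ^ 2 + 8 + 32 * (1 + u) * u))) := by ring
      _ ≤ m ^ 2 * (8 * w * u * u ^ 7) + m ^ 2 * (64 * w * (1 + u) * u * u ^ 7 +
          (A + 2 * w * y) * (u ^ 8 * (56 * (1 + u) ^ 2 + 8 + 32 * (1 + u) * u))) := by
          have : m ≤ m ^ 2 := by nlinarith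
          gcongr
      _ = m ^ 2 * ((8 * w * u + 64 * w * (1 + u) * u +
            (56 * (1 + u) ^ 2 + 8 + 32 * (1 + u) * u) * (A * u + 2 * w)) * u ^ 7) := by rw [hEu]; ring
      _ ≤ _ := by gcongr

end

section
open Polynomial

theorem inner_sq_add_le {e P N : E4} (he : ‖e‖ = 1) (hP : ‖P‖ = 1) (hN : ‖N‖ = 1) (hPN : inner ℝ P N = 0) :
    (inner ℝ e P) ^ 2 + (inner ℝ e N) ^ 2 ≤ 1 := by
  have h : 0 ≤ ‖e - (inner ℝ e P : ℝ) • P - (inner ℝ e N : ℝ) • N‖ ^ 2 := sq_nonneg _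
  have hNP : inner ℝ N P = 0 := by rw [real_inner_comm]; exact hPN
  have hee : inner ℝ e e = 1 := by rw [real_inner_self_eq_norm_sq, he]; norm_num
  have hPP : inner ℝ P P = 1 := by rw [real_inner_self_eq_norm_sq, hP]; norm_num
  have hNN : inner ℝ N N = 1 := by rw [real_inner_self_eq_norm_sq, hN]; norm_num
  rw [← real_inner_self_eq_norm_sq] at h
  simp only [inner_sub_left, inner_sub_right, inner_smul_left, inner_smul_right, hPN, hNP, hee, hPP, hNN,
    RCLike.conj_to_real, real_inner_comm e P, real_inner_comm e N] at h
  nlinarith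

theorem inner_perp_le {e V P : E4} (he : ‖e‖ = 1) (hP : ‖P‖ = 1) (hV : inner ℝ e V = 0) :
    |inner ℝ V P| ≤ ‖V‖ * √(1 - (inner ℝ e P) ^ 2) := by
  have hVe : inner ℝ V e = 0 := by rw [real_inner_comm]; exact hV
  have hee : inner ℝ e e = 1 := by rw [real_inner_self_eq_norm_sq, he]; norm_num
  have hPP : inner ℝ P P = 1 := by rw [real_inner_self_eq_norm_sq, hP]; norm_num
  have h1 : inner ℝ V P = inner ℝ V (P - (inner ℝ e P : ℝ) • e) := by
    rw [inner_sub_right, inner_smul_right, hVe]; ring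
  have h2 : ‖P - (inner ℝ e P : ℝ) • e‖ = √(1 - (inner ℝ e P) ^ 2) := by
    rw [← Real.sqrt_sq (norm_nonneg (P - (inner ℝ e P : ℝ) • e)), ← real_inner_self_eq_norm_sq]
    congr 1
    simp only [inner_sub_left, inner_sub_right, inner_smul_left, inner_smul_right, hee, hPP,
      RCLike.conj_to_real, real_inner_comm e P]
    ring
  rw [h1, ← h2]
  exact abs_real_inner_le_norm _ _

theorem sums {ι : Type*} (n : ℕ) (hn : 4 ≤ n) (p V : ι → E4) (a : ι → ℝ) (hp : ∀ j, ‖p j‖ = 1)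
    (hpV : ∀ j, inner ℝ (p j) (V j) = 0) (A w : ℝ) (hA0 : 0 ≤ A) (hA : ∀ j, |a j| ≤ A) (hw0 : 0 ≤ w)
    (hw : ∀ j, ‖V j‖ ≤ w * ((n : ℝ) + 1))
    (s : Finset ι) (ρ u0 S : ℝ) (hρ : 0 < ρ) (hρ5 : ρ ≤ 5) (hu0 : 1 / (ρ - ρ ^ 3 / 150) ≤ u0)
    (hS : (1 + 4 * ρ / (30 / 7)) ^ 3 * (1 / (ρ - ρ ^ 3 / 150)) ^ 7 +
      16 / 15 * (1 + 8 * ρ / (30 / 7)) ^ 3 * (11 / (14 * ρ)) ^ 7 ≤ S)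
    (hsep : ∀ c ∈ s, ∀ d ∈ s, c ≠ d → |inner ℝ (p c) (p d)| ≤ Real.cos (30 / 7 / ((n : ℝ) + 1)))
    (P N : E4) (hP : ‖P‖ = 1) (hN : ‖N‖ = 1) (hPN : inner ℝ P N = 0)
    (hd : ∀ c ∈ s, |inner ℝ (p c) P| ≤ Real.cos (ρ / ((n : ℝ) + 1))) :
    ∑ j ∈ s, |G0 n (a j) (inner ℝ (p j) P) (inner ℝ (V j) P)| ≤ (A * u0 + 2 * w) * S ∧
    ∑ j ∈ s, |G1 n (a j) (inner ℝ (p j) P) (inner ℝ (V j) P) (inner ℝ (p j) N) (inner ℝ (V j) N)| ≤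
      ((n : ℝ) + 1) * ((4 * w * u0 + 8 * (1 + u0) * (A * u0 + 2 * w)) * S) ∧
    ∑ j ∈ s, |G2 n (a j) (inner ℝ (p j) P) (inner ℝ (V j) P) (inner ℝ (p j) N) (inner ℝ (V j) N)| ≤
      ((n : ℝ) + 1) ^ 2 * ((8 * w * u0 + 64 * w * (1 + u0) * u0 +
      (56 * (1 + u0) ^ 2 + 8 + 32 * (1 + u0) * u0) * (A * u0 + 2 * w)) * S) := by
  have hm5 : (5 : ℝ) ≤ (n : ℝ) + 1 := by
    have : (4 : ℝ) ≤ n := by exact_mod_cast hn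
    linarith
  have hm0 : 0 < (n : ℝ) + 1 := by positivity
  have hy0 : 0 < ρ - ρ ^ 3 / 150 := by
    have e1 : ρ ^ 2 ≤ 5 ^ 2 := by gcongr
    have e2 : 0 < ρ * (1 - ρ ^ 2 / 150) := by apply mul_pos hρ; linarith
    nlinarith
  have hpi : (3 : ℝ) / 2 ≤ Real.pi / 2 := by linarith [Real.pi_gt_three]
  have hb : ∀ r : ℝ, r ≤ 5 → r / ((n : ℝ) + 1) ≤ Real.pi / 2 := by
    intro r hr
    refine le_trans ?_ hpi
    rw [div_le_iff₀ hm0]; nlinarith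
  obtain ⟨h1, h2⟩ := sphere_pack P hP p hp s ((n : ℝ) + 1) (30 / 7) ρ hm5 (by norm_num)
    (hb _ (by norm_num)) hρ (hb _ hρ5) hy0 hsep (fun c hc => by rw [real_inner_comm]; exact hd c hc)
  have h2' := h2.trans hS
  have hb := fun j (hj : j ∈ s) => G_bounds n (a := a j) (τ := inner ℝ (p j) P) (σ := inner ℝ (V j) P)
    (τ' := inner ℝ (p j) N) (σ' := inner ℝ (V j) N) (A := A) (w := w) (u0 := u0) (by linarith)
    (inner_sq_add_le (hp j) hP hN hPN) (hA j) rfl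
    (by have := h1 j hj; rw [real_inner_comm] at this; linarith)
    (by
      have := h1 j hj; rw [real_inner_comm] at this
      refine le_trans ?_ hu0
      exact one_div_le_one_div_of_le hy0 this)
    hw0
    (by
      refine (inner_perp_le (hp j) hP (hpV j)).trans ?_
      rw [← mul_assoc]; gcongr; exact hw j)
    (by
      refine (abs_real_inner_le_norm _ _).trans ?_
      rw [hP, mul_one]; exact hw j)
    (by
      refine (abs_real_inner_le_norm _ _).trans ?_
      rw [hN, mul_one]; exact hw j)
  simp only [real_inner_comm _ P] at h2'
  have hu00 : 0 ≤ u0 := le_trans (by positivity) hu0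
  refine ⟨?_, ?_, ?_⟩
  · refine (Finset.sum_le_sum fun j hj => (hb j hj).1).trans ?_
    rw [← Finset.mul_sum]
    gcongr
  · refine (Finset.sum_le_sum fun j hj => (hb j hj).2.1).trans ?_
    rw [← Finset.mul_sum, ← Finset.mul_sum]
    gcongr
  · refine (Finset.sum_le_sum fun j hj => (hb j hj).2.2).trans ?_
    rw [← Finset.mul_sum, ← Finset.mul_sum]
    gcongr

end

section
open Polynomial

/-- projection -/
noncomputable def prj (e v : E4) : E4 := v - (inner ℝ e v : ℝ) • e

theorem prj_perp {e : E4} (he : ‖e‖ = 1) (v : E4) : inner ℝ e (prj e v) = 0 := by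
  rw [prj, inner_sub_right, inner_smul_right, real_inner_self_eq_norm_sq, he]; ring

theorem prj_of_perp {e v : E4} (h : inner ℝ e v = 0) : prj e v = v := by
  rw [prj, h]; simp

theorem prj_inner_of_perp {e v N : E4} (h : inner ℝ e N = 0) : inner ℝ (prj e v) N = inner ℝ v N := by
  rw [prj, inner_sub_left, inner_smul_left, h]; simp

theorem prj_norm_le {e : E4} (he : ‖e‖ = 1) (v : E4) : ‖prj e v‖ ≤ ‖v‖ := by
  apply abs_le_of_sq_le_sq' _ (norm_nonneg _) |>.2
  have hee : inner ℝ e e = 1 := by rw [real_inner_self_eq_norm_sq, he]; norm_num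
  rw [← real_inner_self_eq_norm_sq, ← real_inner_self_eq_norm_sq, prj]
  simp only [inner_sub_left, inner_sub_right, inner_smul_left, inner_smul_right, hee,
      RCLike.conj_to_real, real_inner_comm e v]
  nlinarith [sq_nonneg (inner ℝ e v)]

theorem prj_add (e v v' : E4) : prj e (v + v') = prj e v + prj e v' := by
  simp only [prj, inner_add_right]; module
theorem prj_smul (e v : E4) (c : ℝ) : prj e (c • v) = c • prj e v := by
  simp only [prj, inner_smul_right]; module

theorem norm_le_of_inner {e X : E4} {B : ℝ} (hB : 0 ≤ B) (hX : inner ℝ e X = 0)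
    (h : ∀ N : E4, ‖N‖ = 1 → inner ℝ e N = 0 → |inner ℝ X N| ≤ B) : ‖X‖ ≤ B := by
  by_cases h0 : X = 0
  · rw [h0]; simpa using hB
  have hn : 0 < ‖X‖ := norm_pos_iff.2 h0
  have := h (‖X‖⁻¹ • X) (by rw [norm_smul, norm_inv, norm_norm, inv_mul_cancel₀ hn.ne'])
    (by rw [inner_smul_right, hX, mul_zero])
  rw [inner_smul_right, real_inner_self_eq_norm_sq] at this
  have e : ‖X‖⁻¹ * ‖X‖ ^ 2 = ‖X‖ := by field_simp
  rw [e] at this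
  exact (le_abs_self _).trans this

/-- gradient vector -/
noncomputable def GV (n : ℕ) (a : ℝ) (P e V : E4) : E4 :=
  (2 * inner ℝ V P * kP n (inner ℝ e P) ^ 8 +
    8 * (a + 2 * inner ℝ e P * inner ℝ V P) * kP n (inner ℝ e P) ^ 7 * kP1 n (inner ℝ e P)) • e +
  (2 * inner ℝ e P * kP n (inner ℝ e P) ^ 8) • V

theorem GV_inner (n : ℕ) (a : ℝ) (P e V N : E4) :
    inner ℝ (GV n a P e V) N = G1 n a (inner ℝ e P) (inner ℝ V P) (inner ℝ e N) (inner ℝ V N) := by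
  simp only [GV, G1, inner_add_left, inner_smul_left, RCLike.conj_to_real]; ring

noncomputable def Tij (n : ℕ) (P e : E4) : (ℝ × E4) →ₗ[ℝ] (ℝ × E4) where
  toFun x := (G0 n x.1 (inner ℝ e P) (inner ℝ (prj e x.2) P), (1 / 2 : ℝ) • prj P (GV n x.1 P e (prj e x.2)))
  map_add' x y := by
    ext1
    · simp only [G0, Prod.fst_add, Prod.snd_add, prj_add, inner_add_left]; ring
    · simp only [GV, Prod.fst_add, Prod.snd_add, prj_add, inner_add_left, prj_smul]; module
  map_smul' c x := by
    ext1
    · simp only [G0, Prod.smul_fst, Prod.smul_snd, prj_smul, inner_smul_left, smul_eq_mul,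
        RCLike.conj_to_real, RingHom.id_apply]; ring
    · simp only [GV, Prod.smul_fst, Prod.smul_snd, prj_add, prj_smul, inner_smul_left, smul_eq_mul,
        RCLike.conj_to_real, RingHom.id_apply]; module

noncomputable def Lop {M : ℕ} (n : ℕ) (p : Fin M → E4) : (Fin M → ℝ × E4) →ₗ[ℝ] (Fin M → ℝ × E4) :=
  LinearMap.pi fun i => LinearMap.proj i +
    ∑ j ∈ Finset.univ.erase i, (Tij n (p i) (p j)).comp (LinearMap.proj j)

theorem prj_sum {ι : Type*} (e : E4) (s : Finset ι) (f : ι → E4) :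
    prj e (∑ j ∈ s, f j) = ∑ j ∈ s, prj e (f j) := by
  classical
  induction s using Finset.induction_on with
  | empty => simp [prj]
  | insert a s ha ih => rw [Finset.sum_insert ha, Finset.sum_insert ha, prj_add, ih]

theorem apriori {M : ℕ} (n : ℕ) (hn : 4 ≤ n) (p : Fin M → E4) (hp : ∀ j, ‖p j‖ = 1)
    (hsep : ∀ i j, i ≠ j → |inner ℝ (p i) (p j)| ≤ Real.cos (30 / 7 / ((n : ℝ) + 1)))
    (x : Fin M → ℝ × E4) (s : Fin M → ℝ) (S0 : ℝ) (hS0 : 0 ≤ S0) (hs : ∀ i, |s i| ≤ S0)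
    (hx : Lop n p x = fun i => (s i, 0)) :
    (∀ i, |(x i).1| ≤ 1.006 * S0) ∧ (∀ i, ‖(x i).2‖ ≤ 0.0286 * S0 * ((n : ℝ) + 1)) ∧
    (∀ i, inner ℝ (p i) (x i).2 = 0) := by
  have hx' : ∀ i, x i + ∑ j ∈ Finset.univ.erase i, Tij n (p i) (p j) (x j) = (s i, 0) := by
    intro i
    have := congrFun hx i
    simpa [Lop] using this
  have hm0 : 0 < (n : ℝ) + 1 := by positivity
  have h1 : ∀ i, (x i).1 = s i - ∑ j ∈ Finset.univ.erase i,
      G0 n (x j).1 (inner ℝ (p j) (p i)) (inner ℝ (prj (p j) (x j).2) (p i)) := by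
    intro i
    have := congrArg Prod.fst (hx' i)
    simp only [Prod.fst_add, Prod.fst_sum, Tij, LinearMap.coe_mk, AddHom.coe_mk] at this
    linarith
  have h2 : ∀ i, (x i).2 = - ∑ j ∈ Finset.univ.erase i,
      (1 / 2 : ℝ) • prj (p i) (GV n (x j).1 (p i) (p j) (prj (p j) (x j).2)) := by
    intro i
    have := congrArg Prod.snd (hx' i)
    simp only [Prod.snd_add, Prod.snd_sum, Tij, LinearMap.coe_mk, AddHom.coe_mk] at this
    exact eq_neg_of_add_eq_zero_left this
  have hperp : ∀ i, inner ℝ (p i) (x i).2 = 0 := by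
    intro i
    rw [h2 i, inner_neg_right, inner_sum]
    simp [inner_smul_right, prj_perp (hp i)]
  have hprj : ∀ i, prj (p i) (x i).2 = (x i).2 := fun i => prj_of_perp (hperp i)
  simp only [hprj] at h1 h2
  set A := ‖fun i => (x i).1‖ with hA
  set w := ‖fun i => (x i).2‖ / ((n : ℝ) + 1) with hw
  have hA0 : 0 ≤ A := norm_nonneg _
  have hw0 : 0 ≤ w := div_nonneg (norm_nonneg _) hm0.le
  have hAi : ∀ i, |(x i).1| ≤ A := fun i => norm_le_pi_norm (fun i => (x i).1) i
  have hwi : ∀ i, ‖(x i).2‖ ≤ w * ((n : ℝ) + 1) := by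
    intro i
    rw [hw, div_mul_cancel₀ _ hm0.ne']
    exact norm_le_pi_norm (fun i => (x i).2) i
  have key := fun i N hN hPN => sums n hn p (fun j => (x j).2) (fun j => (x j).1) hp hperp A w hA0 hAi hw0 hwi
    (Finset.univ.erase i) (30 / 7) 0.266 0.0172 (by norm_num) (by norm_num) (by norm_num) (by norm_num)
    (fun c _ d _ hcd => hsep c d hcd) (p i) N (hp i) hN hPN
    (fun c hc => hsep c i (Finset.ne_of_mem_erase hc))
  have hx1 : ∀ N : E4, ∃ N' : E4, ‖N'‖ = 1 ∧ inner ℝ N N' = 0 := by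
    intro N
    have : 0 < Module.finrank ℝ (ℝ ∙ N)ᗮ := by
      have := Submodule.finrank_add_finrank_orthogonal (ℝ ∙ N)
      have h4 : Module.finrank ℝ E4 = 4 := by simp
      have h5 : Module.finrank ℝ (ℝ ∙ N) ≤ 1 := by
        have := finrank_span_finset_le_card (R := ℝ) ({N} : Finset E4)
        rw [Finset.coe_singleton] at this
        simpa [Set.finrank] using this
      omega
    have : Nontrivial (ℝ ∙ N)ᗮ := Module.finrank_pos_iff.1 this
    obtain ⟨v, hv⟩ := exists_ne (0 : (ℝ ∙ N)ᗮ)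
    have hv' : (v : E4) ≠ 0 := fun h => hv (Subtype.ext h)
    have hvn : 0 < ‖(v : E4)‖ := norm_pos_iff.2 hv'
    refine ⟨‖(v : E4)‖⁻¹ • (v : E4), ?_, ?_⟩
    · rw [norm_smul, norm_inv, norm_norm, inv_mul_cancel₀ hvn.ne']
    · rw [inner_smul_right, Submodule.mem_orthogonal_singleton_iff_inner_right.1 v.2, mul_zero]
  have hAle : A ≤ S0 + (A * 0.266 + 2 * w) * 0.0172 := by
    refine (pi_norm_le_iff_of_nonneg (by positivity)).2 ?_
    intro i
    obtain ⟨N, hN, hPN⟩ := hx1 (p i)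
    have := (key i N hN hPN).1
    rw [Real.norm_eq_abs, h1 i]
    refine (abs_sub _ _).trans (add_le_add (hs i) ?_)
    exact (Finset.abs_sum_le_sum_abs _ _).trans this
  have hwle : w ≤ 1 / 2 * ((4 * w * 0.266 + 8 * (1 + 0.266) * (A * 0.266 + 2 * w)) * 0.0172) := by
    rw [hw, div_le_iff₀ hm0, ← hw]
    refine (pi_norm_le_iff_of_nonneg (by positivity)).2 ?_
    intro i
    refine norm_le_of_inner (by positivity) (hperp i) ?_
    intro N hN hPN
    have := (key i N hN hPN).2.1
    rw [h2 i, inner_neg_left, abs_neg, sum_inner]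
    simp only [inner_smul_left, prj_inner_of_perp hPN, GV_inner, RCLike.conj_to_real]
    rw [← Finset.mul_sum, abs_mul]
    have h3 := (Finset.abs_sum_le_sum_abs _ _).trans this
    rw [show |(1:ℝ)/2| = 1 / 2 by norm_num]
    linarith
  have hA2 : A ≤ 1.006 * S0 := by norm_num at hAle hwle ⊢; linarith
  have hw2 : w ≤ 0.0286 * S0 := by norm_num at hAle hwle ⊢; linarith
  refine ⟨fun i => (hAi i).trans hA2, fun i => (hwi i).trans ?_, hperp⟩
  gcongr

theorem interp {M : ℕ} (n : ℕ) (hn : 4 ≤ n) (p : Fin M → E4) (hp : ∀ j, ‖p j‖ = 1)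
    (hsep : ∀ i j, i ≠ j → |inner ℝ (p i) (p j)| ≤ Real.cos (30 / 7 / ((n : ℝ) + 1)))
    (s : Fin M → ℝ) (hs : ∀ i, |s i| ≤ 1) :
    ∃ (a : Fin M → ℝ) (V : Fin M → E4), (∀ i, |a i| ≤ 1.006) ∧ (∀ i, ‖V i‖ ≤ 0.0286 * ((n : ℝ) + 1)) ∧
      (∀ i, inner ℝ (p i) (V i) = 0) ∧
      (∀ i, a i + ∑ j ∈ Finset.univ.erase i, G0 n (a j) (inner ℝ (p j) (p i)) (inner ℝ (V j) (p i)) = s i) ∧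
      (∀ i, ∀ N : E4, inner ℝ (p i) N = 0 → 2 * inner ℝ (V i) N +
        ∑ j ∈ Finset.univ.erase i, G1 n (a j) (inner ℝ (p j) (p i)) (inner ℝ (V j) (p i))
          (inner ℝ (p j) N) (inner ℝ (V j) N) = 0) := by
  have hinj : Function.Injective (Lop n p) := by
    rw [injective_iff_map_eq_zero]
    intro x hx
    obtain ⟨h1, h2, -⟩ := apriori n hn p hp hsep x (fun _ => 0) 0 le_rfl (by simp) (by rw [hx]; rfl)
    ext1 i
    have e1 := h1 i
    have e2 := h2 i
    simp at e1 e2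
    exact Prod.ext e1 e2
  obtain ⟨x, hx⟩ := (LinearMap.injective_iff_surjective.1 hinj) (fun i => (s i, 0))
  obtain ⟨h1, h2, h3⟩ := apriori n hn p hp hsep x s 1 zero_le_one hs hx
  have hprj : ∀ i, prj (p i) (x i).2 = (x i).2 := fun i => prj_of_perp (h3 i)
  have hx' : ∀ i, x i + ∑ j ∈ Finset.univ.erase i, Tij n (p i) (p j) (x j) = (s i, 0) := by
    intro i
    have := congrFun hx i
    simpa [Lop] using this
  refine ⟨fun i => (x i).1, fun i => (x i).2, by simpa using h1, by simpa using h2, h3, ?_, ?_⟩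
  · intro i
    have := congrArg Prod.fst (hx' i)
    simpa only [Prod.fst_add, Prod.fst_sum, Tij, LinearMap.coe_mk, AddHom.coe_mk, hprj] using this
  · intro i N hN
    have := congrArg Prod.snd (hx' i)
    simp only [Prod.snd_add, Prod.snd_sum, Tij, LinearMap.coe_mk, AddHom.coe_mk, hprj] at this
    have := congrArg (fun v => inner ℝ v N) this
    simp only [inner_add_left, sum_inner, inner_smul_left, prj_inner_of_perp hN, GV_inner,
      RCLike.conj_to_real, inner_zero_left] at this
    rw [← Finset.mul_sum] at this
    linarith

end

section
open Polynomial

theorem taylor2 {f f' f'' : ℝ → ℝ} {K T : ℝ} (hf : ∀ t, HasDerivAt f (f' t) t)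
    (hf' : ∀ t, HasDerivAt f' (f'' t) t) (hT : 0 ≤ T) (hK : ∀ t, 0 ≤ t → t ≤ T → |f'' t| ≤ K) :
    |f T - f 0 - f' 0 * T| ≤ K / 2 * T ^ 2 := by
  have key : ∀ (g g' g'' : ℝ → ℝ), (∀ t, HasDerivAt g (g' t) t) → (∀ t, HasDerivAt g' (g'' t) t) →
      (∀ t, 0 ≤ t → t ≤ T → g'' t ≤ K) → g T - g 0 - g' 0 * T ≤ K / 2 * T ^ 2 := by
    intro g g' g'' hg hg' hb
    have h1 : ∀ t, 0 ≤ t → t ≤ T → g' t - g' 0 - K * t ≤ 0 := by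
      have hd : ∀ t, HasDerivAt (fun t => g' t - g' 0 - K * t) (g'' t - K) t := by
        intro t
        have := ((hg' t).sub_const (g' 0)).sub ((hasDerivAt_id t).const_mul K)
        exact HasDerivAt.congr_deriv (f := fun t => g' t - g' 0 - K * t) this (by simp)
      have hanti : AntitoneOn (fun t => g' t - g' 0 - K * t) (Set.Icc 0 T) := by
        apply antitoneOn_of_deriv_nonpos (convex_Icc _ _)
        · exact fun t _ => (hd t).continuousAt.continuousWithinAt
        · exact fun t _ => (hd t).differentiableAt.differentiableWithinAt
        · intro t ht
          rw [interior_Icc] at ht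
          rw [(hd t).deriv]
          linarith [hb t ht.1.le ht.2.le]
      intro t ht ht'
      have := hanti ⟨le_rfl, hT⟩ ⟨ht, ht'⟩ ht
      simpa using this
    have hd : ∀ t, HasDerivAt (fun t => g t - g 0 - g' 0 * t - K / 2 * t ^ 2) (g' t - g' 0 - K * t) t := by
      intro t
      have := (((hg t).sub_const (g 0)).sub ((hasDerivAt_id t).const_mul (g' 0))).sub
        (((hasDerivAt_id t).pow 2).const_mul (K / 2))
      exact HasDerivAt.congr_deriv (f := fun t => g t - g 0 - g' 0 * t - K / 2 * t ^ 2) this (by simp; ring)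
    have hanti : AntitoneOn (fun t => g t - g 0 - g' 0 * t - K / 2 * t ^ 2) (Set.Icc 0 T) := by
      apply antitoneOn_of_deriv_nonpos (convex_Icc _ _)
      · exact fun t _ => (hd t).continuousAt.continuousWithinAt
      · exact fun t _ => (hd t).differentiableAt.differentiableWithinAt
      · intro t ht
        rw [interior_Icc] at ht
        rw [(hd t).deriv]
        exact h1 t ht.1.le ht.2.le
    have := hanti ⟨le_rfl, hT⟩ ⟨hT, le_rfl⟩ hT
    simp at this
    linarith
  have h1 := key f f' f'' hf hf' (fun t h0 h1 => (le_abs_self _).trans (hK t h0 h1))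
  have h2 := key (fun t => - f t) (fun t => - f' t) (fun t => - f'' t) (fun t => (hf t).neg)
    (fun t => (hf' t).neg) (fun t h0 h1 => (neg_le_abs _).trans (hK t h0 h1))
  rw [abs_le]; constructor <;> linarith

theorem line_triangle {P e f : E4} (hP : ‖P‖ = 1) (he : ‖e‖ = 1) (hf : ‖f‖ = 1) :
    Real.arccos |inner ℝ e f| ≤ Real.arccos |inner ℝ e P| + Real.arccos |inner ℝ f P| := by
  have sgn : ∀ e : E4, ‖e‖ = 1 → ∃ e' : E4, (e' = e ∨ e' = -e) ∧ ‖e'‖ = 1 ∧ inner ℝ e' P = |inner ℝ e P| := by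
    intro e he
    rcases abs_choice (inner ℝ e P) with h | h
    · exact ⟨e, Or.inl rfl, he, h.symm⟩
    · exact ⟨-e, Or.inr rfl, by rw [norm_neg, he], by rw [inner_neg_left, h]⟩
  obtain ⟨e', h1, h2, h3⟩ := sgn e he
  obtain ⟨f', h4, h5, h6⟩ := sgn f hf
  have := InnerProductGeometry.angle_le_angle_add_angle e' P f'
  simp only [InnerProductGeometry.angle, h2, h5, hP, mul_one, div_one, h3] at this
  rw [real_inner_comm f' P, h6] at this
  refine le_trans (Real.antitone_arccos ?_) this
  rcases h1 with h | h <;> rcases h4 with h' | h' <;> rw [h, h'] <;> simp [le_abs_self, neg_le_abs]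

theorem abs_le_cos_of {x r : ℝ} (hx : |x| ≤ 1) (hr : 0 ≤ r) (h : r ≤ Real.arccos |x|) : |x| ≤ Real.cos r := by
  have h2 : Real.arccos |x| ≤ Real.pi := Real.arccos_le_pi _
  have := Real.cos_le_cos_of_nonneg_of_le_pi hr h2 h
  rwa [Real.cos_arccos (by linarith [abs_nonneg x]) hx] at this

theorem le_arccos_of {x r : ℝ} (hr : 0 ≤ r) (hr1 : r ≤ Real.pi) (h : |x| ≤ Real.cos r) : r ≤ Real.arccos |x| := by
  have := Real.antitone_arccos h
  rwa [Real.arccos_cos hr hr1] at this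

theorem abs_inner_le_one {e P : E4} (he : ‖e‖ = 1) (hP : ‖P‖ = 1) : |inner ℝ e P| ≤ 1 := by
  have := abs_real_inner_le_norm e P
  rwa [he, hP, mul_one] at this

theorem G0_neg (n : ℕ) (a τ σ : ℝ) : G0 n a (-τ) (-σ) = G0 n a τ σ := by
  have : kP n (-τ) ^ 8 = kP n τ ^ 8 := by
    rw [← Even.pow_abs (by decide), kP_neg_abs, Even.pow_abs (by decide)]
  simp only [G0, this]; ring

theorem kP_one (n : ℕ) : kP n 1 = 1 := by
  rw [kP_eq, Chebyshev.U_eval_one]; push_cast; field_simp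

theorem phi_upper {x P : ℝ} (hx0 : 0 ≤ x) (hx : x ≤ 0.36) (hP0 : 0 ≤ P)
    (h : P * (1 - x / 150) ≤ 1 - x / 6 + x ^ 2 / 120) : P ^ 8 ≤ 1 - 0.9 * x := by
  norm_num at hx ⊢
  have h1 : P ≤ 1 - 3 / 20 * x := by
    have hpos : 0 < 1 - x / 150 := by linarith
    have : P * (1 - x / 150) ≤ (1 - 3 / 20 * x) * (1 - x / 150) := by nlinarith
    exact le_of_mul_le_mul_right this hpos
  have h2 : P ^ 2 ≤ 1 - 0.29 * x := by nlinarith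
  have h3 : (P ^ 2) ^ 2 ≤ 1 - 0.53 * x := by
    have := pow_le_pow_left₀ (sq_nonneg P) h2 2
    norm_num at this ⊢; nlinarith
  have h4 : ((P ^ 2) ^ 2) ^ 2 ≤ 1 - 0.9 * x := by
    have := pow_le_pow_left₀ (sq_nonneg (P ^ 2)) h3 2
    norm_num at this ⊢; nlinarith
  norm_num at h4 ⊢
  calc P ^ 8 = ((P ^ 2) ^ 2) ^ 2 := by ring
    _ ≤ _ := h4

set_option maxHeartbeats 1600000 in
theorem near_bound {M : ℕ} (n : ℕ) (hn : 4 ≤ n) (p : Fin M → E4) (hp : ∀ j, ‖p j‖ = 1)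
    (hsep : ∀ i j, i ≠ j → |inner ℝ (p i) (p j)| ≤ Real.cos (30 / 7 / ((n : ℝ) + 1)))
    (s : Fin M → ℝ) (hs : ∀ i, s i = 1 ∨ s i = -1) (a : Fin M → ℝ) (V : Fin M → E4)
    (ha : ∀ i, |a i| ≤ 1.006) (hV : ∀ i, ‖V i‖ ≤ 0.0286 * ((n : ℝ) + 1))
    (hpV : ∀ i, inner ℝ (p i) (V i) = 0)
    (h1 : ∀ i, a i + ∑ j ∈ Finset.univ.erase i, G0 n (a j) (inner ℝ (p j) (p i)) (inner ℝ (V j) (p i)) = s i)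
    (h2 : ∀ i, ∀ N : E4, inner ℝ (p i) N = 0 → 2 * inner ℝ (V i) N +
        ∑ j ∈ Finset.univ.erase i, G1 n (a j) (inner ℝ (p j) (p i)) (inner ℝ (V j) (p i))
          (inner ℝ (p j) N) (inner ℝ (V j) N) = 0)
    (i : Fin M) (N : E4) (hN : ‖N‖ = 1) (hpN : inner ℝ (p i) N = 0) (θ : ℝ) (hθ0 : 0 < θ)
    (hθ : ((n : ℝ) + 1) * θ ≤ 0.6) :
    |∑ j, G0 n (a j) (inner ℝ (p j) (Real.cos θ • p i + Real.sin θ • N))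
      (inner ℝ (V j) (Real.cos θ • p i + Real.sin θ • N))| < 1 := by
  have hm5 : (5 : ℝ) ≤ (n : ℝ) + 1 := by
    have : (4 : ℝ) ≤ n := by exact_mod_cast hn
    linarith
  set m : ℝ := (n : ℝ) + 1 with hm
  have hm0 : 0 < m := by positivity
  have hNp : inner ℝ N (p i) = 0 := by rw [real_inner_comm]; exact hpN
  have hpp : inner ℝ (p i) (p i) = 1 := by rw [real_inner_self_eq_norm_sq, hp]; norm_num
  have hNN : inner ℝ N N = 1 := by rw [real_inner_self_eq_norm_sq, hN]; norm_num
  have hθ1 : θ ≤ 0.12 := by norm_num at hθ ⊢; nlinarith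
  -- circle
  have hPt : ∀ t, ‖Real.cos t • p i + Real.sin t • N‖ = 1 := by
    intro t
    rw [← sq_eq_sq₀ (norm_nonneg _) zero_le_one, ← real_inner_self_eq_norm_sq]
    simp only [inner_add_left, inner_add_right, inner_smul_left, inner_smul_right, hpN, hNp, hpp, hNN,
      RCLike.conj_to_real]
    nlinarith [Real.sin_sq_add_cos_sq t]
  have hNt : ∀ t, ‖(-Real.sin t) • p i + Real.cos t • N‖ = 1 := by
    intro t
    rw [← sq_eq_sq₀ (norm_nonneg _) zero_le_one, ← real_inner_self_eq_norm_sq]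
    simp only [inner_add_left, inner_add_right, inner_smul_left, inner_smul_right, hpN, hNp, hpp, hNN,
      RCLike.conj_to_real]
    nlinarith [Real.sin_sq_add_cos_sq t]
  have hPN : ∀ t, inner ℝ (Real.cos t • p i + Real.sin t • N) ((-Real.sin t) • p i + Real.cos t • N) = 0 := by
    intro t
    simp only [inner_add_left, inner_add_right, inner_smul_left, inner_smul_right, hpN, hNp, hpp, hNN,
      RCLike.conj_to_real]
    ring
  have hw' : ∀ i, ‖V i‖ ≤ 0.0286 * ((n : ℝ) + 1) := hV
  let h : ℝ → ℝ := fun t => ∑ j ∈ Finset.univ.erase i, G0 n (a j)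
    (Real.cos t * inner ℝ (p j) (p i) + Real.sin t * inner ℝ (p j) N)
    (Real.cos t * inner ℝ (V j) (p i) + Real.sin t * inner ℝ (V j) N)
  let h' : ℝ → ℝ := fun t => ∑ j ∈ Finset.univ.erase i, G1 n (a j)
    (Real.cos t * inner ℝ (p j) (p i) + Real.sin t * inner ℝ (p j) N)
    (Real.cos t * inner ℝ (V j) (p i) + Real.sin t * inner ℝ (V j) N)
    (-Real.sin t * inner ℝ (p j) (p i) + Real.cos t * inner ℝ (p j) N)
    (-Real.sin t * inner ℝ (V j) (p i) + Real.cos t * inner ℝ (V j) N)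
  let h'' : ℝ → ℝ := fun t => ∑ j ∈ Finset.univ.erase i, G2 n (a j)
    (Real.cos t * inner ℝ (p j) (p i) + Real.sin t * inner ℝ (p j) N)
    (Real.cos t * inner ℝ (V j) (p i) + Real.sin t * inner ℝ (V j) N)
    (-Real.sin t * inner ℝ (p j) (p i) + Real.cos t * inner ℝ (p j) N)
    (-Real.sin t * inner ℝ (V j) (p i) + Real.cos t * inner ℝ (V j) N)
  have hd1 : ∀ t, HasDerivAt h (h' t) t := by
    intro t
    exact HasDerivAt.fun_sum fun j _ => G0_hasDeriv n (a j) _ _ _ _ t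
  have hd2 : ∀ t, HasDerivAt h' (h'' t) t := by
    intro t
    exact HasDerivAt.fun_sum fun j _ => G1_hasDeriv n (a j) _ _ _ _ t
  have hb2 : ∀ t, 0 ≤ t → t ≤ θ → |h'' t| ≤ m ^ 2 * 1.21 := by
    intro t ht0 ht
    have hk := (sums n hn p V a hp hpV 1.006 0.0286 (by norm_num) ha (by norm_num) hV
      (Finset.univ.erase i) (129 / 35) 0.2984 0.0289 (by norm_num) (by norm_num) (by norm_num) (by norm_num)
      (fun c _ d _ hcd => hsep c d hcd) _ _ (hPt t) (hNt t) (hPN t) ?_).2.2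
    · refine (Finset.abs_sum_le_sum_abs _ _).trans ?_
      simp only [inner_add_right, inner_smul_right] at hk
      refine hk.trans ?_
      rw [← hm]
      gcongr
      norm_num
    · intro c hc
      have hci := hsep c i (Finset.ne_of_mem_erase hc)
      have hT := line_triangle (hPt t) (hp c) (hp i)
      have e1 : Real.arccos |inner ℝ (p i) (Real.cos t • p i + Real.sin t • N)| = t := by
        rw [inner_add_right, inner_smul_right, inner_smul_right, hpp, hpN]
        have htp : t ≤ Real.pi / 2 := by
          have := Real.pi_gt_three
          norm_num at hθ1; linarith
        rw [mul_one, mul_zero, add_zero, abs_of_nonneg (Real.cos_nonneg_of_neg_pi_div_two_le_of_le (by linarith [Real.pi_pos]) htp),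
          Real.arccos_cos ht0 (by linarith [Real.pi_pos])]
      have e2 := le_arccos_of (by positivity) (by
        have := Real.pi_gt_three
        rw [div_le_iff₀ hm0]; nlinarith) hci
      refine abs_le_cos_of (abs_inner_le_one (hp c) (hPt t)) (by positivity) ?_
      rw [e1] at hT
      have e3 : t ≤ 0.6 / m := by rw [le_div_iff₀ hm0]; nlinarith
      have e4 : 129 / 35 / m = 30 / 7 / m - 0.6 / m := by field_simp; norm_num
      rw [← hm, e4]; linarith
  have hTay := taylor2 hd1 hd2 hθ0.le hb2
  -- values at zero
  have e0 : h 0 = s i - a i := by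
    have := h1 i
    simp only [h, Real.cos_zero, Real.sin_zero, one_mul, zero_mul, add_zero]
    linarith
  have e0' : h' 0 = - (2 * inner ℝ (V i) N) := by
    have := h2 i N hpN
    simp only [h', Real.cos_zero, Real.sin_zero, one_mul, zero_mul, add_zero, neg_zero, zero_add]
    linarith
  have hb0 : |h 0| ≤ 0.0056 := by
    have hk := (sums n hn p V a hp hpV 1.006 0.0286 (by norm_num) ha (by norm_num) hV
      (Finset.univ.erase i) (30 / 7) 0.266 0.0172 (by norm_num) (by norm_num) (by norm_num) (by norm_num)
      (fun c _ d _ hcd => hsep c d hcd) _ _ (hp i) hN hpN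
      (fun c hc => hsep c i (Finset.ne_of_mem_erase hc))).1
    refine (Finset.abs_sum_le_sum_abs _ _).trans ?_
    simp only [Real.cos_zero, Real.sin_zero, one_mul, zero_mul, add_zero]
    refine hk.trans ?_
    norm_num
  have hb0' : |h' 0| ≤ 0.0572 * m := by
    rw [e0', abs_neg, abs_mul]
    have := abs_real_inner_le_norm (V i) N
    rw [hN, mul_one] at this
    have := this.trans (hV i)
    norm_num at this ⊢; linarith
  -- phi
  set Y := m * θ with hY
  have hY0 : 0 < Y := by positivity
  set φ := kP n (Real.cos θ) ^ 8 with hφ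
  have hlow := kP_near_lower n hθ0 (by have := Real.pi_gt_three; norm_num at hθ1; linarith)
    (by rw [← hm, ← hY]; norm_num at hθ; linarith)
  have hup := kP_near_upper n hn hθ0 (by rw [← hm, ← hY]; norm_num at hθ; linarith)
  rw [← hm, ← hY] at hlow hup
  have hx36 : Y ^ 2 ≤ 0.36 := by
    have := pow_le_pow_left₀ hY0.le hθ 2
    norm_num at this ⊢; linarith
  have hk0 : 0 ≤ kP n (Real.cos θ) := by norm_num at hx36; linarith
  have hφup : φ ≤ 1 - 0.9 * Y ^ 2 := phi_upper (sq_nonneg Y) hx36 hk0 (by rw [← pow_mul]; exact hup)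
  have hφlow : 1 - 4 / 3 * Y ^ 2 ≤ φ := by
    have := one_add_mul_le_pow (a := kP n (Real.cos θ) - 1) (by linarith) 8
    rw [add_sub_cancel] at this
    push_cast at this
    linarith
  -- theta - sin cos phi
  have hsc0 : 0 ≤ θ - Real.sin θ * Real.cos θ * φ := by
    have a1 := Real.sin_le hθ0.le
    have a2 := Real.cos_le_one θ
    have a3 : 0 ≤ Real.sin θ := Real.sin_nonneg_of_nonneg_of_le_pi hθ0.le (by have := Real.pi_gt_three; norm_num at hθ1; linarith)
    have a4 : φ ≤ 1 := by norm_num at hφup; nlinarith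
    have a5 : 0 ≤ Real.cos θ := Real.cos_nonneg_of_neg_pi_div_two_le_of_le (by linarith [Real.pi_pos])
      (by have := Real.pi_gt_three; norm_num at hθ1; linarith)
    have a6 : 0 ≤ φ := by positivity
    have : Real.sin θ * Real.cos θ * φ ≤ θ * 1 * 1 := by gcongr
    linarith
  have hsc1 : θ - Real.sin θ * Real.cos θ * φ ≤ θ * (1.37 * Y ^ 2) := by
    have b1 : Real.sin θ * Real.cos θ = Real.sin (2 * θ) / 2 := by rw [Real.sin_two_mul]; ring
    have b2 := Real.sin_ge_sub_cube (x := 2 * θ) (by linarith)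
    have b3 : θ ^ 2 ≤ Y ^ 2 / 25 := by
      have : θ ≤ Y / 5 := by rw [hY]; nlinarith
      calc θ ^ 2 ≤ (Y / 5) ^ 2 := by gcongr
        _ = _ := by ring
    have b4 : θ * (1 - 2 / 75 * Y ^ 2) ≤ Real.sin θ * Real.cos θ := by
      rw [b1]
      have : θ * θ ^ 2 ≤ θ * (Y ^ 2 / 25) := by gcongr
      nlinarith
    have b5 : θ * (1 - 2 / 75 * Y ^ 2) * (1 - 4 / 3 * Y ^ 2) ≤ Real.sin θ * Real.cos θ * φ := by
      have c1 : 0 ≤ 1 - 4 / 3 * Y ^ 2 := by norm_num at hx36; linarith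
      have c2 : 0 ≤ θ * (1 - 2 / 75 * Y ^ 2) := by apply mul_nonneg hθ0.le; norm_num at hx36; linarith
      exact mul_le_mul b4 hφlow c1 (c2.trans b4)
    have b6 : 0 ≤ θ * (Y ^ 2 * Y ^ 2) := by positivity
    have b7 : 0 ≤ θ * Y ^ 2 := by positivity
    norm_num; nlinarith
  have hR3 : |h' 0 * (θ - Real.sin θ * Real.cos θ * φ)| ≤ 0.048 * Y ^ 2 := by
    rw [abs_mul, abs_of_nonneg hsc0]
    calc _ ≤ 0.0572 * m * (θ * (1.37 * Y ^ 2)) := by gcongr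
      _ = 0.0572 * 1.37 * Y * Y ^ 2 := by rw [hY]; ring
      _ ≤ 0.0572 * 1.37 * 0.6 * Y ^ 2 := by gcongr
      _ ≤ _ := by gcongr; norm_num
  have hR2 : |h 0 * (1 - φ)| ≤ 0.0056 * (4 / 3 * Y ^ 2) := by
    rw [abs_mul]
    gcongr
    rw [abs_le]; constructor
    · norm_num at hφup; nlinarith
    · linarith
  have hsplit : ∑ j, G0 n (a j) (inner ℝ (p j) (Real.cos θ • p i + Real.sin θ • N))
      (inner ℝ (V j) (Real.cos θ • p i + Real.sin θ • N)) = s i * φ +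
      ((h θ - h 0 - h' 0 * θ) + h 0 * (1 - φ) + h' 0 * (θ - Real.sin θ * Real.cos θ * φ)) := by
    rw [← Finset.add_sum_erase _ _ (Finset.mem_univ i)]
    have hVp : inner ℝ (V i) (p i) = 0 := by rw [real_inner_comm]; exact hpV i
    have : ∑ j ∈ Finset.univ.erase i, G0 n (a j) (inner ℝ (p j) (Real.cos θ • p i + Real.sin θ • N))
      (inner ℝ (V j) (Real.cos θ • p i + Real.sin θ • N)) = h θ := by
      simp only [h, inner_add_right, inner_smul_right]
    rw [this]
    simp only [inner_add_right, inner_smul_right, hpp, hpN, hVp, mul_one, mul_zero, add_zero, zero_add, G0]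
    rw [← hφ]
    have f1 : a i = s i - h 0 := by rw [e0]; ring
    have f2 : inner ℝ (V i) N = - h' 0 / 2 := by rw [e0']; ring
    rw [f1, f2]; ring
  rw [hsplit]
  have hR1 : |h θ - h 0 - h' 0 * θ| ≤ 0.605 * Y ^ 2 := by
    refine hTay.trans (le_of_eq ?_)
    rw [hY]; ring
  set R := ((h θ - h 0 - h' 0 * θ) + h 0 * (1 - φ) + h' 0 * (θ - Real.sin θ * Real.cos θ * φ)) with hR
  have hRb : |R| ≤ 0.7 * Y ^ 2 := by
    refine (abs_add_three _ _ _).trans ?_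
    norm_num at hR1 hR2 hR3 ⊢
    nlinarith
  have hφ0 : 0 ≤ φ := by positivity
  calc |s i * φ + R| ≤ |s i * φ| + |R| := abs_add_le _ _
    _ = φ + |R| := by
      rw [abs_mul, abs_of_nonneg hφ0]
      rcases hs i with h | h <;> rw [h] <;> simp
    _ < 1 := by
      have : 0 < Y ^ 2 := by positivity
      norm_num at hφup hRb; nlinarith

end

section
open Polynomial

theorem pow8_mid {x P : ℝ} (hx0 : 0.36 ≤ x) (hx : x ≤ 1.21) (hP0 : 0 ≤ P)
    (h : P * (1 - x / 150) ≤ 1 - x / 6 + x ^ 2 / 120) : P ^ 8 ≤ 0.65 := by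
  norm_num at hx0 hx
  have h1 : P ≤ 1 - 147 / 1000 * x := by
    have hpos : 0 < 1 - x / 150 := by linarith
    have : P * (1 - x / 150) ≤ (1 - 147 / 1000 * x) * (1 - x / 150) := by nlinarith
    exact le_of_mul_le_mul_right this hpos
  have h2 : P ≤ 0.9471 := by norm_num; linarith
  calc P ^ 8 ≤ 0.9471 ^ 8 := by gcongr
    _ ≤ _ := by norm_num

theorem far_one (n : ℕ) (hn : 4 ≤ n) (a τ σ θ : ℝ) (hθ0 : 0 < θ) (hθ1 : θ ≤ Real.pi / 2) (hτ : |τ| = Real.cos θ)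
    (hθ : 0.6 ≤ ((n : ℝ) + 1) * θ) (ha : |a| ≤ 1.006)
    (hσ : |σ| ≤ 0.0286 * (((n : ℝ) + 1) * Real.sin θ)) :
    |G0 n a τ σ| ≤ 0.8 := by
  have hm5 : (5 : ℝ) ≤ (n : ℝ) + 1 := by
    have : (4 : ℝ) ≤ n := by exact_mod_cast hn
    linarith
  have hP8 : kP n τ ^ 8 = |kP n (Real.cos θ)| ^ 8 := by
    rw [← hτ, kP_abs_abs, Even.pow_abs (by decide)]
  have hτ1 : |τ| ≤ 1 := by rw [hτ]; exact Real.cos_le_one _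
  have hcos := kP_cos n θ
  set m : ℝ := (n : ℝ) + 1 with hm
  have hm0 : 0 < m := by positivity
  have hsin : 0 < Real.sin θ := Real.sin_pos_of_pos_of_lt_pi hθ0 (by linarith [Real.pi_pos])
  set y := m * Real.sin θ with hy
  have hy0 : 0 < y := by positivity
  have hE : |a + 2 * τ * σ| ≤ 1.006 + 0.0572 * y := by
    calc _ ≤ |a| + |2 * τ * σ| := abs_add_le _ _
      _ = |a| + 2 * |τ| * |σ| := by rw [abs_mul, abs_mul]; norm_num
      _ ≤ 1.006 + 2 * 1 * (0.0286 * y) := by gcongr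
      _ = _ := by ring
  rw [G0, abs_mul, hP8, abs_pow, abs_abs]
  rcases le_total (m * θ) 1.1 with hc | hc
  · have hlow := kP_near_lower n hθ0 hθ1 (by rw [← hm]; norm_num at hc; linarith)
    have hup := kP_near_upper n hn hθ0 (by rw [← hm]; norm_num at hc; linarith)
    rw [← hm] at hlow hup
    have hx1 : (m * θ) ^ 2 ≤ 1.21 := by
      have := pow_le_pow_left₀ (by positivity) hc 2
      norm_num at this ⊢; linarith
    have hx0 : 0.36 ≤ (m * θ) ^ 2 := by
      have := pow_le_pow_left₀ (by norm_num) hθ 2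
      norm_num at this ⊢; linarith
    have hk0 : 0 ≤ kP n (Real.cos θ) := by norm_num at hx1; linarith
    have := pow8_mid hx0 hx1 hk0 (by rw [← pow_mul]; exact hup)
    rw [abs_of_nonneg hk0]
    have hyθ : y ≤ 1.1 := by
      refine le_trans ?_ hc
      rw [hy]; gcongr; exact Real.sin_le hθ0.le
    have h7 : |a + 2 * τ * σ| ≤ 1.006 + 0.0572 * 1.1 := by
      norm_num at hE hyθ ⊢; linarith
    have h8 : |a + 2 * τ * σ| * kP n (Real.cos θ) ^ 8 ≤ (1.006 + 0.0572 * 1.1) * 0.65 :=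
      mul_le_mul h7 this (by positivity) (by norm_num)
    refine h8.trans (by norm_num)
  · have hy1 : 1.09 ≤ y := by
      have h1 : Real.sin (1.1 / m) ≤ Real.sin θ := by
        have : 1.1 / m ≤ θ := by rw [div_le_iff₀ hm0]; linarith
        apply Real.sin_le_sin_of_le_of_le_pi_div_two _ hθ1 this
        have : 0 < 1.1 / m := by positivity
        linarith [Real.pi_pos]
      have h2 := Real.sin_ge_sub_cube (x := 1.1 / m) (by positivity)
      have h3 : m * (1.1 / m - (1.1 / m) ^ 3 / 6) ≤ y := by
        rw [hy]; gcongr; exact h2.trans h1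
      have h4 : m * (1.1 / m - (1.1 / m) ^ 3 / 6) = 1.1 - 1.1 ^ 3 / (6 * m ^ 2) := by field_simp
      have h5 : (1.1:ℝ) ^ 3 / (6 * m ^ 2) ≤ 1.1 ^ 3 / 150 := by
        gcongr; nlinarith
      rw [h4] at h3
      norm_num at h3 h5 ⊢; linarith
    have hk : |kP n (Real.cos θ)| ≤ 1 / y := by
      rw [le_div_iff₀ hy0, ← abs_of_pos hy0, ← abs_mul, hcos]
      exact Real.abs_sin_le_one _
    have hu : 1 / y ≤ 0.918 := by
      rw [div_le_iff₀ hy0]; norm_num at hy1 ⊢; linarith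
    have hyu : y * (1 / y) = 1 := by field_simp
    have hu0 : 0 < 1 / y := by positivity
    calc _ ≤ (1.006 + 0.0572 * y) * (1 / y) ^ 8 := by gcongr
      _ = 1.006 * (1 / y) ^ 8 + 0.0572 * (1 / y) ^ 7 := by
        linear_combination 0.0572 * (1 / y) ^ 7 * hyu
      _ ≤ 1.006 * 0.918 ^ 8 + 0.0572 * 0.918 ^ 7 := by gcongr
      _ ≤ _ := by norm_num

noncomputable def qf {M : ℕ} (n : ℕ) (p V : Fin M → E4) (a : Fin M → ℝ) (P : E4) : ℝ :=
  ∑ j, G0 n (a j) (inner ℝ (p j) P) (inner ℝ (V j) P)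

theorem qf_neg {M : ℕ} (n : ℕ) (p V : Fin M → E4) (a : Fin M → ℝ) (P : E4) :
    qf n p V a (-P) = qf n p V a P := by
  simp only [qf, inner_neg_right, G0_neg]

theorem certificate {M : ℕ} (n : ℕ) (hn : 4 ≤ n) (p : Fin M → E4) (hp : ∀ j, ‖p j‖ = 1)
    (hsep : ∀ i j, i ≠ j → |inner ℝ (p i) (p j)| ≤ Real.cos (30 / 7 / ((n : ℝ) + 1)))
    (s : Fin M → ℝ) (hs : ∀ i, s i = 1 ∨ s i = -1) :
    ∃ (a : Fin M → ℝ) (V : Fin M → E4), (∀ i, qf n p V a (p i) = s i) ∧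
      ∀ P : E4, ‖P‖ = 1 → (∀ i, |inner ℝ (p i) P| ≠ 1) → |qf n p V a P| < 1 := by
  obtain ⟨a, V, ha, hV, hpV, h1, h2⟩ := interp n hn p hp hsep s
    (fun i => by rcases hs i with h | h <;> rw [h] <;> simp)
  have hm5 : (5 : ℝ) ≤ (n : ℝ) + 1 := by
    have : (4 : ℝ) ≤ n := by exact_mod_cast hn
    linarith
  have hm0 : 0 < (n : ℝ) + 1 := by positivity
  refine ⟨a, V, ?_, ?_⟩
  · intro i
    rw [← h1 i, qf, ← Finset.add_sum_erase _ _ (Finset.mem_univ i)]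
    congr 1
    rw [real_inner_self_eq_norm_sq, hp, real_inner_comm, hpV]
    simp [G0, kP_one]
  · intro P hP hne
    rcases isEmpty_or_nonempty (Fin M) with he | he
    · simp [qf]
    obtain ⟨i, -, hi⟩ := Finset.exists_max_image Finset.univ (fun j => |inner ℝ (p j) P|) Finset.univ_nonempty
    have hle := abs_inner_le_one (hp i) hP
    have hlt : |inner ℝ (p i) P| < 1 := lt_of_le_of_ne hle (hne i)
    set θ := Real.arccos |inner ℝ (p i) P| with hθ
    have hθ0 : 0 < θ := Real.arccos_pos.2 hlt
    have hθ1 : θ ≤ Real.pi / 2 := Real.arccos_le_pi_div_two.2 (abs_nonneg _)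
    have hcos : Real.cos θ = |inner ℝ (p i) P| := Real.cos_arccos (by linarith [abs_nonneg (inner ℝ (p i) P)]) hle
    rcases le_total (((n : ℝ) + 1) * θ) 0.6 with hc | hc
    · obtain ⟨ε, N, hε, hN, hPe⟩ := log_data (p i) P (hp i) hP hlt
      have hq : qf n p V a P = qf n p V a (ε • P) := by
        rcases hε with h | h <;> rw [h]
        · rw [one_smul]
        · rw [neg_one_smul, qf_neg]
      rw [hq, hPe]
      exact near_bound n hn p hp hsep s hs a V ha hV hpV h1 h2 i N hN
        (Submodule.mem_orthogonal_singleton_iff_inner_right.1 N.2) θ hθ0 hc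
    · have hone : |G0 n (a i) (inner ℝ (p i) P) (inner ℝ (V i) P)| ≤ 0.8 := by
        refine far_one n hn _ _ _ θ hθ0 hθ1 hcos.symm hc (ha i) ?_
        refine (inner_perp_le (hp i) hP (hpV i)).trans ?_
        have : Real.sin θ = √(1 - (inner ℝ (p i) P) ^ 2) := by rw [hθ, Real.sin_arccos, sq_abs]
        rw [this, ← mul_assoc]
        gcongr
        exact hV i
      have hN : ∃ N : E4, ‖N‖ = 1 ∧ inner ℝ P N = 0 := by
        rw [real_inner_comm] at hlt
        obtain ⟨ε, N, hε, hN, hPe⟩ := log_data P (p i) hP (hp i) hlt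
        exact ⟨N, hN, Submodule.mem_orthogonal_singleton_iff_inner_right.1 N.2⟩
      obtain ⟨N, hN, hPN⟩ := hN
      have hk := (sums n hn p V a hp hpV 1.006 0.0286 (by norm_num) ha (by norm_num) hV
        (Finset.univ.erase i) (15 / 7) 0.4815 0.2806 (by norm_num) (by norm_num) (by norm_num) (by norm_num)
        (fun c _ d _ hcd => hsep c d hcd) P N hP hN hPN ?_).1
      · rw [qf, ← Finset.add_sum_erase _ _ (Finset.mem_univ i)]
        refine (abs_add_le _ _).trans_lt ?_
        have := (Finset.abs_sum_le_sum_abs _ _).trans hk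
        norm_num at this hone ⊢
        linarith
      · intro c hcm
        have hci := hsep c i (Finset.ne_of_mem_erase hcm)
        have hT := line_triangle hP (hp c) (hp i)
        have e2 := le_arccos_of (by positivity) (by
          have := Real.pi_gt_three
          rw [div_le_iff₀ hm0]; nlinarith) hci
        refine abs_le_cos_of (abs_inner_le_one (hp c) hP) (by positivity) ?_
        have e3 : Real.arccos |inner ℝ (p i) P| ≤ Real.arccos |inner ℝ (p c) P| :=
          Real.antitone_arccos (hi c (Finset.mem_univ c))
        have e4 : 15 / 7 / ((n : ℝ) + 1) = 30 / 7 / ((n : ℝ) + 1) / 2 := by ring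
        rw [e4]; linarith

end

section

theorem exists_angle (c s : ℝ) (h : c ^ 2 + s ^ 2 = 1) : ∃ g : ℝ, Real.cos g = c ∧ Real.sin g = s := by
  have hn : ‖(⟨c, s⟩ : ℂ)‖ = 1 := by
    rw [Complex.norm_def, Complex.normSq_apply]
    simp only
    rw [← Real.sqrt_one]; congr 1; linarith
  refine ⟨Complex.arg ⟨c, s⟩, ?_, ?_⟩
  · have h1 := Complex.norm_mul_cos_arg (⟨c, s⟩ : ℂ)
    rw [hn, one_mul] at h1; exact h1
  · have h1 := Complex.norm_mul_sin_arg (⟨c, s⟩ : ℂ)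
    rw [hn, one_mul] at h1; exact h1

theorem exists_angle' (c s r : ℝ) (hr : 0 ≤ r) (h : c ^ 2 + s ^ 2 = r ^ 2) :
    ∃ g : ℝ, r * Real.cos g = c ∧ r * Real.sin g = s := by
  have hn : ‖(⟨c, s⟩ : ℂ)‖ = r := by
    rw [Complex.norm_def, Complex.normSq_apply]
    simp only
    rw [← Real.sqrt_sq hr]; congr 1; linarith
  refine ⟨Complex.arg ⟨c, s⟩, ?_, ?_⟩
  · have h1 := Complex.norm_mul_cos_arg (⟨c, s⟩ : ℂ)
    rw [hn] at h1; exact h1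
  · have h1 := Complex.norm_mul_sin_arg (⟨c, s⟩ : ℂ)
    rw [hn] at h1; exact h1

theorem fix_e3 (W : Mat3) (h : IsSO3 W) (h0 : W 0 2 = 0) (h1 : W 1 2 = 0) (h2 : W 2 2 = 1) :
    ∃ g, W = Rz g := by
  obtain ⟨ho, hd⟩ := h
  have ho' : W * W.transpose = 1 := mul_eq_one_comm.mp ho
  have e := fun i j => congrFun (congrFun ho i) j
  have e' := fun i j => congrFun (congrFun ho' i) j
  simp only [Matrix.mul_apply, Fin.sum_univ_three, Matrix.transpose_apply, Matrix.one_apply] at e e'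
  have e22 := e' 2 2
  have e00 := e 0 0
  have e11 := e 1 1
  have e01 := e 0 1
  rw [Matrix.det_fin_three] at hd
  simp [h0, h1, h2] at e22 e00 e11 e01 hd
  have w20 : W 2 0 = 0 := by nlinarith [sq_nonneg (W 2 0), sq_nonneg (W 2 1)]
  have w21 : W 2 1 = 0 := by nlinarith [sq_nonneg (W 2 0), sq_nonneg (W 2 1)]
  simp [w20, w21] at e00 e11 e01 hd
  obtain ⟨g, hg1, hg2⟩ := exists_angle (W 0 0) (W 1 0) (by linarith)
  have hsum : (W 0 0 - W 1 1) ^ 2 + (W 0 1 + W 1 0) ^ 2 = 0 := by nlinarith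
  have ha : W 0 0 - W 1 1 = 0 := by nlinarith [sq_nonneg (W 0 0 - W 1 1), sq_nonneg (W 0 1 + W 1 0)]
  have hb : W 0 1 + W 1 0 = 0 := by nlinarith [sq_nonneg (W 0 0 - W 1 1), sq_nonneg (W 0 1 + W 1 0)]
  refine ⟨g, ?_⟩
  ext i j
  fin_cases i <;> fin_cases j <;> simp [Rz, hg1, hg2, h0, h1, h2, w20, w21] <;> linarith

theorem Rz_so (t : ℝ) : IsSO3 (Rz t) := by
  have h := Real.sin_sq_add_cos_sq t
  constructor
  · ext i j
    fin_cases i <;> fin_cases j <;>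
      simp [Rz, Matrix.mul_apply, Fin.sum_univ_three] <;> nlinarith
  · rw [Matrix.det_fin_three]; simp [Rz]; nlinarith

theorem Rx_so (t : ℝ) : IsSO3 (Rx t) := by
  have h := Real.sin_sq_add_cos_sq t
  constructor
  · ext i j
    fin_cases i <;> fin_cases j <;>
      simp [Rx, Matrix.mul_apply, Fin.sum_univ_three] <;> nlinarith
  · rw [Matrix.det_fin_three]; simp [Rx]; nlinarith

theorem so_mul {A B : Mat3} (hA : IsSO3 A) (hB : IsSO3 B) : IsSO3 (A * B) := by
  constructor
  · rw [Matrix.transpose_mul, Matrix.mul_assoc, ← Matrix.mul_assoc A.transpose, hA.1, Matrix.one_mul, hB.1]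
  · rw [Matrix.det_mul, hA.2, hB.2, mul_one]

theorem so_transpose {A : Mat3} (hA : IsSO3 A) : IsSO3 A.transpose :=
  ⟨by rw [Matrix.transpose_transpose]; exact mul_eq_one_comm.mp hA.1, by rw [Matrix.det_transpose, hA.2]⟩

theorem euler_exists (z : Mat3) (hz : IsSO3 z) :
    ∃ t : ℝ × ℝ × ℝ, 0 ≤ t.2.1 ∧ t.2.1 ≤ Real.pi ∧ z = Rz t.1 * Rx t.2.1 * Rz t.2.2 := by
  have e := congrFun (congrFun hz.1 2) 2
  simp [Matrix.mul_apply, Fin.sum_univ_three, Matrix.transpose_apply] at e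
  have hl : -1 ≤ z 2 2 := by nlinarith [sq_nonneg (z 0 2), sq_nonneg (z 1 2)]
  have hu : z 2 2 ≤ 1 := by nlinarith [sq_nonneg (z 0 2), sq_nonneg (z 1 2)]
  set β := Real.arccos (z 2 2) with hβ
  have hcβ : Real.cos β = z 2 2 := Real.cos_arccos hl hu
  have hsβ : 0 ≤ Real.sin β := Real.sin_nonneg_of_nonneg_of_le_pi (Real.arccos_nonneg _) (Real.arccos_le_pi _)
  have hsc := Real.sin_sq_add_cos_sq β
  obtain ⟨α, h1, h2⟩ := exists_angle' (- z 1 2) (z 0 2) (Real.sin β) hsβ (by nlinarith)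
  have hA : IsSO3 (Rz α * Rx β) := so_mul (Rz_so α) (Rx_so β)
  have hW : IsSO3 ((Rz α * Rx β).transpose * z) := so_mul (so_transpose hA) hz
  have hcol : ∀ i, z i 2 = (Rz α * Rx β) i 2 := by
    intro i
    fin_cases i <;> simp [Rz, Rx, Matrix.mul_apply, Fin.sum_univ_three] <;> linarith
  have hWc : ∀ i, ((Rz α * Rx β).transpose * z) i 2 = (1 : Mat3) i 2 := by
    intro i
    rw [← hA.1, Matrix.mul_apply, Matrix.mul_apply]
    refine Finset.sum_congr rfl fun k _ => ?_
    rw [hcol k]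
  obtain ⟨g, hg⟩ := fix_e3 _ hW (by rw [hWc]; simp) (by rw [hWc]; simp) (by rw [hWc]; simp)
  refine ⟨(α, β, g), Real.arccos_nonneg _, Real.arccos_le_pi _, ?_⟩
  simp only
  rw [← hg, ← Matrix.mul_assoc, mul_eq_one_comm.mp hA.1, Matrix.one_mul]

noncomputable def eul (z : SO3) : ℝ × ℝ × ℝ := Classical.choose (euler_exists z.1 z.2)
theorem eul_spec (z : SO3) : 0 ≤ (eul z).2.1 ∧ (eul z).2.1 ≤ Real.pi ∧
    z.1 = Rz (eul z).1 * Rx (eul z).2.1 * Rz (eul z).2.2 := Classical.choose_spec (euler_exists z.1 z.2)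

/-- quaternion coordinates -/
noncomputable def qA0 (α β γ : ℝ) : ℝ := Real.cos ((α + γ) / 2) * Real.cos (β / 2)
noncomputable def qA1 (α β γ : ℝ) : ℝ := -Real.sin ((α + γ) / 2) * Real.cos (β / 2)
noncomputable def qB0 (α β γ : ℝ) : ℝ := Real.cos ((α - γ) / 2) * Real.sin (β / 2)
noncomputable def qB1 (α β γ : ℝ) : ℝ := -Real.sin ((α - γ) / 2) * Real.sin (β / 2)

/-- rotation matrix of a quaternion -/
noncomputable def Qm (a b c d : ℝ) : Mat3 :=
  !![a ^ 2 - b ^ 2 + c ^ 2 - d ^ 2, 2 * a * b - 2 * c * d, -2 * (a * d + b * c);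
     -2 * a * b - 2 * c * d, a ^ 2 - b ^ 2 - c ^ 2 + d ^ 2, -2 * (a * c - b * d);
     -2 * (b * c - a * d), 2 * (a * c + b * d), a ^ 2 + b ^ 2 - c ^ 2 - d ^ 2]

theorem euler_eq_Qm (α β γ : ℝ) :
    Rz α * Rx β * Rz γ = Qm (qA0 α β γ) (qA1 α β γ) (qB0 α β γ) (qB1 α β γ) := by
  obtain ⟨u, hu⟩ : ∃ u, u = (α + γ) / 2 := ⟨_, rfl⟩
  obtain ⟨v, hv⟩ : ∃ v, v = (α - γ) / 2 := ⟨_, rfl⟩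
  obtain ⟨w, hw⟩ : ∃ w, w = β / 2 := ⟨_, rfl⟩
  have c1 : Real.cos (2 * u) = Real.cos u ^ 2 - Real.sin u ^ 2 := Real.cos_two_mul' u
  have c2 : Real.cos (2 * v) = Real.cos v ^ 2 - Real.sin v ^ 2 := Real.cos_two_mul' v
  have s1 := Real.sin_two_mul u
  have s2 := Real.sin_two_mul v
  have c3 := Real.cos_add u v
  have c4 := Real.cos_sub u v
  have s3 := Real.sin_add u v
  have s4 := Real.sin_sub u v
  have w1 : Real.cos w ^ 2 = (1 + Real.cos β) / 2 := by
    rw [show β = 2 * w by rw [hw]; ring, Real.cos_two_mul]; ring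
  have w2 : Real.sin w ^ 2 = (1 - Real.cos β) / 2 := by
    rw [Real.sin_sq, w1]; ring
  have w3 : Real.sin w * Real.cos w = Real.sin β / 2 := by
    rw [show β = 2 * w by rw [hw]; ring, Real.sin_two_mul]; ring
  rw [show 2 * u = α + γ by rw [hu]; ring] at c1 s1
  rw [show 2 * v = α - γ by rw [hv]; ring] at c2 s2
  rw [show u + v = α by rw [hu, hv]; ring] at c3 s3
  rw [show u - v = γ by rw [hu, hv]; ring] at c4 s4
  rw [Real.cos_add] at c1
  rw [Real.sin_add] at s1
  rw [Real.cos_sub] at c2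
  rw [Real.sin_sub] at s2
  have p1 := Real.sin_sq_add_cos_sq u
  have p2 := Real.sin_sq_add_cos_sq v
  unfold Qm qA0 qA1 qB0 qB1
  rw [← hu, ← hv, ← hw]
  ext i j
  fin_cases i <;> fin_cases j <;>
    simp [Rz, Rx, Matrix.mul_apply, Fin.sum_univ_three]
  · linear_combination (1 + Real.cos β) / 2 * c1 + (1 - Real.cos β) / 2 * c2 - (Real.cos u ^ 2 - Real.sin u ^ 2) * w1 - (Real.cos v ^ 2 - Real.sin v ^ 2) * w2
  · linear_combination -(1 + Real.cos β) / 2 * s1 + (1 - Real.cos β) / 2 * s2 + (2 * Real.sin u * Real.cos u) * w1 - (2 * Real.sin v * Real.cos v) * w2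
  · linear_combination Real.sin β * s3 - 2 * (Real.sin u * Real.cos v + Real.cos u * Real.sin v) * w3
  · linear_combination (1 + Real.cos β) / 2 * s1 + (1 - Real.cos β) / 2 * s2 - (2 * Real.sin u * Real.cos u) * w1 - (2 * Real.sin v * Real.cos v) * w2
  · linear_combination (1 + Real.cos β) / 2 * c1 - (1 - Real.cos β) / 2 * c2 - (Real.cos u ^ 2 - Real.sin u ^ 2) * w1 + (Real.cos v ^ 2 - Real.sin v ^ 2) * w2
  · linear_combination Real.sin β * c3 - 2 * (Real.cos u * Real.cos v - Real.sin u * Real.sin v) * w3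
  · linear_combination Real.sin β * s4 - 2 * (Real.sin u * Real.cos v - Real.cos u * Real.sin v) * w3
  · linear_combination Real.sin β * c4 - 2 * (Real.cos u * Real.cos v + Real.sin u * Real.sin v) * w3
  · linear_combination -Real.cos w ^ 2 * p1 + Real.sin w ^ 2 * p2 - w1 + w2

noncomputable def ca (z : SO3) : ℂ :=
  ⟨qA0 (eul z).1 (eul z).2.1 (eul z).2.2, qA1 (eul z).1 (eul z).2.1 (eul z).2.2⟩
noncomputable def cb (z : SO3) : ℂ :=
  ⟨qB0 (eul z).1 (eul z).2.1 (eul z).2.2, qB1 (eul z).1 (eul z).2.1 (eul z).2.2⟩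
noncomputable def qp (z : SO3) : E4 := !₂[(ca z).re, (ca z).im, (cb z).re, (cb z).im]

theorem eq_Qm (z : SO3) : z.1 = Qm (ca z).re (ca z).im (cb z).re (cb z).im :=
  (eul_spec z).2.2.trans (euler_eq_Qm _ _ _)

theorem q_sum (z : SO3) : (ca z).re ^ 2 + (ca z).im ^ 2 + (cb z).re ^ 2 + (cb z).im ^ 2 = 1 := by
  simp only [ca, cb, qA0, qA1, qB0, qB1]
  have p1 := Real.sin_sq_add_cos_sq (((eul z).1 + (eul z).2.2) / 2)
  have p2 := Real.sin_sq_add_cos_sq (((eul z).1 - (eul z).2.2) / 2)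
  have p3 := Real.sin_sq_add_cos_sq ((eul z).2.1 / 2)
  linear_combination Real.cos ((eul z).2.1 / 2) ^ 2 * p1 + Real.sin ((eul z).2.1 / 2) ^ 2 * p2 + p3

theorem qp_inner (z : SO3) (P : E4) : inner ℝ (qp z) P =
    (ca z).re * P 0 + (ca z).im * P 1 + (cb z).re * P 2 + (cb z).im * P 3 := by
  simp [qp, PiLp.inner_apply, Fin.sum_univ_four]; ring

theorem qp_norm (z : SO3) : ‖qp z‖ = 1 := by
  have : ‖qp z‖ ^ 2 = 1 := by
    rw [← real_inner_self_eq_norm_sq, qp_inner]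
    simp [qp]; linarith [q_sum z]
  nlinarith [norm_nonneg (qp z)]

theorem trace_inner (z z' : SO3) : Matrix.trace (z.1.transpose * z'.1) = 4 * (inner ℝ (qp z) (qp z')) ^ 2 - 1 := by
  have h1 := q_sum z
  have h2 := q_sum z'
  rw [qp_inner]
  simp only [qp]
  rw [eq_Qm z, eq_Qm z']
  generalize (ca z).re = a at *
  generalize (ca z).im = b at *
  generalize (cb z).re = c at *
  generalize (cb z).im = d at *
  generalize (ca z').re = a' at *
  generalize (ca z').im = b' at *
  generalize (cb z').re = c' at *
  generalize (cb z').im = d' at *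
  simp [Matrix.trace_fin_three, Qm, Matrix.mul_apply, Fin.sum_univ_three]
  linear_combination -(a' ^ 2 + b' ^ 2 + c' ^ 2 + d' ^ 2) * h1 - h2

theorem eq_of_inner (z z' : SO3) (h : |inner ℝ (qp z) (qp z')| = 1) : z = z' := by
  have h1 : inner ℝ (qp z) (qp z') = 1 ∨ inner ℝ (qp z) (qp z') = -1 := by
    rcases abs_cases (inner ℝ (qp z) (qp z')) with ⟨h2, _⟩ | ⟨h2, _⟩
    · left; linarith
    · right; linarith
  have h2 : qp z = qp z' ∨ qp z = - qp z' := by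
    rcases h1 with h1 | h1
    · left; exact (inner_eq_one_iff_of_norm_eq_one (qp_norm z) (qp_norm z')).mp h1
    · right
      apply (inner_eq_one_iff_of_norm_eq_one (𝕜 := ℝ) (qp_norm z) (by rw [norm_neg, qp_norm])).mp
      rw [inner_neg_right, h1, neg_neg]
  apply Subtype.ext
  rw [eq_Qm z, eq_Qm z']
  rcases h2 with h2 | h2
  all_goals
    have e0 := congrArg (fun P : E4 => P 0) h2
    have e1 := congrArg (fun P : E4 => P 1) h2
    have e2 := congrArg (fun P : E4 => P 2) h2
    have e3 := congrArg (fun P : E4 => P 3) h2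
    simp [qp] at e0 e1 e2 e3
    rw [e0, e1, e2, e3]
  simp [Qm]

theorem sep_inner (N : ℕ) (hN : 20 ≤ N) (z z' : SO3) (h : 36 / ((N : ℝ) + 1) ≤ rotAngle (z'.1⁻¹ * z.1)) :
    |inner ℝ (qp z) (qp z')| ≤ Real.cos (18 / ((N : ℝ) + 1)) := by
  have hinv : z'.1⁻¹ = z'.1.transpose := Matrix.inv_eq_left_inv z'.2.1
  rw [hinv, rotAngle, trace_inner, real_inner_comm] at h
  set t : ℝ := inner ℝ (qp z) (qp z') with ht
  have ht1 : |t| ≤ 1 := abs_inner_le_one (qp_norm z) (qp_norm z')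
  have hsq : t ^ 2 ≤ 1 := by rw [← sq_abs]; nlinarith [abs_nonneg t]
  have hN' : (20 : ℝ) ≤ N := by exact_mod_cast hN
  have hpos : 0 < 36 / ((N : ℝ) + 1) := by positivity
  have hle : 36 / ((N : ℝ) + 1) ≤ Real.pi := h.trans (Real.arccos_le_pi _)
  have h1 := Real.cos_le_cos_of_nonneg_of_le_pi hpos.le (Real.arccos_le_pi _) h
  rw [Real.cos_arccos (by nlinarith [sq_nonneg t]) (by linarith)] at h1
  rw [show 36 / ((N : ℝ) + 1) = 2 * (18 / ((N : ℝ) + 1)) by ring, Real.cos_two_mul] at h1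
  have hc : 0 ≤ Real.cos (18 / ((N : ℝ) + 1)) := by
    apply Real.cos_nonneg_of_neg_pi_div_two_le_of_le
    · have : 0 < 18 / ((N : ℝ) + 1) := by positivity
      linarith [Real.pi_pos]
    · rw [show 36 / ((N : ℝ) + 1) = 2 * (18 / ((N : ℝ) + 1)) by ring] at hle; linarith
  refine abs_le_of_sq_le_sq ?_ hc
  linarith

end

section
open Polynomial

theorem iterDeriv_poly (p : ℝ[X]) (j : ℕ) :
    iteratedDeriv j (fun u : ℝ => p.eval u) = fun u => (derivative^[j] p).eval u := by
  induction j with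
  | zero => simp
  | succ j ih =>
    rw [iteratedDeriv_succ, ih, Function.iterate_succ_apply']
    funext u
    exact Polynomial.deriv _

theorem natDeg_iter (p : ℝ[X]) (j : ℕ) : (derivative^[j] p).natDegree = p.natDegree - j := by
  induction j with
  | zero => simp
  | succ j ih => rw [Function.iterate_succ_apply', natDegree_derivative, ih]; omega

theorem wig_poly (l : ℕ) (k m : ℤ) (h1 : -(l : ℤ) ≤ k) (h2 : k ≤ l) (h3 : -(l : ℤ) ≤ m) (h4 : m ≤ l) :
    ∃ Q : ℝ[X], Q ≠ 0 ∧ Q.natDegree = l - max k.natAbs m.natAbs ∧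
      ∀ t : ℝ, iteratedDeriv ((l : ℤ) - m).toNat
        (fun u : ℝ => (1 - u) ^ ((l : ℤ) - k).toNat * (1 + u) ^ ((l : ℤ) + k).toNat) t =
        (1 - t) ^ (m - k).toNat * (1 + t) ^ (m + k).toNat * Q.eval t := by
  set A : ℝ[X] := 1 - X with hA
  set B : ℝ[X] := 1 + X with hB
  have dA : A.natDegree = 1 := by rw [hA]; compute_degree!
  have dB : B.natDegree = 1 := by rw [hB]; compute_degree!
  have A0 : A ≠ 0 := by intro h; simp [h] at dA
  have B0 : B ≠ 0 := by intro h; simp [h] at dB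
  set f := A ^ ((l : ℤ) - k).toNat * B ^ ((l : ℤ) + k).toNat with hf
  have df : f.natDegree = 2 * l := by
    rw [hf, natDegree_mul (pow_ne_zero _ A0) (pow_ne_zero _ B0), natDegree_pow, natDegree_pow, dA, dB]; omega
  have d1 := pow_sub_dvd_iterate_derivative_of_pow_dvd (p := f) ((l : ℤ) - m).toNat (Dvd.intro _ hf.symm)
  have d2 := pow_sub_dvd_iterate_derivative_of_pow_dvd (p := f) ((l : ℤ) - m).toNat (Dvd.intro_left _ hf.symm)
  rw [show ((l : ℤ) - k).toNat - ((l : ℤ) - m).toNat = (m - k).toNat by omega] at d1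
  rw [show ((l : ℤ) + k).toNat - ((l : ℤ) - m).toNat = (m + k).toNat by omega] at d2
  have hcop : IsCoprime A B := ⟨C (1 / 2), C (1 / 2), by
    rw [← mul_add, hA, hB, show (1 - X + (1 + X) : ℝ[X]) = C 2 by rw [show (C 2 : ℝ[X]) = 2 from rfl]; ring, ← C_mul]; norm_num⟩
  obtain ⟨Q, hQ⟩ := (hcop.pow (m := (m - k).toNat) (n := (m + k).toNat)).mul_dvd d1 d2
  have dd := natDeg_iter f ((l : ℤ) - m).toNat
  rw [df] at dd
  have Q0 : Q ≠ 0 := by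
    intro h
    rw [h, mul_zero] at hQ
    have := natDeg_iter f (2 * l)
    by_cases hm : -(l : ℤ) < m
    · rw [hQ] at dd; simp at dd; omega
    · have hm' : ((l : ℤ) - m).toNat = f.natDegree := by rw [df]; omega
      rw [hm'] at hQ
      have h6 := congrArg (fun q => coeff q 0) hQ
      simp [coeff_iterate_derivative] at h6
      exact mul_ne_zero (pow_ne_zero _ A0) (pow_ne_zero _ B0) (hf ▸ h6)
  refine ⟨Q, Q0, ?_, ?_⟩
  · rw [hQ, natDegree_mul (mul_ne_zero (pow_ne_zero _ A0) (pow_ne_zero _ B0)) Q0,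
      natDegree_mul (pow_ne_zero _ A0) (pow_ne_zero _ B0), natDegree_pow, natDegree_pow, dA, dB] at dd
    omega
  · intro t
    have : (fun u : ℝ => (1 - u) ^ ((l : ℤ) - k).toNat * (1 + u) ^ ((l : ℤ) + k).toNat) = fun u => f.eval u := by
      funext u; simp [hf, hA, hB]
    rw [this, iterDeriv_poly, hQ]
    simp [hA, hB]

theorem half_pow (r : ℝ) (hr : 0 ≤ r) (j : ℤ) :
    ((r ^ 2 : ℝ) : ℂ) ^ (-(j : ℂ) / 2) * ((r ^ 2 : ℝ) : ℂ) ^ j.toNat = ((r ^ j.natAbs : ℝ) : ℂ) := by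
  rcases eq_or_lt_of_le hr with h | h
  · rw [← h]
    by_cases hj : j = 0
    · simp [hj]
    · have : (-(j : ℂ) / 2) ≠ 0 := by
        simp [hj]
      simp [this, hj, Complex.zero_cpow]
  · have e1 : (-(j : ℂ) / 2) = ((-(j : ℝ) / 2 : ℝ) : ℂ) := by push_cast; ring
    rw [e1, ← Complex.ofReal_cpow (by positivity), ← Complex.ofReal_pow, ← Complex.ofReal_mul]
    congr 1
    have e2 : (r ^ 2) ^ (-(j : ℝ) / 2) = r ^ (-j) := by
      rw [← Real.rpow_natCast r 2, ← Real.rpow_mul hr, ← Real.rpow_intCast]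
      congr 1; push_cast; ring
    rw [e2, ← pow_mul, ← zpow_natCast r (2 * j.toNat), ← zpow_add₀ h.ne', ← zpow_natCast]
    congr 1; omega

noncomputable def chi (n : ℤ) (a : ℂ) : ℂ := a ^ n.toNat * (starRingEnd ℂ a) ^ (-n).toNat

theorem chi_polar (n : ℤ) (u r : ℝ) :
    chi n (Complex.exp (-u * Complex.I) * r) = Complex.exp (-(n : ℂ) * u * Complex.I) * (r : ℂ) ^ n.natAbs := by
  have hc : (starRingEnd ℂ) (Complex.exp (-u * Complex.I) * r) = Complex.exp (u * Complex.I) * r := by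
    rw [map_mul, ← Complex.exp_conj]; simp
  rw [chi, hc]
  rcases le_total 0 n with h | h
  · obtain ⟨k, rfl⟩ := Int.eq_ofNat_of_zero_le h
    simp [mul_pow, ← Complex.exp_nat_mul]; left; ring_nf
  · obtain ⟨k, hk⟩ := Int.eq_ofNat_of_zero_le (show 0 ≤ -n by omega)
    have : n = -(k : ℤ) := by omega
    subst this
    simp [mul_pow, ← Complex.exp_nat_mul]; left; ring_nf

theorem ca_polar (z : SO3) : ca z = Complex.exp (-(((eul z).1 + (eul z).2.2) / 2 : ℝ) * Complex.I) * (Real.cos ((eul z).2.1 / 2) : ℝ) := by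
  rw [← Complex.ofReal_neg]
  apply Complex.ext
  · rw [Complex.re_mul_ofReal, Complex.exp_ofReal_mul_I_re]; simp [ca, qA0]
  · rw [Complex.im_mul_ofReal, Complex.exp_ofReal_mul_I_im]; simp [ca, qA1]

theorem cb_polar (z : SO3) : cb z = Complex.exp (-(((eul z).1 - (eul z).2.2) / 2 : ℝ) * Complex.I) * (Real.sin ((eul z).2.1 / 2) : ℝ) := by
  rw [← Complex.ofReal_neg]
  apply Complex.ext
  · rw [Complex.re_mul_ofReal, Complex.exp_ofReal_mul_I_re]; simp [cb, qB0]
  · rw [Complex.im_mul_ofReal, Complex.exp_ofReal_mul_I_im]; simp [cb, qB1]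

noncomputable def ct (z : SO3) : ℝ := Real.cos (eul z).2.1

theorem ca_sq (z : SO3) : ca z * starRingEnd ℂ (ca z) = (1 + ct z) / 2 := by
  rw [Complex.mul_conj, Complex.normSq_apply]
  have p1 := Real.sin_sq_add_cos_sq (((eul z).1 + (eul z).2.2) / 2)
  have p2 : Real.cos ((eul z).2.1 / 2) ^ 2 = (1 + ct z) / 2 := by
    rw [Real.cos_sq, ct]; ring_nf
  have : (ca z).re * (ca z).re + (ca z).im * (ca z).im = (1 + ct z) / 2 := by
    simp only [ca, qA0, qA1]
    rw [← p2]
    linear_combination Real.cos ((eul z).2.1 / 2) ^ 2 * p1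
  rw [this]; push_cast; ring

theorem cb_sq (z : SO3) : cb z * starRingEnd ℂ (cb z) = (1 - ct z) / 2 := by
  rw [Complex.mul_conj, Complex.normSq_apply]
  have p1 := Real.sin_sq_add_cos_sq (((eul z).1 - (eul z).2.2) / 2)
  have p2 : Real.sin ((eul z).2.1 / 2) ^ 2 = (1 - ct z) / 2 := by
    rw [Real.sin_sq, Real.cos_sq, ct]; ring_nf
  have : (cb z).re * (cb z).re + (cb z).im * (cb z).im = (1 - ct z) / 2 := by
    simp only [cb, qB0, qB1]
    rw [← p2]
    linear_combination Real.sin ((eul z).2.1 / 2) ^ 2 * p1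
  rw [this]; push_cast; ring

theorem wignerC_ne (l : ℕ) (k m : ℤ) : wignerC l k m ≠ 0 := by
  unfold wignerC
  refine mul_ne_zero (div_ne_zero (mul_ne_zero (zpow_ne_zero _ (by norm_num)) (zpow_ne_zero _ Complex.I_ne_zero))
    (mul_ne_zero (pow_ne_zero _ two_ne_zero) ?_)) ?_
  · exact_mod_cast Nat.factorial_ne_zero _
  · rw [Complex.ofReal_ne_zero]
    have := fun n : ℕ => Nat.factorial_pos n
    refine (Real.sqrt_pos.2 ?_).ne'
    have f := fun n : ℕ => (Nat.cast_pos (α := ℝ)).2 (Nat.factorial_pos n)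
    exact div_pos (mul_pos (f _) (f _)) (mul_pos (f _) (f _))

theorem wigner_form (l : ℕ) (k m : ℤ) (h1 : -(l : ℤ) ≤ k) (h2 : k ≤ l) (h3 : -(l : ℤ) ≤ m) (h4 : m ≤ l)
    (D : ℕ → ℤ → ℤ → Mat3 → ℂ) (hD : IsWignerFamily D) :
    ∃ (κ : ℂ) (Q : ℝ[X]), κ ≠ 0 ∧ Q ≠ 0 ∧ Q.natDegree = l - max k.natAbs m.natAbs ∧
      ∀ z : SO3, D l k m z.1 = κ * (chi (k + m) (ca z) * chi (k - m) (cb z) * ((Q.eval (ct z) : ℝ) : ℂ)) := by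
  obtain ⟨Q, hQ0, hQd, hQ⟩ := wig_poly l k m h1 h2 h3 h4
  refine ⟨wignerC l k m * ((√2 ^ (m - k).natAbs : ℝ) : ℂ) * ((√2 ^ (m + k).natAbs : ℝ) : ℂ), Q, ?_, hQ0, hQd, ?_⟩
  · refine mul_ne_zero (mul_ne_zero (wignerC_ne _ _ _) ?_) ?_ <;>
    · rw [Complex.ofReal_ne_zero]; positivity
  intro z
  obtain ⟨hb0, hb1, hz⟩ := eul_spec z
  rw [ca_polar, cb_polar, chi_polar, chi_polar]
  rw [hz, hD l k m h1 h2 h3 h4 _ _ _ hb0 hb1, wignerDFormula, wignerP, hQ]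
  rw [show ct z = Real.cos (eul z).2.1 from rfl]
  generalize (eul z).1 = α at *
  generalize (eul z).2.1 = β at *
  generalize (eul z).2.2 = γ at *
  have hc : 0 ≤ Real.cos (β / 2) := Real.cos_nonneg_of_neg_pi_div_two_le_of_le (by linarith [Real.pi_pos]) (by linarith)
  have hs : 0 ≤ Real.sin (β / 2) := Real.sin_nonneg_of_nonneg_of_le_pi (by linarith) (by linarith)
  have e1 : 1 + Real.cos β = (√2 * Real.cos (β / 2)) ^ 2 := by
    rw [mul_pow, Real.sq_sqrt (by norm_num), Real.cos_sq]; ring_nf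
  have e2 : 1 - Real.cos β = (√2 * Real.sin (β / 2)) ^ 2 := by
    rw [mul_pow, Real.sq_sqrt (by norm_num), Real.sin_sq, Real.cos_sq]; ring_nf
  have f1 := half_pow (√2 * Real.cos (β / 2)) (by positivity) (m + k)
  have f2 := half_pow (√2 * Real.sin (β / 2)) (by positivity) (m - k)
  rw [← e1] at f1
  rw [← e2] at f2
  have e3 : Complex.exp (-(k : ℂ) * α * Complex.I) * Complex.exp (-(m : ℂ) * γ * Complex.I) =
      Complex.exp (-((k + m : ℤ) : ℂ) * (((α + γ) / 2 : ℝ) : ℂ) * Complex.I) *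
      Complex.exp (-((k - m : ℤ) : ℂ) * (((α - γ) / 2 : ℝ) : ℂ) * Complex.I) := by
    rw [← Complex.exp_add, ← Complex.exp_add]; congr 1; push_cast; ring
  rw [show (k + m).natAbs = (m + k).natAbs by rw [add_comm], show (k - m).natAbs = (m - k).natAbs by omega]
  rw [Complex.ofReal_mul, Complex.ofReal_mul, Complex.ofReal_pow, Complex.ofReal_pow]
  rw [mul_pow, Complex.ofReal_mul, Complex.ofReal_pow (Real.cos _)] at f1
  rw [mul_pow, Complex.ofReal_mul, Complex.ofReal_pow (Real.sin _)] at f2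
  rw [show (1 - (Real.cos β : ℂ)) = ((1 - Real.cos β : ℝ) : ℂ) by push_cast; rfl,
    show (1 + (Real.cos β : ℂ)) = ((1 + Real.cos β : ℝ) : ℂ) by push_cast; rfl]
  calc _ = wignerC l k m * (Complex.exp (-(k : ℂ) * α * Complex.I) * Complex.exp (-(m : ℂ) * γ * Complex.I)) *
        (((1 - Real.cos β : ℝ) : ℂ) ^ (-((m - k : ℤ) : ℂ) / 2) * ((1 - Real.cos β : ℝ) : ℂ) ^ (m - k).toNat) *
        (((1 + Real.cos β : ℝ) : ℂ) ^ (-((m + k : ℤ) : ℂ) / 2) * ((1 + Real.cos β : ℝ) : ℂ) ^ (m + k).toNat) *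
        ((Q.eval (Real.cos β) : ℝ) : ℂ) := by ring
    _ = _ := by rw [e3, f1, f2]; ring

end

section
open Polynomial

theorem chiQ_mem (N : ℕ) (D : ℕ → ℤ → ℤ → Mat3 → ℂ) (hD : IsWignerFamily D)
    (K : Submodule ℂ (SO3 → ℂ))
    (hK : ∀ l : ℕ, l ≤ N → ∀ k m : ℤ, -(l : ℤ) ≤ k → k ≤ l → -(l : ℤ) ≤ m → m ≤ l →
      (fun z : SO3 => D l k m z.1) ∈ K) (k m : ℤ) (d : ℕ) :
    max k.natAbs m.natAbs + d ≤ N + 1 → ∀ q : ℝ[X], q.degree < d →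
      (fun z : SO3 => chi (k + m) (ca z) * chi (k - m) (cb z) * ((q.eval (ct z) : ℝ) : ℂ)) ∈ K := by
  induction d with
  | zero =>
    intro _ q hq
    have : q = 0 := by
      rw [← degree_eq_bot]
      exact Nat.WithBot.lt_zero_iff.mp (by exact_mod_cast hq)
    subst this
    simp only [eval_zero, Complex.ofReal_zero, mul_zero]
    exact K.zero_mem
  | succ d ih =>
    intro hd q hq
    obtain ⟨κ, Q, hκ, hQ0, hQd, hQ⟩ := wigner_form (max k.natAbs m.natAbs + d) k m (by omega) (by omega) (by omega) (by omega) D hD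
    have hQd' : Q.natDegree = d := by omega
    have hlc : Q.coeff d ≠ 0 := by rw [← hQd']; exact leadingCoeff_ne_zero.mpr hQ0
    set e := q.coeff d / Q.coeff d with he
    have hr : (q - C e * Q).degree < d := by
      rw [degree_lt_iff_coeff_zero]
      intro i hi
      rw [coeff_sub, coeff_C_mul]
      rcases eq_or_lt_of_le hi with h | h
      · rw [← h, he]; field_simp; ring
      · rw [(degree_lt_iff_coeff_zero q (d + 1)).1 hq i h, coeff_eq_zero_of_natDegree_lt (by omega)]; simp
    have h1 := ih (by omega) _ hr
    have h2 := hK (max k.natAbs m.natAbs + d) (by omega) k m (by omega) (by omega) (by omega) (by omega)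
    have h3 := K.add_mem h1 (K.smul_mem ((e : ℂ) / κ) h2)
    convert h3 using 1
    funext z
    simp only [Pi.add_apply, Pi.smul_apply, smul_eq_mul, hQ z, eval_sub, eval_mul, eval_C]
    push_cast
    field_simp
    ring

noncomputable def cA : SO3 → ℂ := ca
noncomputable def cA' : SO3 → ℂ := fun z => starRingEnd ℂ (ca z)
noncomputable def cB : SO3 → ℂ := cb
noncomputable def cB' : SO3 → ℂ := fun z => starRingEnd ℂ (cb z)
noncomputable def gens : Set (SO3 → ℂ) := {cA, cA', cB, cB'}

theorem chi_min (p q : ℕ) (a : ℂ) : a ^ p * (starRingEnd ℂ a) ^ q =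
    chi ((p : ℤ) - q) a * (a * starRingEnd ℂ a) ^ (min p q) := by
  unfold chi
  rcases le_total p q with h | h
  · obtain ⟨r, rfl⟩ := Nat.exists_eq_add_of_le h
    have h1 : ((p : ℤ) - ((p + r : ℕ) : ℤ)).toNat = 0 := by omega
    have h2 : (-((p : ℤ) - ((p + r : ℕ) : ℤ))).toNat = r := by omega
    rw [h1, h2, min_eq_left h, pow_add, mul_pow]; ring
  · obtain ⟨r, rfl⟩ := Nat.exists_eq_add_of_le h
    have h1 : (((q + r : ℕ) : ℤ) - (q : ℤ)).toNat = r := by omega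
    have h2 : (-(((q + r : ℕ) : ℤ) - (q : ℤ))).toNat = 0 := by omega
    rw [h1, h2, min_eq_right h, pow_add, mul_pow]; ring

theorem mono_mem (N : ℕ) (D : ℕ → ℤ → ℤ → Mat3 → ℂ) (hD : IsWignerFamily D)
    (K : Submodule ℂ (SO3 → ℂ))
    (hK : ∀ l : ℕ, l ≤ N → ∀ k m : ℤ, -(l : ℤ) ≤ k → k ≤ l → -(l : ℤ) ≤ m → m ≤ l →
      (fun z : SO3 => D l k m z.1) ∈ K) (j : ℕ) (hj : j ≤ N) (p q r s : ℕ) (h : p + q + r + s = 2 * j) :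
    cA ^ p * cA' ^ q * cB ^ r * cB' ^ s ∈ K := by
  obtain ⟨k, hk⟩ : ∃ k : ℤ, (p : ℤ) - q + (r - s) = 2 * k := ⟨j - q - s, by omega⟩
  obtain ⟨m, hm⟩ : ∃ m : ℤ, (p : ℤ) - q - (r - s) = 2 * m := ⟨k - (r - s), by omega⟩
  set Q : ℝ[X] := (C (1 / 2) * (1 + X)) ^ (min p q) * (C (1 / 2) * (1 - X)) ^ (min r s) with hQ
  have hQd : Q.natDegree ≤ min p q + min r s := by
    have d1 : (C (1 / 2 : ℝ) * (1 + X)).natDegree ≤ 1 := by compute_degree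
    have d2 : (C (1 / 2 : ℝ) * (1 - X)).natDegree ≤ 1 := by compute_degree
    refine natDegree_mul_le.trans (add_le_add ?_ ?_)
    · exact (natDegree_pow_le_of_le _ d1).trans (by omega)
    · exact (natDegree_pow_le_of_le _ d2).trans (by omega)
  have h1 := chiQ_mem N D hD K hK k m (min p q + min r s + 1) (by omega) Q
    (lt_of_le_of_lt degree_le_natDegree (by exact_mod_cast Nat.lt_succ_of_le hQd))
  convert h1 using 1
  funext z
  simp only [Pi.mul_apply, Pi.pow_apply, cA, cA', cB, cB']
  rw [mul_assoc (_ * _), chi_min, chi_min, ca_sq, cb_sq, show (p : ℤ) - q = k + m by omega, show (r : ℤ) - s = k - m by omega, hQ]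
  simp only [eval_mul, eval_pow, eval_C, eval_add, eval_sub, eval_one, eval_X]
  push_cast
  ring

open scoped Pointwise in
theorem gens_pow (d : ℕ) : ∀ f ∈ gens ^ d, ∃ p q r s : ℕ, p + q + r + s = d ∧
    f = cA ^ p * cA' ^ q * cB ^ r * cB' ^ s := by
  induction d with
  | zero =>
    intro f hf
    rw [pow_zero, Set.mem_one] at hf
    exact ⟨0, 0, 0, 0, rfl, by rw [hf]; simp⟩
  | succ d ih =>
    intro f hf
    rw [pow_succ, Set.mem_mul] at hf
    obtain ⟨g, hg, u, hu, rfl⟩ := hf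
    obtain ⟨p, q, r, s, h1, rfl⟩ := ih g hg
    rcases hu with rfl | rfl | rfl | rfl
    · exact ⟨p + 1, q, r, s, by omega, by ring⟩
    · exact ⟨p, q + 1, r, s, by omega, by ring⟩
    · exact ⟨p, q, r + 1, s, by omega, by ring⟩
    · exact ⟨p, q, r, s + 1, by omega, by ring⟩

noncomputable def LinS : Submodule ℂ (SO3 → ℂ) := Submodule.span ℂ gens

theorem linS_pow_le (N : ℕ) (D : ℕ → ℤ → ℤ → Mat3 → ℂ) (hD : IsWignerFamily D)
    (K : Submodule ℂ (SO3 → ℂ))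
    (hK : ∀ l : ℕ, l ≤ N → ∀ k m : ℤ, -(l : ℤ) ≤ k → k ≤ l → -(l : ℤ) ≤ m → m ≤ l →
      (fun z : SO3 => D l k m z.1) ∈ K) (j : ℕ) (hj : j ≤ N) : LinS ^ (2 * j) ≤ K := by
  rw [LinS, Submodule.span_pow, Submodule.span_le]
  intro f hf
  obtain ⟨p, q, r, s, h1, rfl⟩ := gens_pow _ f hf
  exact mono_mem N D hD K hK j hj p q r s h1

theorem inner_linS (v : E4) : (fun z : SO3 => ((inner ℝ v (qp z) : ℝ) : ℂ)) ∈ LinS := by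
  have m1 : cA ∈ LinS := Submodule.subset_span (by simp [gens])
  have m2 : cA' ∈ LinS := Submodule.subset_span (by simp [gens])
  have m3 : cB ∈ LinS := Submodule.subset_span (by simp [gens])
  have m4 : cB' ∈ LinS := Submodule.subset_span (by simp [gens])
  have : (fun z : SO3 => ((inner ℝ v (qp z) : ℝ) : ℂ)) =
      ((v 0 : ℂ) / 2) • (cA + cA') + ((v 1 : ℂ) / (2 * Complex.I)) • (cA - cA') +
      ((v 2 : ℂ) / 2) • (cB + cB') + ((v 3 : ℂ) / (2 * Complex.I)) • (cB - cB') := by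
    funext z
    rw [real_inner_comm, qp_inner]
    simp only [Pi.add_apply, Pi.smul_apply, Pi.sub_apply, smul_eq_mul, cA, cA', cB, cB']
    rw [Complex.add_conj, Complex.add_conj, Complex.sub_conj, Complex.sub_conj]
    push_cast
    have := Complex.I_ne_zero
    field_simp
  rw [this]
  exact add_mem (add_mem (add_mem (LinS.smul_mem _ (add_mem m1 m2)) (LinS.smul_mem _ (sub_mem m1 m2)))
    (LinS.smul_mem _ (add_mem m3 m4))) (LinS.smul_mem _ (sub_mem m3 m4))

theorem kp_deg (n : ℕ) : ((kp n) ^ 8).natDegree ≤ 8 * n := by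
  refine natDegree_pow_le_of_le 8 ?_
  unfold kp
  refine (natDegree_C_mul_le _ _).trans ?_
  have := Chebyshev.natDegree_U_natCast ℝ n
  exact this.le

theorem kP8_even (n : ℕ) (t : ℝ) : kP n t ^ 8 =
    ∑ i ∈ Finset.range (4 * n + 1), ((kp n) ^ 8).coeff (2 * i) * t ^ (2 * i) := by
  have h1 : ∀ t : ℝ, kP n t ^ 8 = ∑ i ∈ Finset.range (8 * n + 2), ((kp n) ^ 8).coeff i * t ^ i := by
    intro t
    rw [kP, ← eval_pow]
    exact eval_eq_sum_range' (by have := kp_deg n; omega) t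
  have h2 : kP n (-t) ^ 8 = kP n t ^ 8 := by
    rw [← Even.pow_abs (n := 8) (by decide) (kP n (-t)), kP_neg_abs, Even.pow_abs (by decide)]
  have h3 : ∀ (M : ℕ) (f : ℕ → ℝ), ∑ i ∈ Finset.range (2 * M), f i =
      ∑ i ∈ Finset.range M, (f (2 * i) + f (2 * i + 1)) := by
    intro M f
    induction M with
    | zero => simp
    | succ M ih => rw [show 2 * (M + 1) = 2 * M + 1 + 1 by ring, Finset.sum_range_succ, Finset.sum_range_succ, ih, Finset.sum_range_succ]; ring
  have h4 : 2 * kP n t ^ 8 = kP n t ^ 8 + kP n (-t) ^ 8 := by rw [h2]; ring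
  have h6 := h1 t
  have h7 := h1 (-t)
  rw [show 8 * n + 2 = 2 * (4 * n + 1) by ring, h3] at h6 h7
  rw [h7] at h4
  nth_rewrite 2 [h6] at h4
  rw [← Finset.sum_add_distrib] at h4
  have h5 : ∀ i, ((kp n) ^ 8).coeff (2 * i) * t ^ (2 * i) + ((kp n) ^ 8).coeff (2 * i + 1) * t ^ (2 * i + 1) +
      (((kp n) ^ 8).coeff (2 * i) * (-t) ^ (2 * i) + ((kp n) ^ 8).coeff (2 * i + 1) * (-t) ^ (2 * i + 1)) =
      2 * (((kp n) ^ 8).coeff (2 * i) * t ^ (2 * i)) := by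
    intro i
    rw [pow_succ (-t), pow_succ t, Even.neg_pow (even_two_mul i)]; ring
  rw [Finset.sum_congr rfl (fun i _ => h5 i), ← Finset.mul_sum] at h4
  linarith

theorem qf_mem (K : Submodule ℂ (SO3 → ℂ)) (N : ℕ) (hK : ∀ j ≤ N, LinS ^ (2 * j) ≤ K) {M : ℕ} (n : ℕ)
    (hn : 4 * n + 1 ≤ N) (p V : Fin M → E4) (a : Fin M → ℝ) :
    (fun z : SO3 => ((qf n p V a (qp z) : ℝ) : ℂ)) ∈ K := by
  have : (fun z : SO3 => ((qf n p V a (qp z) : ℝ) : ℂ)) = ∑ j, ∑ i ∈ Finset.range (4 * n + 1),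
      ((((kp n) ^ 8).coeff (2 * i) : ℝ) : ℂ) • ((a j : ℂ) • (fun z : SO3 => ((inner ℝ (p j) (qp z) : ℝ) : ℂ)) ^ (2 * i)
        + (2 : ℂ) • ((fun z : SO3 => ((inner ℝ (p j) (qp z) : ℝ) : ℂ)) ^ (2 * i + 1) * (fun z : SO3 => ((inner ℝ (V j) (qp z) : ℝ) : ℂ)))) := by
    funext z
    simp only [qf, G0, kP8_even, Finset.sum_apply, Pi.add_apply, Pi.smul_apply, Pi.mul_apply, Pi.pow_apply, smul_eq_mul]
    push_cast
    refine Finset.sum_congr rfl fun j _ => ?_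
    rw [Finset.mul_sum]
    refine Finset.sum_congr rfl fun i _ => ?_
    ring
  rw [this]
  refine Submodule.sum_mem _ fun j _ => Submodule.sum_mem _ fun i hi => K.smul_mem _ (K.add_mem (K.smul_mem _ ?_) (K.smul_mem _ ?_))
  · have hi' := Finset.mem_range.1 hi
    exact hK i (by omega) (Submodule.pow_mem_pow _ (inner_linS _) _)
  · have hi' := Finset.mem_range.1 hi
    refine hK (i + 1) (by omega) ?_
    rw [show 2 * (i + 1) = (2 * i + 1) + 1 by ring, pow_succ]
    exact Submodule.mul_mem_mul (Submodule.pow_mem_pow _ (inner_linS _) _) (inner_linS _)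

end

section
open MeasureTheory

instance : BorelSpace SO3 := ⟨rfl⟩
instance : T2Space SO3 := inferInstanceAs (T2Space {x : Mat3 // IsSO3 x})

def NiceA : Subalgebra ℂ (SO3 → ℂ) where
  carrier := {f | Continuous f ∧ ∃ C : ℝ, ∀ z, ‖f z‖ ≤ C}
  mul_mem' := by
    rintro f g ⟨hf, C, hC⟩ ⟨hg, B, hB⟩
    refine ⟨hf.mul hg, C * B, fun z => ?_⟩
    rw [Pi.mul_apply, norm_mul]
    exact mul_le_mul (hC z) (hB z) (norm_nonneg _) ((norm_nonneg _).trans (hC z))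
  add_mem' := by
    rintro f g ⟨hf, C, hC⟩ ⟨hg, B, hB⟩
    exact ⟨hf.add hg, C + B, fun z => (norm_add_le _ _).trans (add_le_add (hC z) (hB z))⟩
  algebraMap_mem' := by
    intro r
    exact ⟨continuous_const, ‖r‖, fun z => le_of_eq rfl⟩

noncomputable def entC (i j : Fin 3) : SO3 → ℂ := fun z => ((z.1 i j : ℝ) : ℂ)

theorem entC_nice (i j : Fin 3) : entC i j ∈ NiceA := by
  constructor
  · have h1 : Continuous (fun z : SO3 => (z.1 : Mat3)) := continuous_subtype_val
    exact Complex.continuous_ofReal.comp (h1.matrix_elem i j)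
  · refine ⟨1, fun z => ?_⟩
    have e := congrFun (congrFun z.2.1 j) j
    simp only [Matrix.mul_apply, Matrix.transpose_apply, Matrix.one_apply_eq] at e
    have h2 : z.1 i j * z.1 i j ≤ 1 := by
      rw [← e]
      exact Finset.single_le_sum (f := fun k => z.1 k j * z.1 k j) (fun k _ => mul_self_nonneg _) (Finset.mem_univ i)
    rw [entC, Complex.norm_real, Real.norm_eq_abs]
    exact abs_le_one_iff_mul_self_le_one.2 h2

theorem smulC_nice {f : SO3 → ℂ} (c : ℂ) (hf : f ∈ NiceA) : c • f ∈ NiceA := NiceA.smul_mem hf c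

theorem gens_mul_nice (u v : SO3 → ℂ) (hu : u ∈ gens) (hv : v ∈ gens) : u * v ∈ NiceA := by
  have E := entC_nice
  have aa : cA * cA ∈ NiceA := by
    have : cA * cA = (1 / 2 : ℂ) • (entC 0 0 + entC 1 1) - (Complex.I / 2) • (entC 1 0 - entC 0 1) := by
      funext z
      simp only [Pi.add_apply, Pi.smul_apply, Pi.sub_apply, Pi.mul_apply, smul_eq_mul, cA, entC]
      rw [eq_Qm z]
      apply Complex.ext <;> simp [Qm, pow_two] <;> ring
    rw [this]
    exact sub_mem (smulC_nice _ (add_mem (E _ _) (E _ _))) (smulC_nice _ (sub_mem (E _ _) (E _ _)))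
  have aa' : cA' * cA' ∈ NiceA := by
    have : cA' * cA' = (1 / 2 : ℂ) • (entC 0 0 + entC 1 1) + (Complex.I / 2) • (entC 1 0 - entC 0 1) := by
      funext z
      simp only [Pi.add_apply, Pi.smul_apply, Pi.sub_apply, Pi.mul_apply, smul_eq_mul, cA', entC]
      rw [eq_Qm z]
      apply Complex.ext <;> simp [Qm, pow_two] <;> ring
    rw [this]
    exact add_mem (smulC_nice _ (add_mem (E _ _) (E _ _))) (smulC_nice _ (sub_mem (E _ _) (E _ _)))
  have bb : cB * cB ∈ NiceA := by
    have : cB * cB = (1 / 2 : ℂ) • (entC 0 0 - entC 1 1) - (Complex.I / 2) • (entC 1 0 + entC 0 1) := by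
      funext z
      simp only [Pi.add_apply, Pi.smul_apply, Pi.sub_apply, Pi.mul_apply, smul_eq_mul, cB, entC]
      rw [eq_Qm z]
      apply Complex.ext <;> simp [Qm, pow_two] <;> ring
    rw [this]
    exact sub_mem (smulC_nice _ (sub_mem (E _ _) (E _ _))) (smulC_nice _ (add_mem (E _ _) (E _ _)))
  have bb' : cB' * cB' ∈ NiceA := by
    have : cB' * cB' = (1 / 2 : ℂ) • (entC 0 0 - entC 1 1) + (Complex.I / 2) • (entC 1 0 + entC 0 1) := by
      funext z
      simp only [Pi.add_apply, Pi.smul_apply, Pi.sub_apply, Pi.mul_apply, smul_eq_mul, cB', entC]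
      rw [eq_Qm z]
      apply Complex.ext <;> simp [Qm, pow_two] <;> ring
    rw [this]
    exact add_mem (smulC_nice _ (sub_mem (E _ _) (E _ _))) (smulC_nice _ (add_mem (E _ _) (E _ _)))
  have a1 : cA * cA' ∈ NiceA := by
    have : cA * cA' = (1 / 2 : ℂ) • (1 + entC 2 2) := by
      funext z
      simp only [Pi.add_apply, Pi.smul_apply, Pi.one_apply, Pi.mul_apply, smul_eq_mul, cA, cA', entC]
      rw [eq_Qm z]
      have := q_sum z
      apply Complex.ext <;> simp [Qm, pow_two] at this ⊢ <;> first | linarith | ring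
    rw [this]
    exact smulC_nice _ (add_mem (one_mem _) (E _ _))
  have b1 : cB * cB' ∈ NiceA := by
    have : cB * cB' = (1 / 2 : ℂ) • (1 - entC 2 2) := by
      funext z
      simp only [Pi.sub_apply, Pi.smul_apply, Pi.one_apply, Pi.mul_apply, smul_eq_mul, cB, cB', entC]
      rw [eq_Qm z]
      have := q_sum z
      apply Complex.ext <;> simp [Qm, pow_two] at this ⊢ <;> first | linarith | ring
    rw [this]
    exact smulC_nice _ (sub_mem (one_mem _) (E _ _))
  have ab : cA * cB ∈ NiceA := by
    have : cA * cB = (-1 / 2 : ℂ) • entC 1 2 + (-Complex.I / 2) • entC 0 2 := by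
      funext z
      simp only [Pi.add_apply, Pi.smul_apply, Pi.mul_apply, smul_eq_mul, cA, cB, entC]
      rw [eq_Qm z]
      apply Complex.ext <;> simp [Qm, pow_two] <;> ring
    rw [this]
    exact add_mem (smulC_nice _ (E _ _)) (smulC_nice _ (E _ _))
  have ab' : cA' * cB' ∈ NiceA := by
    have : cA' * cB' = (-1 / 2 : ℂ) • entC 1 2 + (Complex.I / 2) • entC 0 2 := by
      funext z
      simp only [Pi.add_apply, Pi.smul_apply, Pi.mul_apply, smul_eq_mul, cA', cB', entC]
      rw [eq_Qm z]
      apply Complex.ext <;> simp [Qm, pow_two] <;> ring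
    rw [this]
    exact add_mem (smulC_nice _ (E _ _)) (smulC_nice _ (E _ _))
  have ac : cA * cB' ∈ NiceA := by
    have : cA * cB' = (1 / 2 : ℂ) • entC 2 1 + (-Complex.I / 2) • entC 2 0 := by
      funext z
      simp only [Pi.add_apply, Pi.smul_apply, Pi.mul_apply, smul_eq_mul, cA, cB', entC]
      rw [eq_Qm z]
      apply Complex.ext <;> simp [Qm, pow_two] <;> ring
    rw [this]
    exact add_mem (smulC_nice _ (E _ _)) (smulC_nice _ (E _ _))
  have ac' : cA' * cB ∈ NiceA := by
    have : cA' * cB = (1 / 2 : ℂ) • entC 2 1 + (Complex.I / 2) • entC 2 0 := by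
      funext z
      simp only [Pi.add_apply, Pi.smul_apply, Pi.mul_apply, smul_eq_mul, cA', cB, entC]
      rw [eq_Qm z]
      apply Complex.ext <;> simp [Qm, pow_two] <;> ring
    rw [this]
    exact add_mem (smulC_nice _ (E _ _)) (smulC_nice _ (E _ _))
  rcases hu with rfl | rfl | rfl | rfl <;> rcases hv with rfl | rfl | rfl | rfl <;>
    first | assumption | (rw [mul_comm]; assumption)

theorem linS_pow_nice (j : ℕ) : LinS ^ (2 * j) ≤ Subalgebra.toSubmodule NiceA := by
  have h : LinS ^ 2 ≤ Subalgebra.toSubmodule NiceA := by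
    rw [pow_two, LinS, Submodule.span_mul_span, Submodule.span_le]
    rintro f ⟨u, hu, v, hv, rfl⟩
    exact gens_mul_nice u v hu hv
  rw [pow_mul]
  induction j with
  | zero => rw [pow_zero, Submodule.one_le]; exact one_mem NiceA
  | succ j ih =>
    rw [pow_succ]
    refine Submodule.mul_le.2 fun f hf g hg => ?_
    exact NiceA.mul_mem (ih hf) (h hg)

theorem chi_nice (k m : ℤ) : (fun z : SO3 => chi (k + m) (ca z) * chi (k - m) (cb z)) ∈ NiceA := by
  have m1 : cA ∈ LinS := Submodule.subset_span (by simp [gens])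
  have m2 : cA' ∈ LinS := Submodule.subset_span (by simp [gens])
  have m3 : cB ∈ LinS := Submodule.subset_span (by simp [gens])
  have m4 : cB' ∈ LinS := Submodule.subset_span (by simp [gens])
  have h := Submodule.mul_mem_mul (Submodule.mul_mem_mul (Submodule.pow_mem_pow _ m1 (k + m).toNat) (Submodule.pow_mem_pow _ m2 (-(k + m)).toNat))
    (Submodule.mul_mem_mul (Submodule.pow_mem_pow _ m3 (k - m).toNat) (Submodule.pow_mem_pow _ m4 (-(k - m)).toNat))
  rw [← pow_add, ← pow_add, ← pow_add] at h
  obtain ⟨j, hj⟩ : ∃ j : ℕ, (k + m).toNat + (-(k + m)).toNat + ((k - m).toNat + (-(k - m)).toNat) = 2 * j :=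
    ⟨max k.natAbs m.natAbs, by omega⟩
  rw [hj] at h
  exact linS_pow_nice j h

theorem ct_nice : (fun z : SO3 => ((ct z : ℝ) : ℂ)) ∈ NiceA := by
  have h1 := gens_mul_nice cA cA' (by simp [gens]) (by simp [gens])
  have h2 := gens_mul_nice cB cB' (by simp [gens]) (by simp [gens])
  have : (fun z : SO3 => ((ct z : ℝ) : ℂ)) = cA * cA' - cB * cB' := by
    funext z
    have e1 := ca_sq z
    have e2 := cb_sq z
    simp only [Pi.sub_apply, Pi.mul_apply, cA, cA', cB, cB']
    rw [e1, e2]; ring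
  rw [this]
  exact sub_mem h1 h2

theorem wigner_nice (l : ℕ) (k m : ℤ) (h1 : -(l : ℤ) ≤ k) (h2 : k ≤ l) (h3 : -(l : ℤ) ≤ m) (h4 : m ≤ l)
    (D : ℕ → ℤ → ℤ → Mat3 → ℂ) (hD : IsWignerFamily D) : (fun z : SO3 => D l k m z.1) ∈ NiceA := by
  obtain ⟨κ, Q, _, _, _, hQ⟩ := wigner_form l k m h1 h2 h3 h4 D hD
  have : (fun z : SO3 => D l k m z.1) = κ • ((fun z : SO3 => chi (k + m) (ca z) * chi (k - m) (cb z)) *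
      ∑ i ∈ Finset.range (Q.natDegree + 1), ((Q.coeff i : ℝ) : ℂ) • (fun z : SO3 => ((ct z : ℝ) : ℂ)) ^ i) := by
    funext z
    simp only [hQ, Pi.smul_apply, Pi.mul_apply, smul_eq_mul, Finset.sum_apply, Pi.pow_apply]
    rw [Polynomial.eval_eq_sum_range]
    push_cast
    rfl
  rw [this]
  exact smulC_nice _ (mul_mem (chi_nice k m) (sum_mem fun i _ => smulC_nice _ (pow_mem ct_nice i)))

theorem nice_int {f : SO3 → ℂ} (hf : f ∈ NiceA) (ν : Measure SO3) [IsFiniteMeasure ν] : Integrable f ν := by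
  obtain ⟨h, C, hC⟩ := hf
  exact Integrable.of_bound h.aestronglyMeasurable C (Filter.Eventually.of_forall hC)

def KS (μ ν : SignedMeasure SO3) : Submodule ℂ (SO3 → ℂ) where
  carrier := {f | f ∈ NiceA ∧ pairSM μ f = pairSM ν f}
  zero_mem' := ⟨zero_mem NiceA, by simp [pairSM]⟩
  add_mem' := by
    rintro f g ⟨hf, h1⟩ ⟨hg, h2⟩
    refine ⟨add_mem hf hg, ?_⟩
    have : ∀ μ : SignedMeasure SO3, pairSM μ (f + g) = pairSM μ f + pairSM μ g := by
      intro μ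
      simp only [pairSM, Pi.add_apply]
      rw [integral_add (nice_int hf _) (nice_int hg _), integral_add (nice_int hf _) (nice_int hg _)]; ring
    rw [this, this, h1, h2]
  smul_mem' := by
    rintro c f ⟨hf, h1⟩
    refine ⟨smulC_nice c hf, ?_⟩
    have : ∀ μ : SignedMeasure SO3, pairSM μ (c • f) = c * pairSM μ f := by
      intro μ
      simp only [pairSM, Pi.smul_apply, smul_eq_mul, integral_const_mul]; ring
    rw [this, this, h1]

/-- real pairing -/
noncomputable def rp (μ : SignedMeasure SO3) (f : SO3 → ℝ) : ℝ :=
  (∫ a, f a ∂μ.toJordanDecomposition.posPart) - ∫ a, f a ∂μ.toJordanDecomposition.negPart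

theorem qf_pair (N : ℕ) (D : ℕ → ℤ → ℤ → Mat3 → ℂ) (hD : IsWignerFamily D) (μ ν : SignedMeasure SO3)
    (hmom : ∀ l : ℕ, l ≤ N → ∀ k m : ℤ, -(l : ℤ) ≤ k → k ≤ l → -(l : ℤ) ≤ m → m ≤ l →
      pairSM μ (fun z => D l k m z.1) = pairSM ν (fun z => D l k m z.1))
    {M : ℕ} (n : ℕ) (hn : 4 * n + 1 ≤ N) (p V : Fin M → E4) (a : Fin M → ℝ) :
    Continuous (fun z : SO3 => qf n p V a (qp z)) ∧
    rp μ (fun z => qf n p V a (qp z)) = rp ν (fun z => qf n p V a (qp z)) := by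
  have h : (fun z : SO3 => ((qf n p V a (qp z) : ℝ) : ℂ)) ∈ KS μ ν := by
    refine qf_mem (KS μ ν) N ?_ n hn p V a
    intro j hj
    exact linS_pow_le N D hD (KS μ ν) (fun l hl k m h1 h2 h3 h4 =>
      ⟨wigner_nice l k m h1 h2 h3 h4 D hD, hmom l hl k m h1 h2 h3 h4⟩) j hj
  obtain ⟨⟨hc, _⟩, hp⟩ := h
  refine ⟨?_, ?_⟩
  · have := Complex.continuous_re.comp hc
    exact this
  · simp only [pairSM, integral_complex_ofReal] at hp
    simp only [rp]
    exact_mod_cast hp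

end

section
open MeasureTheory

theorem jordan_eq (μ : SignedMeasure SO3) (ν1 ν2 : Measure SO3) [IsFiniteMeasure ν1] [IsFiniteMeasure ν2]
    (h : μ = ν1.toSignedMeasure - ν2.toSignedMeasure) :
    μ.toJordanDecomposition.posPart + ν2 = ν1 + μ.toJordanDecomposition.negPart := by
  have h1 := μ.toSignedMeasure_toJordanDecomposition
  rw [JordanDecomposition.toSignedMeasure] at h1
  rw [← Measure.toSignedMeasure_eq_toSignedMeasure_iff, Measure.toSignedMeasure_add, Measure.toSignedMeasure_add]
  rw [h] at h1 ⊢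
  rw [sub_eq_sub_iff_add_eq_add] at h1
  exact h1

theorem jordan_tv (μ : SignedMeasure SO3) (ν1 ν2 : Measure SO3) [IsFiniteMeasure ν1] [IsFiniteMeasure ν2]
    (h : μ = ν1.toSignedMeasure - ν2.toSignedMeasure) :
    tvNorm μ ≤ ν1 Set.univ + ν2 Set.univ := by
  have h1 := jordan_eq μ ν1 ν2 h
  obtain ⟨S, hS, hS1, hS2⟩ := μ.toJordanDecomposition.mutuallySingular
  rw [tvNorm, SignedMeasure.totalVariation, Measure.add_apply]
  have e1 := congrArg (fun m : Measure SO3 => m Sᶜ) h1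
  have e2 := congrArg (fun m : Measure SO3 => m S) h1
  simp only [Measure.add_apply, hS1, hS2, add_zero, zero_add] at e1 e2
  refine add_le_add ?_ ?_
  · calc _ = μ.toJordanDecomposition.posPart S + μ.toJordanDecomposition.posPart Sᶜ := (measure_add_measure_compl hS).symm
      _ ≤ ν1 Sᶜ := by rw [hS1, zero_add, ← e1]; exact le_self_add
      _ ≤ _ := measure_mono (Set.subset_univ _)
  · calc _ = μ.toJordanDecomposition.negPart S + μ.toJordanDecomposition.negPart Sᶜ := (measure_add_measure_compl hS).symm
      _ ≤ ν2 S := by rw [hS2, add_zero, e2]; exact le_add_self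
      _ ≤ _ := measure_mono (Set.subset_univ _)

theorem jordan_rp (μ : SignedMeasure SO3) (ν1 ν2 : Measure SO3) [IsFiniteMeasure ν1] [IsFiniteMeasure ν2]
    (h : μ = ν1.toSignedMeasure - ν2.toSignedMeasure) (f : SO3 → ℝ)
    (hf : ∀ ν : Measure SO3, IsFiniteMeasure ν → Integrable f ν) :
    rp μ f = ∫ z, f z ∂ν1 - ∫ z, f z ∂ν2 := by
  have h1 := jordan_eq μ ν1 ν2 h
  have h2 : ∫ z, f z ∂(μ.toJordanDecomposition.posPart + ν2) = ∫ z, f z ∂(ν1 + μ.toJordanDecomposition.negPart) := by rw [h1]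
  rw [integral_add_measure (hf _ inferInstance) (hf _ inferInstance),
    integral_add_measure (hf _ inferInstance) (hf _ inferInstance)] at h2
  rw [rp]; linarith

/-- atomic measure -/
noncomputable def atomM {M : ℕ} (c : Fin M → ℝ) (x : Fin M → SO3) : Measure SO3 :=
  Measure.sum fun i => ENNReal.ofReal (c i) • Measure.dirac (x i)

theorem atomM_univ {M : ℕ} (c : Fin M → ℝ) (x : Fin M → SO3) : atomM c x Set.univ = ∑ i, ENNReal.ofReal (c i) := by
  simp [atomM, Measure.sum_apply]

instance {M : ℕ} (c : Fin M → ℝ) (x : Fin M → SO3) : IsFiniteMeasure (atomM c x) :=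
  ⟨by rw [atomM_univ]; exact ENNReal.sum_lt_top.2 fun i _ => ENNReal.ofReal_lt_top⟩

theorem atomM_int {M : ℕ} (c : Fin M → ℝ) (x : Fin M → SO3) (f : SO3 → ℝ) (hm : Measurable f) :
    ∫ z, f z ∂(atomM c x) = ∑ i, max (c i) 0 * f (x i) := by
  rw [atomM, Measure.sum_fintype, integral_finsetSum_measure]
  · refine Finset.sum_congr rfl fun i _ => ?_
    rw [integral_smul_measure, integral_dirac, ENNReal.toReal_ofReal', smul_eq_mul]
  · intro i _
    refine Integrable.smul_measure ?_ ENNReal.ofReal_ne_top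
    exact integrable_dirac (by simp)

theorem sm_sum_apply {M : ℕ} (f : Fin M → SignedMeasure SO3) (E : Set SO3) : (∑ i, f i) E = ∑ i, f i E := by
  have := map_sum (FunLike.coeAddMonoidHom (SignedMeasure SO3) (Set SO3) ℝ) f Finset.univ
  have := congrFun this E
  rw [Finset.sum_apply] at this
  exact this

theorem sum_dirac_eq {M : ℕ} (c : Fin M → ℝ) (x : Fin M → SO3) :
    ∑ i, c i • diracSM (x i) = (atomM c x).toSignedMeasure - (atomM (fun i => - c i) x).toSignedMeasure := by
  ext E hE
  have h := fun c : Fin M → ℝ => atomM_int c x (E.indicator 1) (measurable_one.indicator hE)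
  have h2 := fun c : Fin M → ℝ => integral_indicator_one (μ := atomM c x) hE
  rw [sub_apply, Measure.toSignedMeasure_apply_measurable hE, Measure.toSignedMeasure_apply_measurable hE,
    ← h2, ← h2, h, h, ← Finset.sum_sub_distrib, sm_sum_apply]
  refine Finset.sum_congr rfl fun i _ => ?_
  rw [_root_.smul_apply, diracSM, Measure.toSignedMeasure_apply_measurable hE, ← integral_indicator_one hE,
    integral_dirac, smul_eq_mul, ← sub_mul]
  congr 1
  rcases le_total 0 (c i) with h | h
  · rw [max_eq_left h, max_eq_right (by linarith)]; ring
  · rw [max_eq_right h, max_eq_left (by linarith)]; ring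

theorem rp_star {M : ℕ} (c : Fin M → ℝ) (x : Fin M → SO3) (f : SO3 → ℝ) (hm : Measurable f)
    (hf : ∀ ν : Measure SO3, IsFiniteMeasure ν → Integrable f ν) :
    rp (∑ i, c i • diracSM (x i)) f = ∑ i, c i * f (x i) := by
  rw [jordan_rp _ _ _ (sum_dirac_eq c x) f hf, atomM_int _ _ _ hm, atomM_int _ _ _ hm, ← Finset.sum_sub_distrib]
  refine Finset.sum_congr rfl fun i _ => ?_
  rw [← sub_mul]
  congr 1
  rcases le_total 0 (c i) with h | h
  · rw [max_eq_left h, max_eq_right (by linarith)]; ring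
  · rw [max_eq_right h, max_eq_left (by linarith)]; ring

theorem tv_star {M : ℕ} (c : Fin M → ℝ) (x : Fin M → SO3) :
    tvNorm (∑ i, c i • diracSM (x i)) ≤ ENNReal.ofReal (∑ i, |c i|) := by
  refine (jordan_tv _ _ _ (sum_dirac_eq c x)).trans ?_
  rw [atomM_univ, atomM_univ, ← Finset.sum_add_distrib, ENNReal.ofReal_sum_of_nonneg (fun i _ => abs_nonneg _)]
  refine Finset.sum_le_sum fun i _ => ?_
  rcases le_total 0 (c i) with h | h
  · rw [abs_of_nonneg h, ENNReal.ofReal_of_nonpos (by linarith : - c i ≤ 0), add_zero]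
  · rw [abs_of_nonpos h, ENNReal.ofReal_of_nonpos h, zero_add]

theorem conc_int {M : ℕ} (x : Fin M → SO3) (hinj : Function.Injective x) (ν : Measure SO3) [IsFiniteMeasure ν]
    (h : ν (Set.range x)ᶜ = 0) (f : SO3 → ℝ) (hf : Integrable f ν) :
    ∫ z, f z ∂ν = ∑ i, ν.real {x i} * f (x i) := by
  classical
  have hr : ν.restrict (Set.range x) = ν := Measure.restrict_eq_self_of_ae_mem (by rw [ae_iff]; exact h)
  have hs : Set.range x = ((Finset.univ.image x : Finset SO3) : Set SO3) := by simp
  have h1 : ∫ z, f z ∂ν = ∫ z in ((Finset.univ.image x : Finset SO3) : Set SO3), f z ∂ν := by rw [← hs, hr]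
  rw [h1, setIntegral_finset _ hf.integrableOn, Finset.sum_image (fun a _ b _ h => hinj h)]
  simp

theorem duality {M : ℕ} (c : Fin M → ℝ) (x : Fin M → SO3) (hinj : Function.Injective x)
    (μ : SignedMeasure SO3)
    (hcert : ∀ s : Fin M → ℝ, (∀ i, s i = 1 ∨ s i = -1) → ∃ q : SO3 → ℝ, Continuous q ∧
      (∀ i, q (x i) = s i) ∧ (∀ z, z ∉ Set.range x → |q z| < 1) ∧
      rp μ q = rp (∑ i, c i • diracSM (x i)) q)
    (hne : μ ≠ ∑ i, c i • diracSM (x i)) :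
    tvNorm (∑ i, c i • diracSM (x i)) < tvNorm μ := by
  by_contra hlt
  push Not at hlt
  apply hne
  have hle := hlt.trans (tv_star c x)
  set P := μ.toJordanDecomposition.posPart with hP
  set Ng := μ.toJordanDecomposition.negPart with hNg
  have hbd : ∀ (s : Fin M → ℝ) (q : SO3 → ℝ), (∀ i, s i = 1 ∨ s i = -1) → (∀ i, q (x i) = s i) →
      (∀ z, z ∉ Set.range x → |q z| < 1) → ∀ z, |q z| ≤ 1 := by
    intro s q hs h1 h2 z
    by_cases hz : z ∈ Set.range x
    · obtain ⟨i, rfl⟩ := hz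
      rw [h1]; rcases hs i with h | h <;> rw [h] <;> norm_num
    · exact (h2 z hz).le
  have hint : ∀ q : SO3 → ℝ, Continuous q → (∀ z, |q z| ≤ 1) → ∀ ν : Measure SO3, IsFiniteMeasure ν → Integrable q ν := by
    intro q hq hb ν _
    exact Integrable.of_bound hq.aestronglyMeasurable 1 (Filter.Eventually.of_forall hb)
  -- concentration
  have hT : (P + Ng) (Set.range x)ᶜ = 0 := by
    let s : Fin M → ℝ := fun i => if 0 ≤ c i then 1 else -1
    have hs : ∀ i, s i = 1 ∨ s i = -1 := by
      intro i; simp only [s]; split_ifs <;> simp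
    obtain ⟨q, hq, h1, h2, h3⟩ := hcert s hs
    have hb := hbd s q hs h1 h2
    have hI := hint q hq hb
    rw [rp_star c x q hq.measurable hI] at h3
    have h4 : ∑ i, c i * q (x i) = ∑ i, |c i| := by
      refine Finset.sum_congr rfl fun i _ => ?_
      rw [h1]; simp only [s]
      split_ifs with h
      · rw [abs_of_nonneg h, mul_one]
      · rw [abs_of_neg (not_le.1 h)]; ring
    rw [h4, rp, ← hP, ← hNg] at h3
    have hTI : Integrable (fun z => |q z|) (P + Ng) := (hI _ inferInstance).abs
    have h5 : ∑ i, |c i| ≤ ∫ z, |q z| ∂(P + Ng) := by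
      rw [integral_add_measure (hI _ inferInstance).abs (hI _ inferInstance).abs, ← h3]
      have a1 := le_trans (le_abs_self _) (abs_integral_le_integral_abs (f := q) (μ := P))
      have a2 := le_trans (neg_le_abs _) (abs_integral_le_integral_abs (f := q) (μ := Ng))
      linarith
    have h6 : (P + Ng).real Set.univ ≤ ∑ i, |c i| := by
      rw [tvNorm, SignedMeasure.totalVariation] at hle
      exact ENNReal.toReal_le_of_le_ofReal (Finset.sum_nonneg fun i _ => abs_nonneg _) hle
    have h7 : ∫ z, (1 - |q z|) ∂(P + Ng) = 0 := by
      have h0 : 0 ≤ ∫ z, (1 - |q z|) ∂(P + Ng) := integral_nonneg fun z => by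
        simp only [Pi.zero_apply]; linarith [hb z]
      rw [integral_sub (integrable_const _) hTI, integral_const, smul_eq_mul, mul_one] at h0 ⊢
      linarith
    rw [integral_eq_zero_iff_of_nonneg (f := fun z => 1 - |q z|) (fun z => by simp only [Pi.zero_apply]; linarith [hb z])
      ((integrable_const _).sub hTI)] at h7
    rw [Filter.EventuallyEq, ae_iff] at h7
    refine measure_mono_null ?_ h7
    intro z hz
    have := h2 z hz
    simp only [Set.mem_ofPred_eq, Pi.zero_apply]
    intro h8; linarith
  rw [Measure.add_apply, add_eq_zero] at hT
  obtain ⟨hT1, hT2⟩ := hT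
  let b : Fin M → ℝ := fun i => P.real {x i} - Ng.real {x i}
  have hrp : ∀ q : SO3 → ℝ, (∀ ν : Measure SO3, IsFiniteMeasure ν → Integrable q ν) → ∫ z, q z ∂P - ∫ z, q z ∂Ng = ∑ i, b i * q (x i) := by
    intro q hI
    rw [conc_int x hinj P hT1 q (hI _ inferInstance), conc_int x hinj Ng hT2 q (hI _ inferInstance),
      ← Finset.sum_sub_distrib]
    refine Finset.sum_congr rfl fun i _ => ?_
    simp only [b]; ring
  have hbc : ∀ i, b i = c i := by
    let s : Fin M → ℝ := fun i => if 0 ≤ b i - c i then 1 else -1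
    have hs : ∀ i, s i = 1 ∨ s i = -1 := by
      intro i; simp only [s]; split_ifs <;> simp
    obtain ⟨q, hq, h1, h2, h3⟩ := hcert s hs
    have hb := hbd s q hs h1 h2
    have hI := hint q hq hb
    rw [rp_star c x q hq.measurable hI, rp, ← hP, ← hNg, hrp q hI] at h3
    have h4 : ∑ i, |b i - c i| = 0 := by
      have : ∑ i, |b i - c i| = ∑ i, b i * q (x i) - ∑ i, c i * q (x i) := by
        rw [← Finset.sum_sub_distrib]
        refine Finset.sum_congr rfl fun i _ => ?_
        rw [h1]; simp only [s]
        split_ifs with h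
        · rw [abs_of_nonneg h]; ring
        · rw [abs_of_neg (not_le.1 h)]; ring
      rw [this, h3, sub_self]
    intro i
    have := (Finset.sum_eq_zero_iff_of_nonneg (fun i _ => abs_nonneg _)).1 h4 i (Finset.mem_univ i)
    linarith [abs_eq_zero.1 this]
  have hμ : μ = P.toSignedMeasure - Ng.toSignedMeasure := μ.toSignedMeasure_toJordanDecomposition.symm
  rw [hμ]
  ext E hE
  have hEI : ∀ ν : Measure SO3, IsFiniteMeasure ν → Integrable (E.indicator (1 : SO3 → ℝ)) ν :=
    fun ν _ => (integrable_const (1 : ℝ)).indicator hE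
  have h1 := hrp _ hEI
  rw [integral_indicator_one hE, integral_indicator_one hE] at h1
  rw [sub_apply, Measure.toSignedMeasure_apply_measurable hE, Measure.toSignedMeasure_apply_measurable hE,
    h1, sm_sum_apply]
  refine Finset.sum_congr rfl fun i _ => ?_
  rw [_root_.smul_apply, diracSM, Measure.toSignedMeasure_apply_measurable hE, ← integral_indicator_one hE,
    integral_dirac, smul_eq_mul, hbc]

theorem main_aux
    (N : ℕ) (hN : 20 ≤ N)
    (M : ℕ) (c : Fin M → ℝ)
    (x : Fin M → SO3) (hinj : Function.Injective x)
    (hsep : ∀ i j, i ≠ j →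
      36 / ((N : ℝ) + 1) ≤ rotAngle (((x j).1)⁻¹ * ((x i).1)))
    (D : ℕ → ℤ → ℤ → Mat3 → ℂ) (hD : IsWignerFamily D)
    (μ : SignedMeasure SO3)
    (hmom : ∀ l : ℕ, l ≤ N → ∀ k m : ℤ, -(l : ℤ) ≤ k → k ≤ l → -(l : ℤ) ≤ m → m ≤ l →
      pairSM μ (fun z => D l k m z.1) =
        pairSM (∑ i, c i • diracSM (x i)) (fun z => D l k m z.1))
    (hne : μ ≠ ∑ i, c i • diracSM (x i)) :
    tvNorm (∑ i, c i • diracSM (x i)) < tvNorm μ := by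
  obtain ⟨n, hn4, hn1, hn2⟩ : ∃ n : ℕ, 4 ≤ n ∧ 4 * n + 1 ≤ N ∧ N ≤ 4 * (n + 1) :=
    ⟨(N + 3) / 4 - 1, by omega, by omega, by omega⟩
  refine duality c x hinj μ ?_ hne
  intro s hs
  have hcos : Real.cos (18 / ((N : ℝ) + 1)) ≤ Real.cos (30 / 7 / ((n : ℝ) + 1)) := by
    have hN' : (20 : ℝ) ≤ N := by exact_mod_cast hN
    have hn' : (4 : ℝ) ≤ n := by exact_mod_cast hn4
    have hn2' : (N : ℝ) ≤ 4 * (n + 1) := by exact_mod_cast hn2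
    refine Real.cos_le_cos_of_nonneg_of_le_pi (by positivity) ?_ ?_
    · have : 18 / ((N : ℝ) + 1) ≤ 1 := by rw [div_le_one (by positivity)]; linarith
      linarith [Real.pi_gt_three]
    · rw [div_le_div_iff₀ (by positivity) (by positivity)]; linarith
  obtain ⟨a, V, h1, h2⟩ := certificate n hn4 (fun i => qp (x i)) (fun i => qp_norm _)
    (fun i j hij => (sep_inner N hN (x i) (x j) (hsep i j hij)).trans hcos) s hs
  obtain ⟨h3, h4⟩ := qf_pair N D hD μ _ hmom n hn1 (fun i => qp (x i)) V a
  refine ⟨fun z => qf n (fun i => qp (x i)) V a (qp z), h3, h1, ?_, h4⟩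
  intro z hz
  refine h2 (qp z) (qp_norm z) ?_
  intro i hi
  exact hz ⟨i, eq_of_inner _ _ hi⟩

end

open MeasureTheory in
theorem exact_recovery_from_wigner_moments
    (N : ℕ) (hN : 20 ≤ N)
    (M : ℕ) (c : Fin M → ℝ) (hc : ∀ i, c i ≠ 0)
    (x : Fin M → SO3) (hinj : Function.Injective x)
    (hsep : ∀ i j, i ≠ j →
      36 / ((N : ℝ) + 1) ≤ rotAngle (((x j : Mat3))⁻¹ * ((x i : Mat3))))
    (D : ℕ → ℤ → ℤ → Mat3 → ℂ) (hD : IsWignerFamily D)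
    (μ : SignedMeasure SO3)
    (hmom : ∀ l : ℕ, l ≤ N → ∀ k m : ℤ, -(l : ℤ) ≤ k → k ≤ l → -(l : ℤ) ≤ m → m ≤ l →
      pairSM μ (fun z => D l k m (z : Mat3)) =
        pairSM (∑ i, c i • diracSM (x i)) (fun z => D l k m (z : Mat3)))
    (hne : μ ≠ ∑ i, c i • diracSM (x i)) :
    tvNorm (∑ i, c i • diracSM (x i)) < tvNorm μ := by
  exact main_aux N hN M c x hinj hsep D hD μ hmom hne
end

section
/- Let r > 0, let C ⊂ SO(3) be a finite set with d(p,q) ≥ r for all distinct p,q ∈ C, let x_j ∈ C, and let x ∈ SO(3). Then the number of points x_i ∈ C \ {x_j} with d(x,x_i) ≤ r is at most 27. -/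
noncomputable section

/-- the bi-invariant metric d(x,y) = ω(y⁻¹x) -/
def so3Dist (x y : Mat3) : ℝ := rotAngle (y⁻¹ * x)

end

lemma psd_sum {ι κ : Type*} (S : Finset ι) (K : Finset κ) (φ : κ → ι → ℝ) :
    0 ≤ ∑ i ∈ S, ∑ j ∈ S, ∑ k ∈ K, φ k i * φ k j := by
  have h : ∑ i ∈ S, ∑ j ∈ S, ∑ k ∈ K, φ k i * φ k j
      = ∑ k ∈ K, (∑ i ∈ S, φ k i) * (∑ j ∈ S, φ k j) := by
    simp_rw [Finset.sum_mul_sum]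
    rw [Finset.sum_comm (s := K)]
    refine Finset.sum_congr rfl fun i _ => ?_
    rw [Finset.sum_comm]
  rw [h]
  exact Finset.sum_nonneg fun k _ => mul_self_nonneg _

lemma code_bound {ι : Type*} (S : Finset ι) (x y z : ι → ℝ)
    (hu : ∀ i ∈ S, x i ^ 2 + y i ^ 2 + z i ^ 2 = 1)
    (hd : ∀ i ∈ S, ∀ j ∈ S, i ≠ j → x i * x j + y i * y j + z i * z j ≤ 1 / 2) :
    S.card ≤ 25 := by
  classical
  let v : ι → Fin 3 → ℝ := fun i => ![x i, y i, z i]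
  let t : ι → ι → ℝ := fun i j => x i * x j + y i * y j + z i * z j
  let δ : Fin 3 → Fin 3 → ℝ := fun a b => if a = b then 1 / 3 else 0
  have h1 : 0 ≤ ∑ i ∈ S, ∑ j ∈ S, t i j := by
    have := psd_sum S (Finset.univ : Finset (Fin 3)) (fun a i => v i a)
    simpa [Fin.sum_univ_three, v, t] using this
  have h2 : 0 ≤ ∑ i ∈ S, ∑ j ∈ S, (t i j ^ 2 - 1 / 3) := by
    have := psd_sum S (Finset.univ : Finset (Fin 3 × Fin 3))
      (fun a i => v i a.1 * v i a.2 - δ a.1 a.2)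
    refine this.trans_eq (Finset.sum_congr rfl fun i hi => Finset.sum_congr rfl fun j hj => ?_)
    simp [Fintype.sum_prod_type, Fin.sum_univ_three, v, t, δ]
    linear_combination (-1 / 3 : ℝ) * hu i hi - (1 / 3 : ℝ) * hu j hj
  have h3 : 0 ≤ ∑ i ∈ S, ∑ j ∈ S, (t i j ^ 3 - 1 / 3 * t i j) := by
    have := psd_sum S (Finset.univ : Finset (Fin 3 × Fin 3 × Fin 3))
      (fun a i => (v i a.1 * v i a.2.1 - δ a.1 a.2.1) * v i a.2.2)
    refine this.trans_eq (Finset.sum_congr rfl fun i hi => Finset.sum_congr rfl fun j hj => ?_)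
    simp [Fintype.sum_prod_type, Fin.sum_univ_three, v, t, δ]
    linear_combination (t i j) * ((-1 / 3 : ℝ) * hu i hi - (1 / 3 : ℝ) * hu j hj)
  have key : ∀ i ∈ S, ∀ j ∈ S, (t i j ^ 3 - 1 / 3 * t i j) + 5 / 6 * (t i j ^ 2 - 1 / 3)
      + 1 / 9 * t i j + 1 / 18 ≤ if i = j then 25 / 18 else 0 := by
    intro i hi j hj
    have e : (t i j ^ 3 - 1 / 3 * t i j) + 5 / 6 * (t i j ^ 2 - 1 / 3)
      + 1 / 9 * t i j + 1 / 18 = (t i j - 1 / 2) * (t i j + 2 / 3) ^ 2 := by ring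
    rw [e]
    split_ifs with h
    · subst h
      have : t i i = 1 := by rw [← hu i hi]; simp only [t]; ring
      rw [this]; norm_num
    · have := hd i hi j hj h
      exact mul_nonpos_of_nonpos_of_nonneg (by simp only [t]; linarith) (sq_nonneg _)
  have hs := Finset.sum_le_sum fun i hi => Finset.sum_le_sum (key i hi)
  simp only [Finset.sum_add_distrib, ← Finset.mul_sum] at hs
  have e1 : ∑ i ∈ S, ∑ j ∈ S, (if i = j then (25 / 18 : ℝ) else 0) = S.card * (25 / 18) := by
    rw [Finset.sum_congr rfl (g := fun _ => (25 / 18 : ℝ))]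
    · simp
    · intro i hi; simp [hi]
  rw [e1] at hs
  simp only [Finset.sum_const, nsmul_eq_mul] at hs
  have hN : (S.card : ℝ) * S.card ≤ S.card * 25 := by nlinarith
  by_contra hc
  have hc' : (25 : ℝ) < S.card := by exact_mod_cast not_le.mp hc
  nlinarith

def qmat (a b c d : ℝ) : Mat3 :=
  !![a^2+b^2-c^2-d^2, 2*(b*c-a*d), 2*(b*d+a*c);
     2*(b*c+a*d), a^2-b^2+c^2-d^2, 2*(c*d-a*b);
     2*(b*d-a*c), 2*(c*d+a*b), a^2-b^2-c^2+d^2]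

lemma so3_mul_transpose {R : Mat3} (h : IsSO3 R) : R * R.transpose = 1 :=
  mul_eq_one_comm.mp h.1

lemma rank_one (K : Matrix (Fin 4) (Fin 4) ℝ) (ht : ∑ i, K i i = 4)
    (hK : ∀ i j k, K i j * K i k = K i i * K j k) :
    ∃ q : Fin 4 → ℝ, ∀ j k, q j * q k = K j k / 4 := by
  obtain ⟨i, hi⟩ : ∃ i, 0 < K i i := by
    by_contra! H
    have := Finset.sum_nonpos (s := Finset.univ) fun i _ => H i
    linarith
  refine ⟨fun j => Real.sqrt (1 / (4 * K i i)) * K i j, fun j k => ?_⟩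
  have hs : Real.sqrt (1 / (4 * K i i)) * Real.sqrt (1 / (4 * K i i)) = 1 / (4 * K i i) :=
    Real.mul_self_sqrt (by positivity)
  calc _ = (Real.sqrt (1 / (4 * K i i)) * Real.sqrt (1 / (4 * K i i))) * (K i j * K i k) := by ring
    _ = _ := by rw [hs, hK]; field_simp

lemma so3_lift (R : Mat3) (h : IsSO3 R) : ∃ a b c d : ℝ, 0 ≤ a ∧
    a^2+b^2+c^2+d^2 = 1 ∧ R = qmat a b c d := by
  suffices H : ∃ a b c d : ℝ, a^2+b^2+c^2+d^2 = 1 ∧ R = qmat a b c d by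
    obtain ⟨a, b, c, d, h1, h2⟩ := H
    rcases le_total 0 a with ha | ha
    · exact ⟨a, b, c, d, ha, h1, h2⟩
    · exact ⟨-a, -b, -c, -d, by linarith, by linarith [h1], by rw [h2]; simp [qmat]⟩
  have hadj : R.adjugate = R.transpose := by
    have h1 := Matrix.mul_adjugate R
    rw [h.2, one_smul] at h1
    calc R.adjugate = (R.transpose * R) * R.adjugate := by rw [h.1, one_mul]
      _ = R.transpose := by rw [mul_assoc, h1, mul_one]
  have hr := h.1
  have hc := so3_mul_transpose h
  have hR : R = !![R 0 0, R 0 1, R 0 2; R 1 0, R 1 1, R 1 2; R 2 0, R 2 1, R 2 2] :=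
    Matrix.eta_fin_three R
  rw [Matrix.adjugate_fin_three] at hadj
  have A := fun i j => congrFun (congrFun hadj i) j
  have B := fun i j => congrFun (congrFun hr i) j
  have D := fun i j => congrFun (congrFun hc i) j
  simp [Fin.forall_fin_succ, Matrix.mul_apply, Fin.sum_univ_three] at A B D
  generalize R 0 0 = a at *
  generalize R 0 1 = b at *
  generalize R 0 2 = c at *
  generalize R 1 0 = d at *
  generalize R 1 1 = e at *
  generalize R 1 2 = f at *
  generalize R 2 0 = g at *
  generalize R 2 1 = h at *
  generalize R 2 2 = i at *
  obtain ⟨⟨A1, A2, A3⟩, ⟨A4, A5, A6⟩, A7, A8, A9⟩ := A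
  obtain ⟨⟨B1, B2, B3⟩, ⟨-, B5, B6⟩, -, -, B9⟩ := B
  obtain ⟨⟨D1, D2, D3⟩, ⟨-, D5, D6⟩, -, -, D9⟩ := D
  clear hadj hr hc
  obtain ⟨q, hq⟩ := rank_one !![1+a+e+i, h-f, c-g, d-b; h-f, 1+a-e-i, b+d, c+g;
    c-g, b+d, 1-a+e-i, f+h; d-b, c+g, f+h, 1-a-e+i]
    (by simp [Fin.sum_univ_four]; ring)
    (by
      intro j k l
      fin_cases j <;> fin_cases k <;> fin_cases l <;> simp <;> linarith)
  have hq' := hq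
  simp [Fin.forall_fin_succ] at hq
  obtain ⟨⟨q00, q01, q02, q03⟩, ⟨-, q11, q12, q13⟩, ⟨-, -, q22, q23⟩, -, -, -, q33⟩ := hq
  refine ⟨q 0, q 1, q 2, q 3, by linarith, ?_⟩
  rw [hR, qmat]
  ext j k
  fin_cases j <;> fin_cases k <;> simp <;> linarith

lemma so3_inv {R : Mat3} (h : IsSO3 R) : R⁻¹ = R.transpose :=
  Matrix.inv_eq_left_inv h.1

lemma trace_qmat (a b c d a' b' c' d' : ℝ) (h : a^2+b^2+c^2+d^2 = 1)
    (h' : a'^2+b'^2+c'^2+d'^2 = 1) :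
    Matrix.trace ((qmat a' b' c' d').transpose * qmat a b c d)
      = 4 * (a * a' + b * b' + c * c' + d * d') ^ 2 - 1 := by
  simp [qmat, Matrix.trace_fin_three, Matrix.mul_apply, Fin.sum_univ_three]
  linear_combination (-(a'^2+b'^2+c'^2+d'^2)) * h - h'

lemma trace_qmat' (a b c d : ℝ) (h : a^2+b^2+c^2+d^2 = 1) :
    Matrix.trace (qmat a b c d) = 4 * a ^ 2 - 1 := by
  simp [qmat, Matrix.trace_fin_three]
  linear_combination -h

lemma my_sq {u v : ℝ} (h : u ^ 2 ≤ v ^ 2) (hv : 0 ≤ v) : u ≤ v := by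
  by_contra! H
  nlinarith

lemma arccos_rev {u v r : ℝ} (hu : -1 ≤ u) (hv : v ≤ 1)
    (h1 : Real.arccos u ≤ r) (h2 : r ≤ Real.arccos v) : v ≤ u := by
  by_contra! H
  have := Real.arccos_lt_arccos hu H hv
  linarith

lemma angle_aux (a a' s : ℝ) (ha : 0 ≤ a) (haa : a ≤ a') (h1 : a' < 1)
    (hm : a * a' + s ≤ a) (w w' : ℝ) (hw : 0 < w) (hw' : 0 < w')
    (hw2 : w ^ 2 = 1 - a ^ 2) (hw2' : w' ^ 2 = 1 - a' ^ 2) : s ≤ 1 / 2 * (w * w') := by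
  have : a * (1 - a') ≤ 1 / 2 * (w * w') := by
    apply my_sq ?_ (by positivity)
    have e : (1 / 2 * (w * w')) ^ 2 = 1 / 4 * ((1 - a ^ 2) * (1 - a' ^ 2)) := by
      rw [← hw2, ← hw2']; ring
    rw [e]
    have k : 4 * a ^ 2 * (1 - a') ≤ (1 - a ^ 2) * (1 + a') := by
      have k1 : a ^ 2 ≤ a' ^ 2 := by gcongr
      nlinarith [mul_nonneg (sub_nonneg.2 k1) (by linarith : 0 ≤ 4 * (1 - a') + (1 + a')),
        mul_nonneg (sub_nonneg.2 h1.le) (by nlinarith : 0 ≤ (1 + a') ^ 2 - 4 * a' ^ 2)]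
    nlinarith [mul_le_mul_of_nonneg_right k (sub_nonneg.2 h1.le)]
  linarith

theorem packing_bound_on_SO3
    (r : ℝ) (hr : 0 < r)
    (C : Finset Mat3) (hC : ∀ p ∈ C, IsSO3 p)
    (hsep : ∀ p ∈ C, ∀ q ∈ C, p ≠ q → r ≤ so3Dist p q)
    (xj : Mat3) (hxj : xj ∈ C)
    (x : Mat3) (hx : IsSO3 x) :
    ((C.erase xj).filter (fun p => so3Dist x p ≤ r)).card ≤ 27 := by
  classical
  set S := ((C.erase xj).filter (fun p => so3Dist x p ≤ r)) with hS
  have hSC : ∀ p ∈ S, p ∈ C := fun p hp => (Finset.mem_erase.1 (Finset.mem_filter.1 hp).1).2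
  have hSd : ∀ p ∈ S, so3Dist x p ≤ r := fun p hp => (Finset.mem_filter.1 hp).2
  have hxx := so3_mul_transpose hx
  have hex : ∀ p : Mat3, ∃ a b c d : ℝ, p ∈ S → 0 ≤ a ∧
      a^2+b^2+c^2+d^2 = 1 ∧ x.transpose * p = qmat a b c d := by
    intro p
    by_cases hp : p ∈ S
    · have hp' := hC p (hSC p hp)
      have : IsSO3 (x.transpose * p) := by
        constructor
        · rw [Matrix.transpose_mul, Matrix.transpose_transpose, mul_assoc, ← mul_assoc x, hxx,
            one_mul, hp'.1]
        · rw [Matrix.det_mul, Matrix.det_transpose, hx.2, hp'.2, one_mul]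
      obtain ⟨a, b, c, d, H⟩ := so3_lift _ this
      exact ⟨a, b, c, d, fun _ => H⟩
    · exact ⟨0, 0, 0, 0, fun h => absurd h hp⟩
  choose a b c d H using hex
  have hT : ∀ p ∈ S, ∀ q ∈ S, so3Dist p q =
      Real.arccos (2 * (a p * a q + b p * b q + c p * c q + d p * d q) ^ 2 - 1) := by
    intro p hp q hq
    have e : q⁻¹ * p = (x.transpose * q).transpose * (x.transpose * p) := by
      rw [so3_inv (hC q (hSC q hq)), Matrix.transpose_mul, Matrix.transpose_transpose, mul_assoc,
        ← mul_assoc x, hxx, one_mul]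
    rw [so3Dist, rotAngle, e, (H p hp).2.2, (H q hq).2.2,
      trace_qmat _ _ _ _ _ _ _ _ (H p hp).2.1 (H q hq).2.1]
    congr 1; ring
  have hT' : ∀ p ∈ S, so3Dist x p = Real.arccos (2 * a p ^ 2 - 1) := by
    intro p hp
    have e : p⁻¹ * x = (x.transpose * p).transpose := by
      rw [so3_inv (hC p (hSC p hp)), Matrix.transpose_mul, Matrix.transpose_transpose]
    rw [so3Dist, rotAngle, e, Matrix.trace_transpose, (H p hp).2.2, trace_qmat' _ _ _ _ (H p hp).2.1]
    congr 1; ring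
  have hm : ∀ p ∈ S, ∀ q ∈ S, p ≠ q → ∀ s ∈ S,
      a p * a q + b p * b q + c p * c q + d p * d q ≤ a s := by
    intro p hp q hq hpq s hs
    have h1 := hSd s hs
    have h2 := hsep p (hSC p hp) q (hSC q hq) hpq
    rw [hT' s hs] at h1
    rw [hT p hp q hq] at h2
    have hcs : (a p * a q + b p * b q + c p * c q + d p * d q) ^ 2 ≤ 1 := by
      have h3 := (H p hp).2.1
      have h4 := (H q hq).2.1
      have : (a p * a q + b p * b q + c p * c q + d p * d q) ^ 2 ≤
        (a p^2+b p^2+c p^2+d p^2) * (a q^2+b q^2+c q^2+d q^2) := by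
        nlinarith [sq_nonneg (a p * b q - b p * a q), sq_nonneg (a p * c q - c p * a q),
          sq_nonneg (a p * d q - d p * a q), sq_nonneg (b p * c q - c p * b q),
          sq_nonneg (b p * d q - d p * b q), sq_nonneg (c p * d q - d p * c q)]
      rwa [h3, h4, one_mul] at this
    have h5 := arccos_rev (by nlinarith [sq_nonneg (a s)]) (by linarith) h1 h2
    exact my_sq (by linarith) (H s hs).1
  have hlt : ∀ p ∈ S.erase x, a p < 1 := by
    intro p hp
    obtain ⟨hpx, hp⟩ := Finset.mem_erase.1 hp
    obtain ⟨h0, h1, h2⟩ := H p hp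
    by_contra! h3
    apply hpx
    have hb : b p = 0 := by apply pow_eq_zero_iff (two_ne_zero) |>.1; nlinarith [sq_nonneg (b p), sq_nonneg (c p), sq_nonneg (d p)]
    have hc : c p = 0 := by apply pow_eq_zero_iff (two_ne_zero) |>.1; nlinarith [sq_nonneg (b p), sq_nonneg (c p), sq_nonneg (d p)]
    have hd : d p = 0 := by apply pow_eq_zero_iff (two_ne_zero) |>.1; nlinarith [sq_nonneg (b p), sq_nonneg (c p), sq_nonneg (d p)]
    have ha : a p ^ 2 = 1 := by rw [hb, hc, hd] at h1; linarith
    have hq : qmat (a p) (b p) (c p) (d p) = 1 := by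
      rw [qmat, hb, hc, hd]
      ext i j
      fin_cases i <;> fin_cases j <;> simp [ha]
    rw [hq] at h2
    calc p = (x * x.transpose) * p := by rw [hxx, one_mul]
      _ = x := by rw [mul_assoc, h2, mul_one]
  let w : Mat3 → ℝ := fun p => Real.sqrt (1 - a p ^ 2)
  have hw0 : ∀ p ∈ S.erase x, 0 < 1 - a p ^ 2 := by
    intro p hp
    have := hlt p hp
    have h0 := (H p (Finset.mem_of_mem_erase hp)).1
    nlinarith
  have hw : ∀ p ∈ S.erase x, 0 < w p := fun p hp => Real.sqrt_pos.2 (hw0 p hp)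
  have hw2 : ∀ p ∈ S.erase x, w p ^ 2 = 1 - a p ^ 2 := fun p hp => Real.sq_sqrt (hw0 p hp).le
  have hcard : (S.erase x).card ≤ 25 := by
    apply code_bound (S.erase x) (fun p => b p / w p) (fun p => c p / w p) (fun p => d p / w p)
    · intro p hp
      have h0 := (H p (Finset.mem_of_mem_erase hp)).2.1
      have h1 := hw p hp
      have h2 := hw2 p hp
      field_simp
      linarith
    · intro p hp q hq hpq
      have hp' := Finset.mem_of_mem_erase hp
      have hq' := Finset.mem_of_mem_erase hq
      have h1 := hw p hp
      have h2 := hw q hq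
      have key : b p * b q + c p * c q + d p * d q ≤ 1 / 2 * (w p * w q) := by
        rcases le_total (a p) (a q) with h | h
        · exact angle_aux (a p) (a q) _ (H p hp').1 h (hlt q hq)
            (by linarith [hm p hp' q hq' hpq p hp']) _ _ h1 h2 (hw2 p hp) (hw2 q hq)
        · rw [mul_comm (w p)]
          exact angle_aux (a q) (a p) _ (H q hq').1 h (hlt p hp)
            (by linarith [hm p hp' q hq' hpq q hq']) _ _ h2 h1 (hw2 q hq) (hw2 p hp)
      have e : b p / w p * (b q / w q) + c p / w p * (c q / w q) + d p / w p * (d q / w q)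
          = (b p * b q + c p * c q + d p * d q) / (w p * w q) := by
        field_simp
      rw [e, div_le_iff₀ (by positivity)]
      exact key
  have := Finset.pred_card_le_card_erase (s := S) (a := x)
  omega
end
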